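/- Let A be a Noetherian domain, let R = A[[x_1, ..., x_n]] be a power series ring over A, and let I = (x_1, ..., x_n) ⊆ R. Let M be a finitely generated R-module. Then there exists a nonzero g ∈ A such that for every commutative A-algebra L whose structure map A → L factors through A_g, and for every i ≥ 0, the natural base-change map H^i_I(M) ⊗_A L → H^i_{I·(R ⊗_A L)}(M ⊗_A L) is an isomorphism. -/

import Mathlib

open scoped TensorProduct

set_option synthInstance.maxHeartbeats 1000000
set_option maxHeartbeats 1000000

attribute [local instance] Algebra.TensorProduct.rightAlgebra

/-- The two scalar actions on `R ⊗[A] L` (of `R` on the left and of `L` on the right)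
commute. -/
noncomputable instance tensorSMulCommClass (A R L : Type) [CommRing A] [CommRing R] [CommRing L]
    [Algebra A R] [Algebra A L] : SMulCommClass R L (R ⊗[A] L) :=
  ⟨fun r l x => by
    rw [Algebra.smul_def, Algebra.smul_def, Algebra.smul_def, Algebra.smul_def, mul_left_comm]⟩

section PartP1a
namespace LCB
open CategoryTheory Limits

section LD
universe v v' u u'
variable {C : Type u} [Category.{v} C] [Abelian C] [EnoughProjectives C]
  {D : Type u'} [Category.{v'} D] [Abelian D]
  {F F₁ F₂ F₃ : C ⥤ D} [F.Additive] [F₁.Additive] [F₂.Additive] [F₃.Additive] (α : F₁ ⟶ F₂) (β : F₂ ⟶ F₃)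
  (w : α ≫ β = 0)

/-- short complex of chain complexes -/
noncomputable abbrev scP (P : ChainComplex C ℕ) : ShortComplex (ChainComplex D ℕ) :=
  ShortComplex.mk ((NatTrans.mapHomologicalComplex α _).app P)
    ((NatTrans.mapHomologicalComplex β _).app P) (by
      ext i
      exact congrArg (fun t => NatTrans.app t (P.X i)) w)

lemma scP_shortExact (P : ChainComplex C ℕ) (hP : ∀ i, Projective (P.X i))
    (hs : ∀ (X : C) [Projective X], (ShortComplex.mk (α.app X) (β.app X)
      (congrArg (fun t => NatTrans.app t X) w)).ShortExact) : (scP α β w P).ShortExact := by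
  apply HomologicalComplex.shortExact_of_degreewise_shortExact
  intro i
  have := hP i
  exact hs (P.X i)

variable (hs : ∀ (X : C) [Projective X], (ShortComplex.mk (α.app X) (β.app X)
      (congrArg (fun t => NatTrans.app t X) w)).ShortExact)

/-- map of short complexes -/
noncomputable abbrev scPmap {P Q : ChainComplex C ℕ} (φ : P ⟶ Q) : scP α β w P ⟶ scP α β w Q where
  τ₁ := (F₁.mapHomologicalComplex _).map φ
  τ₂ := (F₂.mapHomologicalComplex _).map φ
  τ₃ := (F₃.mapHomologicalComplex _).map φ
  comm₁₂ := NatTrans.mapHomologicalComplex_naturality _ _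
  comm₂₃ := NatTrans.mapHomologicalComplex_naturality _ _

/-- computing left derived functors -/
noncomputable def ldI (F : C ⥤ D) [F.Additive] (X : C) (n : ℕ) : (F.leftDerived n).obj X ≅
    ((F.mapHomologicalComplex _).obj (projectiveResolution X).complex).homology n :=
  (projectiveResolution X).isoLeftDerivedObj F n

lemma ldI_nat {X Y : C} (f : X ⟶ Y) (n : ℕ) : (F.leftDerived n).map f ≫ (ldI F Y n).hom =
    (ldI F X n).hom ≫ HomologicalComplex.homologyMap ((F.mapHomologicalComplex _).map
      (ProjectiveResolution.lift f (projectiveResolution X) (projectiveResolution Y))) n :=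
  ProjectiveResolution.isoLeftDerivedObj_hom_naturality f
      (projectiveResolution X) (projectiveResolution Y)
      (ProjectiveResolution.lift f (projectiveResolution X) (projectiveResolution Y))
      (by
        have := ProjectiveResolution.lift_commutes_zero f (projectiveResolution X)
          (projectiveResolution Y)
        exact this) F n

lemma ldI_nat' {X Y : C} (f : X ⟶ Y) (n : ℕ) : (ldI F X n).inv ≫ (F.leftDerived n).map f  =
    HomologicalComplex.homologyMap ((F.mapHomologicalComplex _).map
      (ProjectiveResolution.lift f (projectiveResolution X) (projectiveResolution Y))) n ≫
      (ldI F Y n).inv := by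
  rw [Iso.inv_comp_eq, ← Category.assoc, ← ldI_nat]; simp

lemma ldI_app (X : C) (n : ℕ) : (NatTrans.leftDerived α n).app X = (ldI F₁ X n).hom ≫
    HomologicalComplex.homologyMap ((NatTrans.mapHomologicalComplex α _).app
      (projectiveResolution X).complex) n ≫ (ldI F₂ X n).inv :=
  ProjectiveResolution.leftDerived_app_eq α (projectiveResolution X) n

/-- connecting morphism -/
noncomputable def ldδ (n : ℕ) : F₃.leftDerived (n+1) ⟶ F₁.leftDerived n where
  app X := (ldI F₃ X (n+1)).hom ≫
    (scP_shortExact α β w (projectiveResolution X).complex (fun i => inferInstance) hs).δ (n+1) n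
      (by simp) ≫ (ldI F₁ X n).inv
  naturality X Y f := by
    have := HomologicalComplex.HomologySequence.δ_naturality
      (scPmap α β w (ProjectiveResolution.lift f (projectiveResolution X) (projectiveResolution Y)))
      (scP_shortExact α β w (projectiveResolution X).complex (fun i => inferInstance) hs)
      (scP_shortExact α β w (projectiveResolution Y).complex (fun i => inferInstance) hs)
      (n+1) n (by simp)
    rw [Category.assoc, Category.assoc, ldI_nat', ← Category.assoc, ldI_nat, Category.assoc]
    congr 1
    rw [← Category.assoc, ← Category.assoc]
    congr 1
    exact this.symm

lemma ldδ_exact₃ (n : ℕ) (X : C) : ∃ h, (ShortComplex.mk ((NatTrans.leftDerived β (n+1)).app X)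
    ((ldδ α β w hs n).app X) h).Exact := by
  have hS := scP_shortExact α β w (projectiveResolution X).complex (fun i => inferInstance) hs
  have e := hS.homology_exact₃ (n+1) n (by simp)
  have hz : (NatTrans.leftDerived β (n+1)).app X ≫ (ldδ α β w hs n).app X = 0 := by
    rw [ldI_app]; dsimp [ldδ]
    simp only [Category.assoc, Iso.inv_hom_id_assoc]
    have := hS.comp_δ (n+1) n (by simp)
    rw [reassoc_of% this]
    simp
  refine ⟨hz, ?_⟩
  refine (ShortComplex.exact_iff_of_iso (ShortComplex.isoMk (ldI F₂ X (n+1))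
    (ldI F₃ X (n+1)) (ldI F₁ X n) ?_ ?_)).2 e
  · dsimp; rw [ldI_app]; simp
  · dsimp [ldδ]; simp

lemma ldδ_exact₁ (n : ℕ) (X : C) : ∃ h, (ShortComplex.mk ((ldδ α β w hs n).app X)
    ((NatTrans.leftDerived α n).app X) h).Exact := by
  have hS := scP_shortExact α β w (projectiveResolution X).complex (fun i => inferInstance) hs
  have e := hS.homology_exact₁ (n+1) n (by simp)
  have hz : (ldδ α β w hs n).app X ≫ (NatTrans.leftDerived α n).app X = 0 := by
    rw [ldI_app]; dsimp [ldδ]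
    simp only [Category.assoc, Iso.inv_hom_id_assoc]
    have := hS.δ_comp (n+1) n (by simp)
    rw [reassoc_of% this]
    simp
  refine ⟨hz, ?_⟩
  refine (ShortComplex.exact_iff_of_iso (ShortComplex.isoMk (ldI F₃ X (n+1))
    (ldI F₁ X n) (ldI F₂ X n) ?_ ?_)).2 e
  · dsimp [ldδ]; simp
  · dsimp; rw [ldI_app]; simp

lemma ldI_zero (X : C) : F.fromLeftDerivedZero.app X = (ldI F X 0).hom ≫
    (ChainComplex.isoHomologyι₀ _).hom ≫ (projectiveResolution X).fromLeftDerivedZero' F :=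
  (projectiveResolution X).fromLeftDerivedZero_eq F

lemma fromLD_nat (X : C) : (NatTrans.leftDerived α 0).app X ≫ F₂.fromLeftDerivedZero.app X =
    F₁.fromLeftDerivedZero.app X ≫ α.app X := by
  rw [ldI_app, ldI_zero, ldI_zero]
  simp only [Category.assoc, Iso.inv_hom_id_assoc]
  congr 1
  have : (projectiveResolution X).fromLeftDerivedZero' F₁ ≫ α.app X = HomologicalComplex.opcyclesMap
      ((NatTrans.mapHomologicalComplex α _).app (projectiveResolution X).complex) 0 ≫
        (projectiveResolution X).fromLeftDerivedZero' F₂ := by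
    simp only [← cancel_epi (HomologicalComplex.pOpcycles _ _)]
    simp
    exact α.naturality _
  rw [this]
  dsimp [ChainComplex.isoHomologyι₀]
  simp
end LD
end LCB
end PartP1a

section PartP1b
namespace LCB
open CategoryTheory Limits

section HS
variable {S : Type} [CommRing S]

/-- Hom functor into the opposite -/
noncomputable abbrev FY (Y : ModuleCat.{0} S) : ModuleCat.{0} S ⥤ (ModuleCat.{0} S)ᵒᵖ :=
  ((linearYoneda S (ModuleCat.{0} S)).obj Y).rightOp

instance (Y : ModuleCat.{0} S) : (FY Y).Additive := inferInstance

/-- functoriality -/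
noncomputable abbrev FYm {Y Z : ModuleCat.{0} S} (f : Y ⟶ Z) : FY Z ⟶ FY Y :=
  NatTrans.rightOp ((linearYoneda S (ModuleCat.{0} S)).map f)

variable (T : ShortComplex (ModuleCat.{0} S)) (hT : T.ShortExact)

lemma FYw : FYm T.g ≫ FYm T.f = 0 := by
  ext X
  apply Quiver.Hom.unop_inj
  ext (f : X ⟶ T.X₁)
  change (f ≫ T.f) ≫ T.g = 0
  simp

include hT in
lemma FYs (X : ModuleCat.{0} S) [Projective X] : (ShortComplex.mk ((FYm T.g).app X)
    ((FYm T.f).app X) (congrArg (fun t => NatTrans.app t X) (FYw T))).ShortExact := by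
  have := hT.mono_f
  have := hT.epi_g
  have h : (ShortComplex.mk (((linearYoneda S (ModuleCat.{0} S)).map T.f).app (Opposite.op X))
    (((linearYoneda S (ModuleCat.{0} S)).map T.g).app (Opposite.op X)) (by
      ext (f : X ⟶ T.X₁)
      change (f ≫ T.f) ≫ T.g = 0
      simp)).ShortExact := by
    refine @ShortComplex.ShortExact.mk _ _ _ _ ?_ ?_ ?_
    · rw [ShortComplex.moduleCat_exact_iff]
      rintro (f : X ⟶ T.X₂) (hf : f ≫ T.g = 0)
      exact ⟨hT.exact.lift f hf, hT.exact.lift_f f hf⟩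
    · rw [ModuleCat.mono_iff_injective]
      rintro (f : X ⟶ T.X₁) (g : X ⟶ T.X₁) (h : f ≫ T.f = g ≫ T.f)
      exact (cancel_mono _).1 h
    · rw [ModuleCat.epi_iff_surjective]
      rintro (f : X ⟶ T.X₃)
      exact ⟨Projective.factorThru f T.g, Projective.factorThru_comp f T.g⟩
  exact h.op

lemma isZero_ld (Q : ModuleCat.{0} S) [Injective Q] (X : ModuleCat.{0} S) (n : ℕ) :
    IsZero (((FY Q).leftDerived (n+1)).obj X) := by
  refine IsZero.of_iso ?_ (ldI (FY Q) X (n+1))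
  rw [← HomologicalComplex.exactAt_iff_isZero_homology]
  rw [HomologicalComplex.exactAt_iff' _ (n+2) (n+1) n (by simp) (by simp)]
  have hP := (projectiveResolution X).complex_exactAt_succ n
  rw [HomologicalComplex.exactAt_iff' _ (n+2) (n+1) n (by simp) (by simp)] at hP
  rw [← ShortComplex.exact_unop_iff, ShortComplex.moduleCat_exact_iff]
  rintro (f : (projectiveResolution X).complex.X (n+1) ⟶ Q) 
    (hf : (projectiveResolution X).complex.d (n+2) (n+1) ≫ f = 0)
  exact ⟨hP.descToInjective f hf, hP.comp_descToInjective f hf⟩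


instance (Y : ModuleCat.{0} S) : PreservesFiniteColimits (FY Y) := by
  have h1 : PreservesFiniteLimits ((linearYoneda S (ModuleCat.{0} S)).obj Y ⋙ forget _) := by
    change PreservesFiniteLimits (yoneda.obj Y)
    infer_instance
  have : PreservesFiniteLimits ((linearYoneda S (ModuleCat.{0} S)).obj Y) :=
    preservesFiniteLimits_of_reflects_of_preserves _ (forget (ModuleCat.{0} S))
  exact preservesFiniteColimits_rightOp _

/-- Ext functor in the first variable -/
noncomputable abbrev EY (Y : ModuleCat.{0} S) (n : ℕ) : (ModuleCat.{0} S)ᵒᵖ ⥤ ModuleCat.{0} S :=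
  ((FY Y).leftDerived n).leftOp

/-- the diagram of quotients -/
noncomputable abbrev dgr (J : Ideal S) : ℕᵒᵖᵒᵖ ⥤ (ModuleCat.{0} S)ᵒᵖ :=
  (localCohomology.ringModIdeals (localCohomology.idealPowersDiagram J)).op

/-- local cohomology as a colimit of modules -/
noncomputable def HIso (J : Ideal S) (n : ℕ) (Y : ModuleCat.{0} S) :
    (localCohomology J n).obj Y ≅ colimit (dgr J ⋙ EY Y n) :=
  colimitObjIsoColimitCompEvaluation
    (localCohomology.diagram (localCohomology.idealPowersDiagram J) n) Y

/-- connecting -/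
noncomputable abbrev eδ (n : ℕ) : EY T.X₃ n ⟶ EY T.X₁ (n+1) :=
  NatTrans.leftOp (ldδ (FYm T.g) (FYm T.f) (FYw T) (fun X => FYs T hT X) n)

/-- map -/
noncomputable abbrev eM {Y Z : ModuleCat.{0} S} (f : Y ⟶ Z) (n : ℕ) : EY Y n ⟶ EY Z n :=
  NatTrans.leftOp (NatTrans.leftDerived (FYm f) n)

lemma eδ_exact₁ (n : ℕ) (X : (ModuleCat.{0} S)ᵒᵖ) : ∃ h, (ShortComplex.mk ((eδ T hT n).app X)
    ((eM T.f (n+1)).app X) h).Exact := by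
  obtain ⟨h, h'⟩ := ldδ_exact₃ (FYm T.g) (FYm T.f) (FYw T) (fun X => FYs T hT X) n X.unop
  exact ⟨_, h'.unop⟩

lemma eδ_exact₃ (n : ℕ) (X : (ModuleCat.{0} S)ᵒᵖ) : ∃ h, (ShortComplex.mk ((eM T.g n).app X)
    ((eδ T hT n).app X) h).Exact := by
  obtain ⟨h, h'⟩ := ldδ_exact₁ (FYm T.g) (FYm T.f) (FYw T) (fun X => FYs T hT X) n X.unop
  exact ⟨_, h'.unop⟩

lemma eδ_iso (n : ℕ) [Injective T.X₂] : IsIso (eδ T hT (n+1)) := by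
  rw [NatTrans.isIso_iff_isIso_app]
  intro X
  obtain ⟨h, e⟩ := eδ_exact₁ T hT (n+1) X
  obtain ⟨h', e'⟩ := eδ_exact₃ T hT (n+1) X
  have : Mono ((eδ T hT (n+1)).app X) := e'.mono_g ((isZero_ld T.X₂ X.unop n).unop.eq_of_src _ _)
  have : Epi ((eδ T hT (n+1)).app X) := e.epi_f ((isZero_ld T.X₂ X.unop (n+1)).unop.eq_of_tgt _ _)
  apply isIso_of_mono_of_epi

lemma eδ_epi (n : ℕ) [Injective T.X₂] : ∀ X, Epi ((eδ T hT n).app X) := by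
  intro X
  obtain ⟨h, e⟩ := eδ_exact₁ T hT n X
  exact e.epi_f ((isZero_ld T.X₂ X.unop n).unop.eq_of_tgt _ _)

include hT in
lemma H_D2 (J : Ideal S) (n : ℕ) [Injective T.X₂] :
    Nonempty ((localCohomology J (n+2)).obj T.X₁ ≅ (localCohomology J (n+1)).obj T.X₃) := by
  have := eδ_iso T hT n
  exact ⟨HIso J _ _ ≪≫ (HasColimit.isoOfNatIso (Functor.isoWhiskerLeft (dgr J)
    (asIso (eδ T hT (n+1))))).symm ≪≫ (HIso J _ _).symm⟩

/-- degree zero -/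
noncomputable abbrev zN (Y : ModuleCat.{0} S) : (linearYoneda S (ModuleCat.{0} S)).obj Y ⟶ EY Y 0 :=
  NatTrans.leftOp (F := (FY Y).leftDerived 0) (G := FY Y) (FY Y).fromLeftDerivedZero

instance (Y : ModuleCat.{0} S) : IsIso (zN Y) := by
  rw [NatTrans.isIso_iff_isIso_app]
  intro X
  have : IsIso ((FY Y).fromLeftDerivedZero.app X.unop) := inferInstance
  change IsIso ((FY Y).fromLeftDerivedZero.app X.unop).unop
  infer_instance

lemma zN_nat {Y Z : ModuleCat.{0} S} (f : Y ⟶ Z) : (linearYoneda S (ModuleCat.{0} S)).map f ≫ zN Z =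
    zN Y ≫ eM f 0 := by
  ext1
  ext1 X
  apply Quiver.Hom.op_inj
  exact (fromLD_nat (FYm f) X.unop).symm

/-- torsion submodule -/
def Gam (J : Ideal S) (Y : Type) [AddCommGroup Y] [Module S Y] : Submodule S Y where
  carrier := {y | ∃ k : ℕ, ∀ r ∈ J ^ k, r • y = 0}
  zero_mem' := ⟨0, by simp⟩
  add_mem' := by
    rintro a b ⟨k, hk⟩ ⟨l, hl⟩
    refine ⟨k + l, fun r hr => ?_⟩
    rw [smul_add, hk r (Ideal.pow_le_pow_right (by omega) hr),
      hl r (Ideal.pow_le_pow_right (by omega) hr), add_zero]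
  smul_mem' := by
    rintro c a ⟨k, hk⟩
    exact ⟨k, fun r hr => by rw [smul_comm, hk r hr, smul_zero]⟩

/-- functoriality of torsion -/
def GamMap (J : Ideal S) {Y Z : Type} [AddCommGroup Y] [Module S Y] [AddCommGroup Z] [Module S Z]
    (f : Y →ₗ[S] Z) : Gam J Y →ₗ[S] Gam J Z :=
  f.restrict (by
    rintro x ⟨k, hk⟩
    exact ⟨k, fun r hr => by rw [← map_smul, hk r hr, map_zero]⟩)

/-- colimit of Homs -/
noncomputable abbrev KH (J : Ideal S) (Y : ModuleCat.{0} S) : ModuleCat.{0} S :=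
  colimit (dgr J ⋙ (linearYoneda S (ModuleCat.{0} S)).obj Y)

/-- evaluation at one -/
noncomputable def evc (J : Ideal S) (Y : ModuleCat.{0} S) :
    Cocone (dgr J ⋙ (linearYoneda S (ModuleCat.{0} S)).obj Y) where
  pt := Y
  ι := 
  { app := fun k => ModuleCat.ofHom
      { toFun := fun (f : ModuleCat.of S (S ⧸ J ^ k.unop.unop) ⟶ Y) => f.hom (Ideal.Quotient.mk _ 1)
        map_add' := fun f g => rfl
        map_smul' := fun r f => rfl }
    naturality := fun k l w => by
      ext f
      rfl }

lemma evc_desc_ι (J : Ideal S) (Y : ModuleCat.{0} S) (k : ℕ)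
    (f : ModuleCat.of S (S ⧸ J ^ k) ⟶ Y) :
    colimit.desc _ (evc J Y) (colimit.ι (dgr J ⋙ (linearYoneda S (ModuleCat.{0} S)).obj Y)
      (Opposite.op (Opposite.op k)) f) = f.hom (Ideal.Quotient.mk _ 1) := by
  have := colimit.ι_desc (evc J Y) (Opposite.op (Opposite.op k))
  exact congrArg (fun t => t.hom f) this

lemma hom_ext_one {J : Ideal S} {Y : ModuleCat.{0} S}  
    (f : ModuleCat.of S (S ⧸ J) ⟶ Y) (h : f.hom (Ideal.Quotient.mk _ 1) = 0) : f = 0 := by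
  refine ModuleCat.hom_ext (LinearMap.ext fun x => ?_)
  obtain ⟨x, rfl⟩ := Ideal.Quotient.mk_surjective x
  change f.hom (Ideal.Quotient.mk _ x) = 0
  have : Ideal.Quotient.mk J x = x • Ideal.Quotient.mk J 1 := by
    rw [Algebra.smul_def]; simp
  rw [this, map_smul, h, smul_zero]

lemma hom_smul_one {J : Ideal S} {Y : ModuleCat.{0} S}
    (f : ModuleCat.of S (S ⧸ J) ⟶ Y) (r : S) (hr : r ∈ J) : r • f.hom (Ideal.Quotient.mk _ 1) = 0 := by
  have : r • Ideal.Quotient.mk J 1 = 0 := by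
    rw [Algebra.smul_def]; simpa [Ideal.Quotient.eq_zero_iff_mem] using hr
  rw [← map_smul, this, map_zero]

/-- evaluation at one, linear map -/
noncomputable def kev (J : Ideal S) (Y : ModuleCat.{0} S) : KH J Y →ₗ[S] Y :=
  (colimit.desc _ (evc J Y)).hom

lemma kev_ι (J : Ideal S) (Y : ModuleCat.{0} S) (k : ℕ)
    (f : ModuleCat.of S (S ⧸ J ^ k) ⟶ Y) :
    kev J Y (colimit.ι (dgr J ⋙ (linearYoneda S (ModuleCat.{0} S)).obj Y)
      (Opposite.op (Opposite.op k)) f) = f.hom (Ideal.Quotient.mk _ 1) :=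
  evc_desc_ι J Y k f

lemma kev_inj (J : Ideal S) (Y : ModuleCat.{0} S) (x : KH J Y) (hx : kev J Y x = 0) : x = 0 := by
  obtain ⟨k, f, rfl⟩ := Concrete.colimit_exists_rep _ x
  have h1 : f.hom (Ideal.Quotient.mk _ 1) = 0 := (kev_ι J Y k.unop.unop f).symm.trans hx
  have : f = 0 := hom_ext_one f h1
  rw [this, map_zero]

lemma kev_mem (J : Ideal S) (Y : ModuleCat.{0} S) (x : KH J Y) : kev J Y x ∈ Gam J Y := by
  obtain ⟨k, f, rfl⟩ := Concrete.colimit_exists_rep _ x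
  refine ⟨k.unop.unop, fun r hr => ?_⟩
  refine (congrArg (r • ·) (kev_ι J Y k.unop.unop f)).trans ?_
  exact hom_smul_one f r hr

lemma kev_surj (J : Ideal S) (Y : ModuleCat.{0} S) (y : Y) (hy : y ∈ Gam J Y) :
    ∃ x, kev J Y x = y := by
  obtain ⟨k, hk⟩ := hy
  let f : ModuleCat.of S (S ⧸ J ^ k) ⟶ Y :=
    ModuleCat.ofHom (Submodule.liftQ _ (LinearMap.toSpanSingleton S Y y)
        (fun r hr => LinearMap.mem_ker.2 (hk r hr)))
  refine ⟨_, (kev_ι J Y k f).trans ?_⟩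
  exact one_smul _ y

/-- The equivalence of degree zero with torsion -/
noncomputable def KHeq (J : Ideal S) (Y : ModuleCat.{0} S) : KH J Y ≃ₗ[S] Gam J Y :=
  LinearEquiv.ofBijective ((kev J Y).codRestrict (Gam J Y) (kev_mem J Y)) ⟨
    (injective_iff_map_eq_zero _).2 (fun x hx => kev_inj J Y x (congrArg Subtype.val hx)),
    fun y => by
      obtain ⟨x, hx⟩ := kev_surj J Y y.1 y.2
      exact ⟨x, Subtype.ext hx⟩⟩

lemma H_D0 (J : Ideal S) (Y : ModuleCat.{0} S) :
    Nonempty ((localCohomology J 0).obj Y ≃ₗ[S] Gam J Y) :=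
  ⟨(HIso J 0 Y ≪≫ (HasColimit.isoOfNatIso (Functor.isoWhiskerLeft (dgr J)
    (asIso (zN Y)))).symm).toLinearEquiv ≪≫ₗ KHeq J Y⟩

lemma KHeq_nat (J : Ideal S) {Y Z : ModuleCat.{0} S} (f : Y ⟶ Z) (x : KH J Y) :
    KHeq J Z (colimMap (Functor.whiskerLeft (dgr J) ((linearYoneda S (ModuleCat.{0} S)).map f)) x) =
      GamMap J f.hom (KHeq J Y x) := by
  obtain ⟨k, g, rfl⟩ := Concrete.colimit_exists_rep _ x
  have := ι_colimMap (Functor.whiskerLeft (dgr J) ((linearYoneda S (ModuleCat.{0} S)).map f)) k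
  have h2 : colimMap (Functor.whiskerLeft (dgr J) ((linearYoneda S (ModuleCat.{0} S)).map f))
    (colimit.ι (dgr J ⋙ (linearYoneda S (ModuleCat.{0} S)).obj Y) k g) = _ := congrArg (fun t => t.hom g) this
  rw [h2]
  apply Subtype.ext
  have e1 := evc_desc_ι J Y k.unop.unop g
  have e2 := evc_desc_ι J Z k.unop.unop (g ≫ f)
  refine e2.trans ?_
  change f.hom _ = f.hom _
  exact congrArg _ e1.symm

lemma colim_right_exact {F G H : ℕᵒᵖᵒᵖ ⥤ ModuleCat.{0} S} (a : F ⟶ G) (b : G ⟶ H)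
    (hb : ∀ k, Epi (b.app k)) (hab : ∀ k, ∃ h, (ShortComplex.mk (a.app k) (b.app k) h).Exact) :
    Function.Surjective (colimMap b).hom ∧
      LinearMap.ker (colimMap b).hom = LinearMap.range (colimMap a).hom := by
  have hA : ∀ k (x : F.obj k), colimMap a (colimit.ι F k x) = colimit.ι G k (a.app k x) :=
    fun k x => congrArg (fun t => t.hom x) (ι_colimMap a k)
  have hB : ∀ k (x : G.obj k), colimMap b (colimit.ι G k x) = colimit.ι H k (b.app k x) :=
    fun k x => congrArg (fun t => t.hom x) (ι_colimMap b k)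
  constructor
  · intro y
    obtain ⟨k, y, rfl⟩ := Concrete.colimit_exists_rep _ y
    obtain ⟨x, rfl⟩ := (ModuleCat.epi_iff_surjective _).1 (hb k) y
    exact ⟨colimit.ι G k x, hB k x⟩
  · apply le_antisymm
    · intro y (hy : colimMap b y = 0)
      obtain ⟨k, y, rfl⟩ := Concrete.colimit_exists_rep _ y
      rw [hB] at hy
      have : colimit.ι H k (b.app k y) = colimit.ι H k 0 := by rw [hy, map_zero]
      obtain ⟨l, f, g, h⟩ := Concrete.colimit_exists_of_rep_eq _ _ _ this
      have h1 : b.app l (G.map f y) = 0 := by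
        have := congrArg (fun t => t.hom y) (b.naturality f)
        refine this.trans (h.trans ?_)
        exact map_zero _
      obtain ⟨_, e⟩ := hab l
      obtain ⟨x, hx⟩ := (ShortComplex.moduleCat_exact_iff _).1 e _ h1
      refine ⟨colimit.ι F l x, ?_⟩
      change colimMap a _ = _
      rw [hA]
      refine (congrArg _ hx).trans ?_
      exact congrArg (fun t => t.hom y) (colimit.w G f)
    · rintro _ ⟨x, rfl⟩
      obtain ⟨k, x, rfl⟩ := Concrete.colimit_exists_rep _ x
      change colimMap b (colimMap a _) = 0
      rw [hA, hB]
      obtain ⟨h, e⟩ := hab k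
      have : b.app k (a.app k x) = 0 := congrArg (fun t => t.hom x) h
      rw [this, map_zero]

include hT in
lemma H_D1 (J : Ideal S) [Injective T.X₂] :
    Nonempty ((localCohomology J 1).obj T.X₁ ≃ₗ[S]
      (Gam J T.X₃ ⧸ LinearMap.range (GamMap J T.g.hom))) := by
  let a := Functor.whiskerLeft (dgr J) ((linearYoneda S (ModuleCat.{0} S)).map T.g)
  let b := Functor.whiskerLeft (dgr J) (zN T.X₃ ≫ eδ T hT 0)
  obtain ⟨h1, h2⟩ := colim_right_exact a b (by
      intro k
      have := eδ_epi T hT 0 ((dgr J).obj k)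
      change Epi ((zN T.X₃).app _ ≫ (eδ T hT 0).app _)
      apply epi_comp) (by
      intro k
      obtain ⟨h, e⟩ := eδ_exact₃ T hT 0 ((dgr J).obj k)
      have hn := congrArg (fun t => NatTrans.app t ((dgr J).obj k)) (zN_nat T.g)
      have hz : a.app k ≫ b.app k = 0 := by
        change ((linearYoneda S (ModuleCat.{0} S)).map T.g).app _ ≫ (zN T.X₃).app _ ≫
          (eδ T hT 0).app _ = 0
        rw [← Category.assoc]
        refine (congrArg (· ≫ _) hn).trans ?_
        refine (Category.assoc _ _ _).trans ?_
        exact (congrArg (_ ≫ ·) h).trans comp_zero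
      refine ⟨hz, ?_⟩
      have ii : ShortComplex.mk (a.app k) (b.app k) hz ≅ ShortComplex.mk
          ((eM T.g 0).app ((dgr J).obj k)) ((eδ T hT 0).app ((dgr J).obj k)) h :=
        ShortComplex.isoMk
          (asIso ((zN T.X₂).app ((dgr J).obj k))) (asIso ((zN T.X₃).app ((dgr J).obj k)))
          (Iso.refl _) hn.symm (Category.comp_id _).symm
      exact (ShortComplex.exact_iff_of_iso ii).2 e)
  let E1 : _ ≃ₗ[S] _ := (LinearMap.quotKerEquivOfSurjective _ h1)
  have E2 : (KH J T.X₃ ⧸ LinearMap.ker (colimMap b).hom) ≃ₗ[S]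
      (Gam J T.X₃ ⧸ LinearMap.range (GamMap J T.g.hom)) :=
    Submodule.Quotient.equiv _ _ (KHeq J T.X₃) (by
      rw [h2]
      ext y
      constructor
      · rintro ⟨_, ⟨x, rfl⟩, rfl⟩
        exact ⟨KHeq J T.X₂ x, (KHeq_nat J T.g x).symm⟩
      · rintro ⟨x, rfl⟩
        refine ⟨_, ⟨(KHeq J T.X₂).symm x, rfl⟩, ?_⟩
        refine (KHeq_nat J T.g _).trans ?_
        rw [LinearEquiv.apply_symm_apply])
  exact ⟨(HIso J 1 T.X₁).toLinearEquiv ≪≫ₗ E1.symm ≪≫ₗ E2⟩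

end HS
end LCB
end PartP1b

section PartP2a
namespace LCB
open CategoryTheory Limits

section DL
variable {S : Type} [CommRing S] {G G' G'' : ℕ → Type}
  [∀ k, AddCommGroup (G k)] [∀ k, Module S (G k)]
  [∀ k, AddCommGroup (G' k)] [∀ k, Module S (G' k)]
  [∀ k, AddCommGroup (G'' k)] [∀ k, Module S (G'' k)]
  {f : ∀ i j, i ≤ j → G i →ₗ[S] G j} {f' : ∀ i j, i ≤ j → G' i →ₗ[S] G' j}
  {f'' : ∀ i j, i ≤ j → G'' i →ₗ[S] G'' j}

lemma dl_exact [DirectedSystem G'' fun i j h => f'' i j h]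
    (g : ∀ i, G i →ₗ[S] G' i) (hg : ∀ i j h, g j ∘ₗ f i j h = f' i j h ∘ₗ g i)
    (g' : ∀ i, G' i →ₗ[S] G'' i) (hg' : ∀ i j h, g' j ∘ₗ f' i j h = f'' i j h ∘ₗ g' i)
    (h1 : ∀ k x, g' k (g k x) = 0) (h2 : ∀ k x, g' k x = 0 → ∃ y, g k y = x) :
    Function.Exact (Module.DirectLimit.map g hg) (Module.DirectLimit.map g' hg') := by
  intro y
  constructor
  · intro hy
    obtain ⟨k, y, rfl⟩ := Module.DirectLimit.exists_of y
    rw [Module.DirectLimit.map_apply_of] at hy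
    obtain ⟨l, hl, e⟩ := Module.DirectLimit.of.zero_exact hy
    have e2 := LinearMap.congr_fun (hg' k l hl) y
    obtain ⟨x, hx⟩ := h2 l (f' k l hl y) (e2.trans e)
    refine ⟨Module.DirectLimit.of _ _ _ _ l x, ?_⟩
    rw [Module.DirectLimit.map_apply_of, hx, Module.DirectLimit.of_f]
  · rintro ⟨x, rfl⟩
    obtain ⟨k, x, rfl⟩ := Module.DirectLimit.exists_of x
    rw [Module.DirectLimit.map_apply_of, Module.DirectLimit.map_apply_of, h1, map_zero]

end DL

section hS
variable {S : Type} [CommRing S]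

/-- cyclic quotient -/
abbrev Sq (I : Ideal S) : ModuleCat.{0} S := ModuleCat.of S (S ⧸ I)

/-- quotient maps -/
abbrev qf {I J : Ideal S} (h : I ≤ J) : Sq I ⟶ Sq J := ModuleCat.ofHom (Submodule.factor h)

lemma qf_refl {I : Ideal S} (h : I ≤ I) : qf h = 𝟙 _ := by
  ext
  rfl

lemma qf_comp {I J K : Ideal S} (h : I ≤ J) (h' : J ≤ K) : qf h ≫ qf h' = qf (h.trans h') := by
  ext
  rfl

/-- descending filtrations -/
structure Fil (S : Type) [CommRing S] where
  /-- the ideals -/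
  a : ℕ → Ideal S
  anti : Antitone a

open Abelian

variable (a : Fil S)

/-- transition -/
noncomputable def htr (N : ModuleCat.{0} S) (i : ℕ) (k l : ℕ) (h : k ≤ l) :
    Ext (Sq (a.a k)) N i →ₗ[S] Ext (Sq (a.a l)) N i :=
  (Ext.mk₀ (qf (a.anti h))).precompOfLinear S N (zero_add i)

lemma htr_apply (N : ModuleCat.{0} S) (i : ℕ) (k l : ℕ) (h : k ≤ l) (x : Ext (Sq (a.a k)) N i) :
  htr a N i k l h x = (Ext.mk₀ (qf (a.anti h))).comp x (zero_add i) := rfl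

instance (N : ModuleCat.{0} S) (i : ℕ) : DirectedSystem (fun k => Ext (Sq (a.a k)) N i)
    (fun k l h => htr a N i k l h) where
  map_self := by
    intro k x
    rw [htr_apply, qf_refl, Ext.mk₀_id_comp]
  map_map := by
    intro j k l h h' x
    rw [htr_apply, htr_apply, htr_apply, Ext.mk₀_comp_mk₀_assoc, qf_comp]

/-- the cohomology -/
abbrev hh (i : ℕ) (N : ModuleCat.{0} S) : Type :=
  Module.DirectLimit (fun k => Ext (Sq (a.a k)) N i) (htr a N i)

/-- functoriality -/
noncomputable def hmap (i : ℕ) {N N' : ModuleCat.{0} S} (f : N ⟶ N') : hh a i N →ₗ[S] hh a i N' :=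
  Module.DirectLimit.map (fun k => (Ext.mk₀ f).postcompOfLinear S _ (add_zero i)) (by
    intro k l h
    ext x
    exact Ext.comp_assoc _ _ _ (by omega) (by omega) (by omega))

/-- connecting map -/
noncomputable def hdel (i : ℕ) {T : ShortComplex (ModuleCat.{0} S)} (hT : T.ShortExact) :
    hh a i T.X₃ →ₗ[S] hh a (i+1) T.X₁ :=
  Module.DirectLimit.map (fun k => hT.extClass.postcompOfLinear S _ rfl) (by
    intro k l h
    ext x
    exact Ext.comp_assoc _ _ _ (by omega) (by omega) (by omega))

lemma h_exact₁ (i : ℕ) {T : ShortComplex (ModuleCat.{0} S)} (hT : T.ShortExact) :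
    Function.Exact (hdel a i hT) (hmap a (i+1) T.f) := by
  apply dl_exact
  · intro k x
    refine (Ext.comp_assoc_of_third_deg_zero _ _ _ (by omega)).trans ?_
    rw [hT.extClass_comp, Ext.comp_zero]
  · intro k x hx
    exact Ext.covariant_sequence_exact₁ _ hT x hx rfl

lemma h_exact₂ (i : ℕ) {T : ShortComplex (ModuleCat.{0} S)} (hT : T.ShortExact) :
    Function.Exact (hmap a i T.f) (hmap a i T.g) := by
  apply dl_exact
  · intro k x
    refine (Ext.comp_assoc_of_third_deg_zero _ _ _ (by omega)).trans ?_
    rw [Ext.mk₀_comp_mk₀, T.zero, Ext.mk₀_zero, Ext.comp_zero]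
  · intro k x hx
    exact Ext.covariant_sequence_exact₂ _ hT x hx

lemma h_exact₃ (i : ℕ) {T : ShortComplex (ModuleCat.{0} S)} (hT : T.ShortExact) :
    Function.Exact (hmap a i T.g) (hdel a i hT) := by
  apply dl_exact
  · intro k x
    refine (Ext.comp_assoc_of_second_deg_zero _ _ _ (by omega)).trans ?_
    rw [hT.comp_extClass, Ext.comp_zero]
  · intro k x hx
    exact Ext.covariant_sequence_exact₃ _ hT x rfl hx

lemma h_inj (i : ℕ) (Q : ModuleCat.{0} S) [Injective Q] : Subsingleton (hh a (i+1) Q) := by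
  refine ⟨fun x y => ?_⟩
  suffices h : ∀ x : hh a (i+1) Q, x = 0 by rw [h x, h y]
  intro x
  obtain ⟨k, x, rfl⟩ := Module.DirectLimit.exists_of x
  rw [Ext.eq_zero_of_injective x, map_zero]

end hS
end LCB
end PartP2a

section PartP3
namespace LCB
open CategoryTheory Limits Abelian

section P3
variable {S : Type} [CommRing S] (a : Fil S)

/-- degree zero evaluation -/
noncomputable def ev0 (I : Ideal S) (N : ModuleCat.{0} S) : Ext (Sq I) N 0 →ₗ[S] N where
  toFun x := (Ext.linearEquiv₀ (R := S) x).hom (Ideal.Quotient.mk _ 1)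
  map_add' x y := by rw [map_add]; rfl
  map_smul' r x := by rw [map_smul]; rfl

lemma ev0_mk₀ (I : Ideal S) (N : ModuleCat.{0} S) (f : Sq I ⟶ N) :
    ev0 I N (Ext.mk₀ f) = f.hom (Ideal.Quotient.mk _ 1) := by
  have : Ext.linearEquiv₀ (R := S) (Ext.mk₀ f) = f := by
    rw [← LinearEquiv.eq_symm_apply]; rfl
  change (Ext.linearEquiv₀ (R := S) (Ext.mk₀ f)).hom _ = _
  rw [this]

lemma ext0_rep {X Y : ModuleCat.{0} S} (x : Ext X Y 0) : ∃ f, Ext.mk₀ f = x :=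
  ⟨Ext.linearEquiv₀ (R := S) x, Ext.mk₀_linearEquiv₀_apply x⟩

/-- degree zero evaluation in the limit -/
noncomputable def hev (N : ModuleCat.{0} S) : hh a 0 N →ₗ[S] N :=
  Module.DirectLimit.lift S ℕ _ _ (fun k => ev0 (a.a k) N) (by
    intro k l h x
    obtain ⟨f, rfl⟩ := ext0_rep x
    rw [htr_apply, Ext.mk₀_comp_mk₀, ev0_mk₀, ev0_mk₀]
    rfl)

lemma hev_of (N : ModuleCat.{0} S) (k : ℕ) (f : Sq (a.a k) ⟶ N) :
    hev a N (Module.DirectLimit.of _ _ _ _ k (Ext.mk₀ f)) = f.hom (Ideal.Quotient.mk _ 1) := by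
  rw [hev, Module.DirectLimit.lift_of, ev0_mk₀]

lemma hev_rep (N : ModuleCat.{0} S) (x : hh a 0 N) : ∃ k, ∃ f : Sq (a.a k) ⟶ N,
    x = Module.DirectLimit.of _ _ _ _ k (Ext.mk₀ f) := by
  obtain ⟨k, x, rfl⟩ := Module.DirectLimit.exists_of x
  obtain ⟨f, rfl⟩ := ext0_rep x
  exact ⟨k, f, rfl⟩

lemma hev_inj (N : ModuleCat.{0} S) : Function.Injective (hev a N) := by
  rw [injective_iff_map_eq_zero]
  intro x hx
  obtain ⟨k, f, rfl⟩ := hev_rep a N x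
  rw [hev_of] at hx
  rw [hom_ext_one f hx, Ext.mk₀_zero, map_zero]

variable (J : Ideal S) (h1 : ∀ k, ∃ l, J ^ l ≤ a.a k) (h2 : ∀ k, ∃ l, a.a l ≤ J ^ k)

include h1 h2 in
lemma hev_range (N : ModuleCat.{0} S) : LinearMap.range (hev a N) = Gam J N := by
  ext y
  constructor
  · rintro ⟨x, rfl⟩
    obtain ⟨k, f, rfl⟩ := hev_rep a N x
    obtain ⟨l, hl⟩ := h1 k
    rw [hev_of]
    exact ⟨l, fun r hr => hom_smul_one f r (hl hr)⟩
  · rintro ⟨k, hk⟩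
    obtain ⟨l, hl⟩ := h2 k
    let f : Sq (a.a l) ⟶ N :=
      ModuleCat.ofHom (Submodule.liftQ _ (LinearMap.toSpanSingleton S N y)
        (fun r hr => LinearMap.mem_ker.2 (hk r (hl hr))))
    exact ⟨_, (hev_of a N l f).trans (one_smul _ y)⟩

lemma hev_nat {N N' : ModuleCat.{0} S} (f : N ⟶ N') (x : hh a 0 N) :
    hev a N' (hmap a 0 f x) = f.hom (hev a N x) := by
  obtain ⟨k, g, rfl⟩ := hev_rep a N x
  rw [hev_of, hmap, Module.DirectLimit.map_apply_of]
  have : (Ext.mk₀ f).postcompOfLinear S (Sq (a.a k)) (add_zero 0) (Ext.mk₀ g) = Ext.mk₀ (g ≫ f) :=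
    Ext.mk₀_comp_mk₀ _ _
  rw [this, hev_of]
  rfl

/-- degree zero -/
noncomputable def hevE (N : ModuleCat.{0} S) : hh a 0 N ≃ₗ[S] Gam J N :=
  LinearEquiv.ofInjective (hev a N) (hev_inj a N) ≪≫ₗ
    LinearEquiv.ofEq _ _ (hev_range a J h1 h2 N)

lemma hevE_val (N : ModuleCat.{0} S) (x) : (hevE a J h1 h2 N x).1 = hev a N x := rfl

include h1 h2 in
lemma H_iso_h1 {T : ShortComplex (ModuleCat.{0} S)} (hT : T.ShortExact) [Injective T.X₂] :
    Nonempty ((localCohomology J 1).obj T.X₁ ≃ₗ[S] hh a 1 T.X₁) := by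
  have hs := h_inj a 0 T.X₂
  have hsur : Function.Surjective (hdel a 0 hT) := fun x => ((h_exact₁ a 0 hT) x).1
      (Subsingleton.elim _ _)
  have hker := (h_exact₃ a 0 hT).linearMap_ker_eq
  let E := LinearMap.quotKerEquivOfSurjective _ hsur
  obtain ⟨e⟩ := H_D1 T hT J
  have E2 : (hh a 0 T.X₃ ⧸ LinearMap.ker (hdel a 0 hT)) ≃ₗ[S]
      (Gam J T.X₃ ⧸ LinearMap.range (GamMap J T.g.hom)) :=
    Submodule.Quotient.equiv _ _ (hevE a J h1 h2 T.X₃) (by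
      rw [hker]
      ext y
      constructor
      · rintro ⟨_, ⟨x, rfl⟩, rfl⟩
        refine ⟨hevE a J h1 h2 T.X₂ x, ?_⟩
        exact Subtype.ext (hev_nat a T.g x).symm
      · rintro ⟨x, rfl⟩
        refine ⟨_, ⟨(hevE a J h1 h2 T.X₂).symm x, rfl⟩, ?_⟩
        refine Subtype.ext ((hev_nat a T.g _).trans ?_)
        rw [← hevE_val a J h1 h2, LinearEquiv.apply_symm_apply]
        rfl)
  exact ⟨e ≪≫ₗ E2.symm ≪≫ₗ E⟩

lemma H_iso_h2 (i : ℕ) {T : ShortComplex (ModuleCat.{0} S)} (hT : T.ShortExact) [Injective T.X₂]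
    (h : Nonempty ((localCohomology J (i+1)).obj T.X₃ ≃ₗ[S] hh a (i+1) T.X₃)) :
    Nonempty ((localCohomology J (i+2)).obj T.X₁ ≃ₗ[S] hh a (i+2) T.X₁) := by
  have hs := h_inj a (i+1) T.X₂
  have hsur : Function.Surjective (hdel a (i+1) hT) := fun x => ((h_exact₁ a (i+1) hT) x).1
      (Subsingleton.elim _ _)
  have hker := (h_exact₃ a (i+1) hT).linearMap_ker_eq
  obtain ⟨e⟩ := H_D2 T hT J i
  obtain ⟨e'⟩ := h
  have hs' := h_inj a i T.X₂
  have hinj : Function.Injective (hdel a (i+1) hT) := by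
    rw [← LinearMap.ker_eq_bot, hker, LinearMap.range_eq_bot]
    exact LinearMap.ext fun x => by rw [Subsingleton.elim x 0, map_zero, map_zero]
  exact ⟨e.toLinearEquiv ≪≫ₗ e' ≪≫ₗ LinearEquiv.ofBijective _ ⟨hinj, hsur⟩⟩

include h1 h2 in
theorem H_iso_h : ∀ (i : ℕ) (N : ModuleCat.{0} S),
    Nonempty ((localCohomology J i).obj N ≃ₗ[S] hh a i N)
  | 0, N => by
    obtain ⟨e⟩ := H_D0 J N
    exact ⟨e ≪≫ₗ (hevE a J h1 h2 N).symm⟩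
  | 1, N => H_iso_h1 a J h1 h2 (T := ShortComplex.mk (Injective.ι N)
      (cokernel.π (Injective.ι N)) (cokernel.condition _)) { exact := ShortComplex.exact_cokernel _ }
  | i + 2, N => H_iso_h2 a J i (T := ShortComplex.mk (Injective.ι N)
      (cokernel.π (Injective.ι N)) (cokernel.condition _)) { exact := ShortComplex.exact_cokernel _ }
      (H_iso_h (i+1) _)

end P3
end LCB
end PartP3

section PartP2c
namespace LCB
open CategoryTheory Limits Abelian

section P2c
variable {S : Type} [CommRing S]

/-- power ideals -/
def aI : List S → ℕ → Ideal S
  | [], _ => ⊥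
  | y :: xs, k => Ideal.span {y ^ k} ⊔ aI xs k

/-- regularity -/
def HR : List S → Prop
  | [] => True
  | y :: xs => HR xs ∧ ∀ k r, y ^ k * r ∈ aI xs k → r ∈ aI xs k

lemma aI_anti (xs : List S) : Antitone (aI xs) := by
  induction xs with
  | nil => exact fun _ _ _ => le_rfl
  | cons y xs ih =>
    intro k l h
    refine sup_le_sup ?_ (ih h)
    rw [Ideal.span_singleton_le_span_singleton]
    exact pow_dvd_pow _ h

lemma aI_sl (xs : List S) (k : ℕ) : aI xs (k+1) ≤ aI xs k := aI_anti xs (Nat.le_succ k)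

lemma pow_mem_aI {xs : List S} {x : S} (hx : x ∈ xs) (k : ℕ) : x ^ k ∈ aI xs k := by
  induction xs with
  | nil => simp at hx
  | cons y xs ih =>
    rcases List.mem_cons.1 hx with rfl | hx
    · exact Ideal.mem_sup_left (Ideal.mem_span_singleton_self _)
    · exact Ideal.mem_sup_right (ih hx)

/-- the filtration -/
abbrev aF (xs : List S) : Fil S := ⟨aI xs, aI_anti xs⟩

lemma aI_le (xs : List S) (k : ℕ) : aI xs k ≤ Ideal.span {x | x ∈ xs} ^ k := by
  induction xs with
  | nil => exact bot_le
  | cons y xs ih =>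
    refine sup_le ?_ (ih.trans (Ideal.pow_right_mono (Ideal.span_mono ?_) k))
    · rw [Ideal.span_singleton_le_iff_mem]
      exact Ideal.pow_mem_pow (Ideal.subset_span (by simp)) k
    · intro x hx
      exact List.mem_cons_of_mem _ hx

lemma le_aI (xs : List S) (k : ℕ) : ∃ l, Ideal.span {x | x ∈ xs} ^ l ≤ aI xs k := by
  have hfg : (Ideal.span {x | x ∈ xs}).FG :=
    Submodule.fg_span xs.finite_toSet
  apply Ideal.exists_pow_le_of_le_radical_of_fg _ hfg
  rw [Ideal.span_le]
  intro x hx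
  exact ⟨k, pow_mem_aI hx k⟩

/-- multiplication endomorphism -/
noncomputable abbrev ml (N : ModuleCat.{0} S) (r : S) : N ⟶ N := r • 𝟙 N

lemma ml_comp (N : ModuleCat.{0} S) (r : S) {X : ModuleCat.{0} S} {i : ℕ} (x : Ext N X i) :
    (Ext.mk₀ (ml N r)).comp x (zero_add i) = r • x := by
  rw [Ext.mk₀_smul, Ext.smul_comp, Ext.mk₀_id_comp]

lemma comp_ml (N : ModuleCat.{0} S) (r : S) {X : ModuleCat.{0} S} {i : ℕ} (x : Ext X N i) :
    x.comp (Ext.mk₀ (ml N r)) (add_zero i) = r • x := by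
  rw [Ext.mk₀_smul, Ext.comp_smul, Ext.comp_mk₀_id]

/-- the short complex -/
noncomputable abbrev sY (y : S) (xs : List S) (k : ℕ) : ShortComplex (ModuleCat.{0} S) :=
  ShortComplex.mk (X₁ := Sq (aI xs k)) (X₂ := Sq (aI xs k)) (X₃ := Sq (aI (y :: xs) k))
    (ml _ (y ^ k)) (qf le_sup_right) (by
      rw [Linear.smul_comp, Category.id_comp]
      ext 
      refine (Submodule.Quotient.mk_eq_zero (aI (y :: xs) k) (x := y ^ k • (1 : S))).2 ?_
      refine Ideal.mem_sup_left ?_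
      simp [Ideal.mem_span_singleton_self])

lemma sY_se {y : S} {xs : List S} (h : HR (y :: xs)) (k : ℕ) : (sY y xs k).ShortExact := by
  have h3 := h.2 k
  refine @ShortComplex.ShortExact.mk _ _ _ _ ?_ ?_ ?_
  · rw [ShortComplex.moduleCat_exact_iff]
    intro (x : S ⧸ aI xs k) hx
    obtain ⟨x, rfl⟩ := Submodule.Quotient.mk_surjective _ x
    have hx : x ∈ aI (y :: xs) k := (Submodule.Quotient.mk_eq_zero _).1 hx
    obtain ⟨_, hu, v, hv, rfl⟩ := Submodule.mem_sup.1 hx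
    obtain ⟨u, rfl⟩ := Ideal.mem_span_singleton'.1 hu
    refine ⟨Submodule.Quotient.mk u, ?_⟩
    change y ^ k • (Submodule.Quotient.mk u : S ⧸ aI xs k) = _
    rw [← Submodule.Quotient.mk_smul]
    refine (Submodule.Quotient.eq _).2 ?_
    rw [smul_eq_mul, mul_comm, sub_add_cancel_left]
    exact neg_mem hv
  · rw [ModuleCat.mono_iff_injective, injective_iff_map_eq_zero]
    intro (x : S ⧸ aI xs k) hx
    obtain ⟨x, rfl⟩ := Submodule.Quotient.mk_surjective _ x
    have hx : y ^ k • Submodule.Quotient.mk x = (0 : S ⧸ aI xs k) := hx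
    rw [← Submodule.Quotient.mk_smul] at hx
    refine (Submodule.Quotient.mk_eq_zero _).2 (h3 _ ?_)
    exact (Submodule.Quotient.mk_eq_zero _).1 hx
  · rw [ModuleCat.epi_iff_surjective]
    exact Submodule.factor_surjective (le_sup_right : aI xs k ≤ aI (y :: xs) k)

instance : Projective (Sq (⊥ : Ideal S)) := by
  have : Module.Free S (S ⧸ (⊥ : Ideal S)) :=
    Module.Free.of_equiv (Submodule.quotEquivOfEqBot ⊥ rfl).symm
  exact (IsProjective.iff_projective (S ⧸ (⊥ : Ideal S))).1 inferInstance

lemma ext_top {xs : List S} (h : HR xs) (k : ℕ) (N : ModuleCat.{0} S) :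
    ∀ i, xs.length < i → ∀ x : Ext (Sq (aI xs k)) N i, x = 0 := by
  induction xs with
  | nil =>
    intro i hi x
    obtain ⟨j, rfl⟩ : ∃ j, i = j + 1 := ⟨i - 1, by simp at hi; omega⟩
    have : Projective (Sq (aI ([] : List S) k)) := inferInstanceAs (Projective (Sq (⊥ : Ideal S)))
    exact Ext.eq_zero_of_projective x
  | cons y xs ih =>
    intro i hi x
    rw [List.length_cons] at hi
    obtain ⟨j, rfl⟩ : ∃ j, i = j + 1 := ⟨i - 1, by omega⟩
    obtain ⟨x₁, rfl⟩ := Ext.contravariant_sequence_exact₃ (sY_se h k) N x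
      (ih h.1 _ (by omega) _) (add_comm 1 j)
    rw [ih h.1 j (by omega) x₁, Ext.comp_zero]

/-- the element map -/
noncomputable abbrev sm {N : ModuleCat.{0} S} (m : N) : ModuleCat.of S S ⟶ N :=
  ModuleCat.ofHom (LinearMap.toSpanSingleton S N m)

/-- the fundamental class -/
noncomputable def ec : (xs : List S) → HR xs → (k : ℕ) →
    Ext (Sq (aI xs k)) (ModuleCat.of S S) xs.length
  | [], _, _ => Ext.mk₀ (ModuleCat.ofHom (Submodule.quotEquivOfEqBot (⊥ : Ideal S) rfl).toLinearMap)
  | _ :: xs, h, k => (sY_se h k).extClass.comp (ec xs h.1 k) (add_comm _ _)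

/-- the class map -/
noncomputable def ecm {xs : List S} (h : HR xs) (k : ℕ) {N : ModuleCat.{0} S} (m : N) :
    Ext (Sq (aI xs k)) N xs.length := (ec xs h k).comp (Ext.mk₀ (sm m)) (add_zero _)

lemma sm_add {N : ModuleCat.{0} S} (m m' : N) : sm (m + m') = sm m + sm m' := by
  ext; simp

lemma sm_smul {N : ModuleCat.{0} S} (r : S) (m : N) : sm (r • m) = r • sm m := by
  ext; simp

lemma ecm_add {xs : List S} (h : HR xs) (k : ℕ) {N : ModuleCat.{0} S} (m m' : N) :
    ecm h k (m + m') = ecm h k m + ecm h k m' := by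
  rw [ecm, sm_add, Ext.mk₀_add, Ext.comp_add]; rfl

lemma ecm_smul {xs : List S} (h : HR xs) (k : ℕ) {N : ModuleCat.{0} S} (r : S) (m : N) :
    ecm h k (r • m) = r • ecm h k m := by
  rw [ecm, sm_smul, Ext.mk₀_smul, Ext.comp_smul]; rfl

lemma ecm_cons {y : S} {xs : List S} (h : HR (y :: xs)) (k : ℕ) {N : ModuleCat.{0} S} (m : N) :
    ecm h k m = (sY_se h k).extClass.comp (ecm h.1 k m) (add_comm _ _) :=
  Ext.comp_assoc _ _ _ _ _ (by rw [List.length_cons]; omega)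

lemma ecm_nil (h : HR ([] : List S)) (k : ℕ) {N : ModuleCat.{0} S} (m : N) :
    ecm h k m = Ext.mk₀ (ModuleCat.ofHom
      (Submodule.quotEquivOfEqBot (⊥ : Ideal S) rfl).toLinearMap ≫ sm m) :=
  Ext.mk₀_comp_mk₀ _ _

lemma ecm_surj {xs : List S} (h : HR xs) (k : ℕ) {N : ModuleCat.{0} S}
    (x : Ext (Sq (aI xs k)) N xs.length) : ∃ m, ecm h k m = x := by
  induction xs with
  | nil =>
    obtain ⟨f, rfl⟩ := ext0_rep x
    refine ⟨f.hom (Submodule.Quotient.mk 1), ?_⟩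
    rw [ecm_nil]
    congr 1
    ext
    exact one_smul S (f.hom (Submodule.Quotient.mk 1))
  | cons y xs ih =>
    obtain ⟨x₁, rfl⟩ := Ext.contravariant_sequence_exact₃ (sY_se h k) N x
      (ext_top h.1 k N _ (by simp) _) (add_comm 1 xs.length)
    obtain ⟨m, rfl⟩ := ih h.1 x₁
    exact ⟨m, ecm_cons h k m⟩

lemma ecm_ker {xs : List S} (h : HR xs) (k : ℕ) {N : ModuleCat.{0} S} (m : N) :
    ecm h k m = 0 ↔ m ∈ aI xs k • (⊤ : Submodule S N) := by
  induction xs generalizing m with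
  | nil =>
    rw [ecm_nil]
    change _ ↔ m ∈ (⊥ : Ideal S) • (⊤ : Submodule S N)
    rw [Submodule.bot_smul, Submodule.mem_bot]
    constructor
    · intro h0
      have : ModuleCat.ofHom
        (Submodule.quotEquivOfEqBot (⊥ : Ideal S) rfl).toLinearMap ≫ sm m = 0 := 
        (Ext.mk₀_eq_zero_iff _).1 h0
      have := congrArg (fun t => t.hom (Submodule.Quotient.mk 1)) this
      exact (one_smul S m).symm.trans this
    · rintro rfl
      have : sm (0 : N) = 0 := by ext; simp
      rw [this, comp_zero, Ext.mk₀_zero]; rfl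
  | cons y xs ih =>
    change _ ↔ m ∈ (Ideal.span {y ^ k} ⊔ aI xs k) • (⊤ : Submodule S N)
    rw [Submodule.sup_smul, ecm_cons]
    constructor
    · intro h0
      obtain ⟨x₂, hx⟩ := Ext.contravariant_sequence_exact₁ (sY_se h k) N _ _ h0
      obtain ⟨m₂, rfl⟩ := ecm_surj h.1 k x₂
      have hx : (Ext.mk₀ (ml _ (y ^ k))).comp (ecm h.1 k m₂) (zero_add _) = ecm h.1 k m := hx
      rw [ml_comp, ← ecm_smul] at hx
      have : ecm h.1 k (m + (-1 : S) • y ^ k • m₂) = 0 := by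
        rw [ecm_add, ecm_smul, hx, neg_smul, one_smul, add_neg_cancel]
      have := (ih h.1 _).1 this
      have e : m = y ^ k • m₂ + (m + (-1 : S) • y ^ k • m₂) := by
        rw [neg_smul, one_smul]; abel
      rw [e]
      exact Submodule.add_mem_sup (Submodule.smul_mem_smul (Ideal.mem_span_singleton_self _) trivial)
        this
    · intro hm
      obtain ⟨_, hu, v, hv, rfl⟩ := Submodule.mem_sup.1 hm
      rw [Submodule.ideal_span_singleton_smul] at hu
      obtain ⟨u, -, rfl⟩ := hu
      rw [ecm_add, (ih h.1 v).2 hv, add_zero]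
      change Ext.comp _ (ecm h.1 k (y ^ k • u)) _ = 0
      rw [ecm_smul, ← ml_comp]
      refine (Ext.comp_assoc_of_second_deg_zero _ _ _ (by omega)).symm.trans ?_
      have : (sY_se h k).extClass.comp (Ext.mk₀ (ml _ (y ^ k))) (add_zero 1) = 0 :=
        (sY_se h k).extClass_comp
      rw [this, Ext.zero_comp]

lemma ecm_trans {xs : List S} (h : HR xs) (k : ℕ) {N : ModuleCat.{0} S} (m : N) :
    (Ext.mk₀ (qf (aI_sl xs k))).comp (ecm h k m) (zero_add _) =
      ecm h (k+1) (xs.prod • m) := by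
  induction xs generalizing m with
  | nil =>
    rw [ecm_nil, ecm_nil, List.prod_nil, one_smul]
    refine (Ext.mk₀_comp_mk₀ (qf (le_refl (⊥ : Ideal S))) (ModuleCat.ofHom
      (Submodule.quotEquivOfEqBot (⊥ : Ideal S) rfl).toLinearMap ≫ sm m)).trans ?_
    rw [qf_refl, Category.id_comp]
  | cons y xs ih =>
    let F : sY y xs (k+1) ⟶ sY y xs k := ShortComplex.homMk
      (y • qf (aI_sl xs k)) (qf (aI_sl xs k))
      (qf (aI_sl (y :: xs) k)) (by
        simp [smul_smul, pow_succ]) (by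
        exact (qf_comp _ _).trans (qf_comp _ _).symm)
    have e := ShortComplex.ShortExact.extClass_naturality (sY_se h (k+1)) (sY_se h k) F
    rw [ecm_cons, ecm_cons]
    refine (Ext.comp_assoc _ _ _ (zero_add 1) (add_comm _ _) (by rw [List.length_cons]; omega)).symm.trans ?_
    refine (congrArg (fun t => Ext.comp t _ _) e.symm).trans ?_
    refine (Ext.comp_assoc_of_second_deg_zero _ _ _ (by rw [List.length_cons]; omega)).trans ?_
    refine congrArg (fun t => Ext.comp _ t _) ?_
    change (Ext.mk₀ (y • qf (aI_sl xs k))).comp _ _ = _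
    rw [Ext.mk₀_smul, Ext.smul_comp, ih h.1, List.prod_cons, mul_smul, ecm_smul, ecm_smul, ecm_smul]

end P2c
end LCB
end PartP2c

section PartP2d
namespace LCB
open CategoryTheory Limits Abelian

section P2d
variable {S : Type} [CommRing S]

lemma HR_of_rev (zs : List S) : ∀ xs : List S, HR (List.reverseAux zs xs) → HR xs := by
  induction zs with
  | nil => exact fun xs h => h
  | cons z zs ih => exact fun xs h => (ih _ h).1

lemma ext_zero_of_kill (k : ℕ) (X : ModuleCat.{0} S) (zs : List S) : ∀ xs : List S,
    HR (List.reverseAux zs xs) → (∀ z ∈ zs, ∀ x : X, z ^ k • x = 0) → ∀ i, i < zs.length →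
    ∀ x : Ext X (Sq (aI xs k)) i, x = 0 := by
  induction zs with
  | nil => exact fun xs _ _ i hi => by simp at hi
  | cons z zs ih =>
    intro xs h hz i hi x
    have hse := sY_se (HR_of_rev zs _ h) k
    have h0 : ml X (z ^ k) = 0 := by
      ext x
      exact hz z (by simp) x
    have hx : x.comp (Ext.mk₀ (sY z xs k).f) (add_zero i) = 0 := by
      refine (comp_ml _ _ _).trans ?_
      rw [← ml_comp, h0, Ext.mk₀_zero, Ext.zero_comp]
    match i, x, hx with
    | 0, x, hx =>
      obtain ⟨f, rfl⟩ := ext0_rep x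
      have hm := hse.mono_f
      rw [Ext.mk₀_comp_mk₀, Ext.mk₀_eq_zero_iff] at hx
      rw [show f = 0 by rw [← cancel_mono (sY z xs k).f, hx, zero_comp], Ext.mk₀_zero]
    | j + 1, x, hx =>
      obtain ⟨x₃, rfl⟩ := Ext.covariant_sequence_exact₁ _ hse x hx rfl
      rw [ih (z :: xs) h (fun y hy => hz y (List.mem_cons_of_mem _ hy)) j
        (by simpa using hi) x₃, Ext.zero_comp]

lemma sq_kill (I : Ideal S) (r : S) (hr : r ∈ I) (x : S ⧸ I) : r • x = 0 := by
  obtain ⟨x, rfl⟩ := Submodule.Quotient.mk_surjective _ x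
  rw [← Submodule.Quotient.mk_smul]
  exact (Submodule.Quotient.mk_eq_zero _).2 (I.mul_mem_right _ hr)

lemma ext_free_zero {xs : List S} (h : HR xs) (k i : ℕ) (hi : i < xs.length)
    (x : Ext (Sq (aI xs k)) (ModuleCat.of S S) i) : x = 0 := by
  let e : ModuleCat.of S S ≅ Sq (⊥ : Ideal S) :=
    (Submodule.quotEquivOfEqBot (⊥ : Ideal S) rfl).symm.toModuleIso
  have h1 : x.comp (Ext.mk₀ e.hom) (add_zero i) = 0 :=
    ext_zero_of_kill k (Sq (aI xs k)) xs.reverse [] (by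
      rw [List.reverseAux_eq]; simpa using h)
      (fun z hz y => sq_kill _ _ (pow_mem_aI (by simpa using hz) k) y) i (by simpa using hi) _
  have h2 : x = (x.comp (Ext.mk₀ e.hom) (add_zero i)).comp (Ext.mk₀ e.inv) (add_zero i) := by
    rw [Ext.comp_assoc_of_third_deg_zero, Ext.mk₀_comp_mk₀, e.hom_inv_id, Ext.comp_mk₀_id]
  rw [h2, h1, Ext.zero_comp]

lemma ext_ann {I : Ideal S} {N : ModuleCat.{0} S} {i : ℕ} (x : Ext (Sq I) N i) (r : S)
    (hr : r ∈ I) : r • x = 0 := by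
  have h0 : ml (Sq I) r = 0 := by
    refine ModuleCat.hom_ext (LinearMap.ext fun x => ?_)
    exact sq_kill I r hr x
  rw [← ml_comp, h0, Ext.mk₀_zero, Ext.zero_comp]

lemma ext_tor {xs : List S} (h : HR xs) (k : ℕ) (J : Ideal S) {N : ModuleCat.{0} S}
    (hN : ∀ m : N, ∃ s ∈ J, m = s • m) (i : ℕ) (x : Ext (Sq (aI xs k)) N i) :
    ∃ s ∈ J, x = s • x := by
  induction xs generalizing i with
  | nil =>
    match i, x with
    | 0, x =>
      obtain ⟨m, rfl⟩ := ecm_surj h k x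
      obtain ⟨s, hs, hm⟩ := hN m
      exact ⟨s, hs, by rw [← ecm_smul, ← hm]⟩
    | j + 1, x =>
      exact ⟨0, zero_mem _, by rw [ext_top h k N (j+1) (by simp) x, smul_zero]⟩
  | cons y xs ih =>
    obtain ⟨s, hs, e⟩ := ih h.1 i ((Ext.mk₀ (sY y xs k).g).comp x (zero_add i))
    have hse := sY_se h k
    have e' : (Ext.mk₀ (sY y xs k).g).comp (x - s • x) (zero_add i) = 0 := by
      have : x - s • x = x + (-s) • x := by rw [neg_smul, sub_eq_add_neg]
      rw [this, Ext.comp_add, Ext.comp_smul, neg_smul, ← e, add_neg_cancel]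
    match i, x, e, e' with
    | 0, x, e, e' =>
      obtain ⟨f, hf⟩ := ext0_rep (x - s • x)
      have hm := hse.epi_g
      rw [← hf, Ext.mk₀_comp_mk₀, Ext.mk₀_eq_zero_iff] at e'
      have : f = 0 := by
        rw [← cancel_epi (sY y xs k).g, e', comp_zero]
      rw [this, Ext.mk₀_zero] at hf
      exact ⟨s, hs, sub_eq_zero.1 hf.symm⟩
    | j + 1, x, e, e' =>
      obtain ⟨x₁, hx₁⟩ := Ext.contravariant_sequence_exact₃ hse N _ e' (add_comm 1 j)
      obtain ⟨t, ht, ex⟩ := ih h.1 j x₁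
      have e2 : x - s • x = t • (x - s • x) := by
        rw [← hx₁, ← Ext.comp_smul, ← ex]
      refine ⟨s + t - t * s, sub_mem (add_mem hs ht) (J.mul_mem_left _ hs), ?_⟩
      rw [smul_sub, smul_smul] at e2
      rw [sub_smul, add_smul, add_sub_assoc, ← e2]
      abel

lemma ext_tor_zero {xs : List S} (h : HR xs) (k : ℕ) {N : ModuleCat.{0} S}
    (hN : ∀ m : N, ∃ s ∈ Ideal.span {x | x ∈ xs}, m = s • m) (i : ℕ)
    (x : Ext (Sq (aI xs k)) N i) : x = 0 := by
  obtain ⟨s, hs, e⟩ := ext_tor h k _ hN i x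
  obtain ⟨l, hl⟩ := le_aI xs k
  have : ∀ l : ℕ, x = s ^ l • x := by
    intro l
    induction l with
    | zero => simp
    | succ l ih => rw [pow_succ, mul_smul, ← e, ← ih]
  rw [this l, ext_ann x _ (hl (Ideal.pow_mem_pow hs l))]

lemma hh_zero_of (a : Fil S) (i : ℕ) (N : ModuleCat.{0} S)
    (h : ∀ k (x : Ext (Sq (a.a k)) N i), x = 0) : Subsingleton (hh a i N) := by
  refine ⟨fun x y => ?_⟩
  suffices h : ∀ x : hh a i N, x = 0 by rw [h x, h y]
  intro x
  obtain ⟨k, x, rfl⟩ := Module.DirectLimit.exists_of x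
  rw [h k x, map_zero]

lemma h_top {xs : List S} (h : HR xs) (N : ModuleCat.{0} S) (i : ℕ) (hi : xs.length < i) :
    Subsingleton (hh (aF xs) i N) := hh_zero_of _ _ _ (fun k => ext_top h k N i hi)

lemma h_tor {xs : List S} (h : HR xs) (N : ModuleCat.{0} S)
    (hN : ∀ m : N, ∃ s ∈ Ideal.span {x | x ∈ xs}, m = s • m) (i : ℕ) :
    Subsingleton (hh (aF xs) i N) := hh_zero_of _ _ _ (fun k => ext_tor_zero h k hN i)

lemma h_free {xs : List S} (h : HR xs) (p : ℕ) (i : ℕ) (hi : i < xs.length) :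
    Subsingleton (hh (aF xs) i (ModuleCat.of S (Fin p → S))) := by
  induction p with
  | zero =>
    refine h_tor h _ (fun m => ⟨0, zero_mem _, Subsingleton.elim (α := Fin 0 → S) _ _⟩) i
  | succ p ih =>
    let T : ShortComplex (ModuleCat.{0} S) := ShortComplex.mk
      (ModuleCat.ofHom (LinearMap.single S (fun _ : Fin (p+1) => S) 0))
      (ModuleCat.ofHom (LinearMap.funLeft S S (Fin.succ : Fin p → Fin (p+1)))) (by
        ext; simp [LinearMap.funLeft]; rfl)
    have hT : Function.Exact (hmap (aF xs) i T.f) (hmap (aF xs) i T.g) := by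
      apply h_exact₂
      refine @ShortComplex.ShortExact.mk _ _ _ _ ?_ ?_ ?_
      · rw [ShortComplex.moduleCat_exact_iff]
        intro (v : Fin (p+1) → S) hv
        refine ⟨v 0, ?_⟩
        change Pi.single 0 (v 0) = v
        funext j
        refine Fin.cases ?_ (fun j => ?_) j
        · simp
        · have : v j.succ = 0 := congrFun hv j
          simp [this]
      · rw [ModuleCat.mono_iff_injective]
        exact Pi.single_injective (M := fun _ : Fin (p+1) => S) 0
      · rw [ModuleCat.epi_iff_surjective]
        intro (v : Fin p → S)
        exact ⟨(Fin.cons 0 v : Fin (p+1) → S), rfl⟩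
    have h1 : Subsingleton (hh (aF xs) i T.X₁) :=
      hh_zero_of _ _ _ (fun k => ext_free_zero h k i hi)
    have h3 : Subsingleton (hh (aF xs) i T.X₃) := ih
    refine ⟨fun x y => ?_⟩
    suffices h : ∀ x : hh (aF xs) i T.X₂, x = 0 from (h x).trans (h y).symm
    intro x
    obtain ⟨y, rfl⟩ := (hT x).1 (Subsingleton.elim _ _)
    rw [Subsingleton.elim y 0, map_zero]

end P2d
end LCB
end PartP2d

section PartP2e
namespace LCB
open CategoryTheory Limits Abelian
open scoped TensorProduct

section P2e
variable {R S : Type} [CommRing R] [CommRing S] [Algebra R S]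

/-- axioms of the inverse system module -/
structure DSys (xs : List R) (D : Type) [AddCommGroup D] [Module R D] (u : ℕ → D) : Prop where
  step : ∀ k, xs.prod • u (k+1) = u k
  kill : ∀ (k : ℕ) (r : R), r ∈ aI xs k → r • u k = 0
  ann : ∀ (k : ℕ) (r : R), r • u k = 0 → r ∈ aI xs k
  gen : ∀ d : D, ∃ (k : ℕ) (r : R), d = r • u k

/-- image list -/
abbrev xsS (S : Type) [CommRing S] [Algebra R S] (xs : List R) : List S := xs.map (algebraMap R S)

variable {xs : List R} {D : Type} [AddCommGroup D] [Module R D] {u : ℕ → D} (hD : DSys xs D u)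
  {N : Type} [AddCommGroup N] [Module S N] [Module R N] [IsScalarTower R S N]
  {P : Type} [AddCommGroup P] [Module S P]

include hD in
lemma DSys.steps (k j : ℕ) : xs.prod ^ j • u (k + j) = u k := by
  induction j with
  | zero => simp
  | succ j ih => rw [pow_succ, mul_smul, ← add_assoc, hD.step, ih]

lemma prod_xsS : (xsS S xs).prod = algebraMap R S xs.prod := (map_list_prod _ _).symm

lemma mem_aI_map (k : ℕ) (r : R) (hr : r ∈ aI xs k) : algebraMap R S r ∈ aI (xsS S xs) k := by
  have : aI xs k ≤ (aI (xsS S xs) k).comap (algebraMap R S) := by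
    clear hr
    induction xs with
    | nil => exact bot_le
    | cons y xs ih =>
      refine sup_le ?_ (ih.trans (Ideal.comap_mono le_sup_right))
      rw [Ideal.span_singleton_le_iff_mem, Ideal.mem_comap, map_pow]
      exact Ideal.mem_sup_left (Ideal.mem_span_singleton_self _)
  exact this hr

lemma aI_tmul_aux (d : D) (k : ℕ) (hd : ∀ y ∈ xs, y ^ k • d = 0) (s : S)
    (hs : s ∈ aI (xsS S xs) k) (n : N) : (s • n) ⊗ₜ[R] d = 0 := by
  induction xs generalizing s n with
  | nil =>
    have : s = 0 := hs
    rw [this, zero_smul, TensorProduct.zero_tmul]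
  | cons y xs ih =>
    obtain ⟨_, hu, v, hv, rfl⟩ := Submodule.mem_sup.1 hs
    obtain ⟨w, rfl⟩ := Ideal.mem_span_singleton'.1 hu
    rw [add_smul, TensorProduct.add_tmul, ih (fun y hy => hd y (List.mem_cons_of_mem _ hy)) v hv n,
      add_zero, mul_comm, mul_smul, ← map_pow, algebraMap_smul, TensorProduct.smul_tmul,
      hd y (by simp), TensorProduct.tmul_zero]

include hD in
lemma aI_tmul (k : ℕ) (m : N) (hm : m ∈ aI (xsS S xs) k • (⊤ : Submodule S N)) :
    m ⊗ₜ[R] u k = 0 := by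
  induction hm using Submodule.smul_induction_on' with
  | smul s hs n hn =>
    exact aI_tmul_aux (u k) k (fun y hy => hD.kill k _ (pow_mem_aI hy k)) s hs n
  | add x _ y _ hx hy => rw [TensorProduct.add_tmul, hx, hy, add_zero]

include hD in
lemma tmul_rep (z : N ⊗[R] D) : ∃ k, ∃ m : N, z = m ⊗ₜ u k := by
  induction z with
  | zero => exact ⟨0, 0, by simp⟩
  | tmul m d =>
    obtain ⟨k, r, rfl⟩ := hD.gen d
    exact ⟨k, r • m, (TensorProduct.smul_tmul _ _ _).symm⟩
  | add x y hx hy =>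
    obtain ⟨k, m, rfl⟩ := hx
    obtain ⟨l, m', rfl⟩ := hy
    refine ⟨k + l, xs.prod ^ l • m + xs.prod ^ k • m', ?_⟩
    rw [TensorProduct.add_tmul, TensorProduct.smul_tmul, TensorProduct.smul_tmul, hD.steps,
      add_comm k l, hD.steps]

variable (c : ℕ → N →ₗ[S] P) (hc : ∀ k m, c (k+1) (xs.prod • m) = c k m)
  (hc' : ∀ k, ∀ m ∈ aI (xsS S xs) k • (⊤ : Submodule S N), c k m = 0)

include hc in
lemma c_steps (k j : ℕ) (m : N) : c (k + j) (xs.prod ^ j • m) = c k m := by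
  induction j generalizing m with
  | zero => simp
  | succ j ih => rw [pow_succ', mul_smul, ← add_assoc, hc, ih]

include hD hc hc' in
lemma c_wd (k l : ℕ) (r s : R) (h : r • u k = s • u l) (m : N) : c k (r • m) = c l (s • m) := by
  rw [← c_steps c hc k l, ← c_steps c hc l k, add_comm l k, ← sub_eq_zero, ← map_sub]
  apply hc'
  rw [smul_smul, smul_smul, ← sub_smul, ← algebraMap_smul S (_ - _) m]
  refine Submodule.smul_mem_smul (mem_aI_map _ _ (hD.ann _ _ ?_)) Submodule.mem_top
  rw [sub_smul, mul_comm, mul_smul, hD.steps, mul_comm, mul_smul, add_comm, hD.steps, h, sub_self]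

include hD hc hc' in
lemma exists_psi : ∃ Ψ : N ⊗[R] D →ₗ[S] P, ∀ k m, Ψ (m ⊗ₜ u k) = c k m := by
  letI : Module R P := Module.compHom P (algebraMap R S)
  have : IsScalarTower R S P := IsScalarTower.of_algebraMap_smul (fun r x => rfl)
  choose kk rr hk using hD.gen
  have key : ∀ d k r, d = r • u k → ∀ m : N, c (kk d) (rr d • m) = c k (r • m) :=
    fun d k r h m => c_wd hD c hc hc' _ _ _ _ ((hk d).symm.trans h) m
  have cR : ∀ k (r : R) (m : N), c k (r • m) = r • c k m := fun k r m => by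
    rw [← algebraMap_smul S, map_smul, algebraMap_smul]
  let B : N →ₗ[S] D →ₗ[R] P :=
    { toFun := fun m =>
      { toFun := fun d => c (kk d) (rr d • m)
        map_add' := fun d e => by
          obtain ⟨k, r, h⟩ := hD.gen d
          obtain ⟨l, s, h'⟩ := hD.gen e
          have h1 : d = (r * xs.prod ^ l) • u (k + l) := by rw [mul_smul, hD.steps, h]
          have h2 : e = (s * xs.prod ^ k) • u (k + l) := by
            rw [mul_smul, add_comm, hD.steps, h']
          rw [key d _ _ h1, key e _ _ h2,
            key (d + e) (k + l) ((r * xs.prod ^ l) + (s * xs.prod ^ k)) (by rw [add_smul, ← h1, ← h2]),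
            add_smul, map_add]
        map_smul' := fun t d => by
          obtain ⟨k, r, h⟩ := hD.gen d
          rw [key d _ _ h, key (t • d) k (t * r) (by rw [mul_smul, ← h]), mul_smul, cR]
          rfl }
      map_add' := fun m m' => by
        ext d
        change c (kk d) (rr d • (m + m')) = c (kk d) (rr d • m) + c (kk d) (rr d • m')
        rw [smul_add, map_add]
      map_smul' := fun s m => by
        ext d
        change c (kk d) (rr d • (s • m)) = s • c (kk d) (rr d • m)
        rw [smul_comm, map_smul] }
  refine ⟨TensorProduct.AlgebraTensorModule.lift B, fun k m => ?_⟩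
  rw [TensorProduct.AlgebraTensorModule.lift_tmul]
  exact (key (u k) k 1 (one_smul _ _).symm m).trans (by rw [one_smul])

end P2e

section P2f
variable {R S : Type} [CommRing R] [CommRing S] [Algebra R S]
variable {xs : List R} {D : Type} [AddCommGroup D] [Module R D] {u : ℕ → D} (hD : DSys xs D u)
  (hS : HR (xsS S xs))

/-- the map from the module to the limit -/
noncomputable def cc (hS : HR (xsS S xs)) (N : ModuleCat.{0} S) (k : ℕ) :
    N →ₗ[S] hh (aF (xsS S xs)) (xsS S xs).length N :=
  Module.DirectLimit.of S ℕ _ (htr (aF (xsS S xs)) N (xsS S xs).length) k ∘ₗ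
    ({ toFun := fun m => ecm hS k m
       map_add' := ecm_add hS k
       map_smul' := ecm_smul hS k } :
       N →ₗ[S] Ext (Sq ((aF (xsS S xs)).a k)) N (xsS S xs).length)

lemma cc_apply (N : ModuleCat.{0} S) (k : ℕ) (m : N) : cc hS N k m =
    Module.DirectLimit.of S ℕ _ (htr (aF (xsS S xs)) N (xsS S xs).length) k (ecm hS k m) := rfl

lemma cc_step (N : ModuleCat.{0} S) (k : ℕ) (m : N) :
    cc hS N (k+1) ((xsS S xs).prod • m) = cc hS N k m := by
  rw [cc_apply, cc_apply, ← ecm_trans]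
  exact Module.DirectLimit.of_f (hij := Nat.le_succ k)

lemma cc_zero (N : ModuleCat.{0} S) (k : ℕ) (m : N)
    (hm : m ∈ aI (xsS S xs) k • (⊤ : Submodule S N)) : cc hS N k m = 0 := by
  rw [cc_apply, (ecm_ker hS k m).2 hm, map_zero]

lemma cc_zero_iff (N : ModuleCat.{0} S) (k : ℕ) (m : N) (h : cc hS N k m = 0) :
    ∃ j, (xsS S xs).prod ^ j • m ∈ aI (xsS S xs) (k + j) • (⊤ : Submodule S N) := by
  rw [cc_apply] at h
  obtain ⟨l, hl, e⟩ := Module.DirectLimit.of.zero_exact h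
  have key : ∀ (j : ℕ) (h : k ≤ k + j), htr (aF (xsS S xs)) N (xsS S xs).length k (k + j) h
      (ecm hS k m) = ecm hS (k + j) ((xsS S xs).prod ^ j • m) := by
    intro j
    induction j with
    | zero =>
      intro h
      rw [pow_zero, one_smul]
      exact DirectedSystem.map_self' (f := fun k l h => htr (aF (xsS S xs)) N (xsS S xs).length k l h) _
    | succ j ih =>
      intro h
      have := DirectedSystem.map_map' (f := fun k l h => htr (aF (xsS S xs)) N (xsS S xs).length k l h)
        (Nat.le_add_right k j) (Nat.le_succ (k + j)) (ecm hS k m)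
      refine this.symm.trans ?_
      rw [ih, htr_apply]
      refine (ecm_trans hS (k + j) _).trans ?_
      rw [smul_smul, ← pow_succ']
      rfl
  obtain ⟨j, rfl⟩ := Nat.exists_eq_add_of_le hl
  exact ⟨j, (ecm_ker hS _ _).1 ((key j hl).symm.trans e)⟩

lemma cc_surj (N : ModuleCat.{0} S) (x) : ∃ k m, cc hS N k m = x := by
  obtain ⟨k, x, rfl⟩ := Module.DirectLimit.exists_of x
  obtain ⟨m, rfl⟩ := ecm_surj hS k x
  exact ⟨k, m, rfl⟩

lemma cc_nat {N N' : ModuleCat.{0} S} (f : N ⟶ N') (k : ℕ) (m : N) :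
    hmap _ _ f (cc hS N k m) = cc hS N' k (f.hom m) := by
  rw [cc_apply, cc_apply, hmap, Module.DirectLimit.map_apply_of]
  congr 1
  refine (Ext.comp_assoc_of_third_deg_zero _ _ _ (by omega)).trans ?_
  rw [Ext.mk₀_comp_mk₀]
  have : sm m ≫ f = sm (f.hom m) := by ext; simp
  rw [this]
  rfl

include hD in
lemma exists_hb (N : ModuleCat.{0} S) [Module R N] [IsScalarTower R S N] :
    ∃ Ψ : N ⊗[R] D ≃ₗ[S] hh (aF (xsS S xs)) (xsS S xs).length N,
      ∀ k m, Ψ (m ⊗ₜ u k) = cc hS N k m := by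
  obtain ⟨Ψ, h⟩ := exists_psi hD (cc hS N) (fun k m => by
    rw [← algebraMap_smul S, ← prod_xsS, cc_step]) (cc_zero hS N)
  refine ⟨LinearEquiv.ofBijective Ψ ⟨?_, ?_⟩, h⟩
  · rw [injective_iff_map_eq_zero]
    intro z hz
    obtain ⟨k, m, rfl⟩ := tmul_rep hD z
    rw [h] at hz
    obtain ⟨j, hj⟩ := cc_zero_iff hS N k m hz
    have := aI_tmul hD _ _ hj
    rw [prod_xsS, ← map_pow, algebraMap_smul, TensorProduct.smul_tmul, hD.steps] at this
    exact this
  · intro x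
    obtain ⟨k, m, rfl⟩ := cc_surj hS N x
    exact ⟨_, h k m⟩

end P2f
end LCB
end PartP2e

section PartP4a
namespace LCB
section P4a
variable {A : Type} [CommRing A] [IsDomain A]

/-- projective up to powers of g -/
def GP (g : A) (Y : Type) [AddCommGroup Y] [Module A Y] : Prop :=
  ∃ (a e : ℕ) (s : Y →ₗ[A] (Fin a → A)) (π : (Fin a → A) →ₗ[A] Y), ∀ y, π (s y) = g ^ e • y

variable {X Y Z : Type} [AddCommGroup X] [Module A X] [AddCommGroup Y] [Module A Y]
  [AddCommGroup Z] [Module A Z] {g : A}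

lemma GP.of_free (F : Type) [AddCommGroup F] [Module A F] [Module.Free A F] [Module.Finite A F]
    (e : ℕ) (s : Y →ₗ[A] F) (π : F →ₗ[A] Y) (h : ∀ y, π (s y) = g ^ e • y) : GP g Y := by
  let b := (Module.finBasis A F).equivFun
  exact ⟨_, e, b.toLinearMap ∘ₗ s, π ∘ₗ b.symm.toLinearMap, fun y => by simp [h]⟩

lemma GP.retract (e : ℕ) (α : Y →ₗ[A] X) (β : X →ₗ[A] Y) (h : ∀ y, β (α y) = g ^ e • y)
    (hX : GP g X) : GP g Y := by
  obtain ⟨a, e', s, π, h'⟩ := hX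
  refine ⟨a, e' + e, s ∘ₗ α, β ∘ₗ π, fun y => ?_⟩
  simp [h', h, pow_add, mul_smul]

lemma GP.equiv (e : X ≃ₗ[A] Y) (hX : GP g X) : GP g Y :=
  hX.retract 0 e.symm.toLinearMap e.toLinearMap (by simp)

lemma GP.prod (hX : GP g X) (hY : GP g Y) : GP g (X × Y) := by
  obtain ⟨a, e, s, π, h⟩ := hX
  obtain ⟨a', e', s', π', h'⟩ := hY
  refine GP.of_free ((Fin a → A) × (Fin a' → A)) (e + e') (s.prodMap s')
    ((g ^ e' • π).prodMap (g ^ e • π')) ?_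
  rintro ⟨x, y⟩
  simp [h, h', smul_smul, pow_add, mul_comm]

lemma GP.dvd {g' : A} (hd : g ∣ g') (hX : GP g X) : GP g' X := by
  obtain ⟨a, e, s, π, h⟩ := hX
  obtain ⟨c, rfl⟩ := hd
  exact ⟨a, e, s, c ^ e • π, fun y => by simp [h, smul_smul, mul_pow, mul_comm]⟩

lemma GP.lift (q : X →ₗ[A] Y) (hq : Function.Surjective q) (hY : GP g Y) :
    ∃ (e : ℕ) (σ : Y →ₗ[A] X), ∀ y, q (σ y) = g ^ e • y := by
  obtain ⟨a, e, s, π, h⟩ := hY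
  obtain ⟨t, ht⟩ := Module.projective_lifting_property q π hq
  exact ⟨e, t ∘ₗ s, fun y => by rw [LinearMap.comp_apply, ← h, ← ht]; rfl⟩

/-- pull back along injective map -/
lemma exists_pull (f : X →ₗ[A] Y) (hf : Function.Injective f) (h : Z →ₗ[A] Y)
    (hh : ∀ z, ∃ x, f x = h z) : ∃ k : Z →ₗ[A] X, ∀ z, f (k z) = h z := by
  choose k hk using hh
  refine ⟨{ toFun := k, map_add' := fun a b => hf ?_, map_smul' := fun r a => hf ?_ }, hk⟩
  · rw [map_add, hk, hk, hk, map_add]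
  · rw [RingHom.id_apply, map_smul, hk, hk, map_smul]

lemma GP.retr (f : X →ₗ[A] Y) (hf : Function.Injective f) (q : Y →ₗ[A] Z)
    (hq : Function.Surjective q) (hfq : Function.Exact f q) (hZ : GP g Z) :
    ∃ (e : ℕ) (σ : Z →ₗ[A] Y) (ρ : Y →ₗ[A] X), (∀ z, q (σ z) = g ^ e • z) ∧
      (∀ y, f (ρ y) = g ^ e • y - σ (q y)) ∧ ∀ x, ρ (f x) = g ^ e • x := by
  obtain ⟨e, σ, hσ⟩ := hZ.lift q hq
  obtain ⟨ρ, hρ⟩ := exists_pull f hf (g ^ e • LinearMap.id - σ ∘ₗ q)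
    (fun y => (hfq _).1 (by simp [hσ]))
  refine ⟨e, σ, ρ, hσ, fun y => by rw [hρ]; rfl, fun x => hf ?_⟩
  rw [hρ]
  simp [hfq.apply_apply_eq_zero]

lemma GP.ext (f : X →ₗ[A] Y) (hf : Function.Injective f) (q : Y →ₗ[A] Z)
    (hq : Function.Surjective q) (hfq : Function.Exact f q) (hX : GP g X) (hZ : GP g Z) :
    GP g Y := by
  obtain ⟨e, σ, ρ, h1, h2, -⟩ := hZ.retr f hf q hq hfq
  refine (hX.prod hZ).retract e (ρ.prod q) (f.coprod σ) (fun y => ?_)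
  simp [h2]

lemma GP.dual (hX : GP g X) : GP g (X →ₗ[A] A) := by
  obtain ⟨a, e, s, π, h⟩ := hX
  refine GP.of_free ((Fin a → A) →ₗ[A] A) e (LinearMap.lcomp A A π) (LinearMap.lcomp A A s) ?_
  intro y
  ext x
  simp [h]

lemma GP.of_zero (e : ℕ) (h : ∀ y : Y, g ^ e • y = 0) : GP g Y :=
  ⟨0, e, 0, 0, fun y => by simp [h]⟩

lemma GP.fin [IsNoetherianRing A] (M : Type) [AddCommGroup M] [Module A M] [h : Module.Finite A M] :
    ∃ g : A, g ≠ 0 ∧ GP g M := by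
  induction h using IsNoetherianRing.induction_on_isQuotientEquivQuotientPrime A with
  | subsingleton N => exact ⟨1, one_ne_zero, GP.of_zero 0 (fun y => Subsingleton.elim _ _)⟩
  | quotient N p e =>
    by_cases hp : p.asIdeal = ⊥
    · refine ⟨1, one_ne_zero, GP.equiv e.symm ?_⟩
      rw [hp]
      exact GP.of_free A 0 (Submodule.quotEquivOfEqBot _ rfl).toLinearMap
        (Submodule.quotEquivOfEqBot _ rfl).symm.toLinearMap
        (fun y => by rw [pow_zero, one_smul]; exact LinearEquiv.symm_apply_apply _ y)
    · obtain ⟨x, hx, h0⟩ := Submodule.exists_mem_ne_zero_of_ne_bot hp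
      refine ⟨x, h0, GP.equiv e.symm (GP.of_zero 1 (fun y => ?_))⟩
      obtain ⟨y, rfl⟩ := Ideal.Quotient.mk_surjective y
      rw [pow_one]
      exact Ideal.Quotient.eq_zero_iff_mem.2 (Ideal.mul_mem_right _ _ hx)
  | exact N₁ N₂ N₃ f g hf hg hfg h₁ h₃ =>
    obtain ⟨a, ha, h1⟩ := h₁
    obtain ⟨b, hb, h3⟩ := h₃
    exact ⟨a * b, mul_ne_zero ha hb, GP.ext f hf g hg hfg (h1.dvd (Dvd.intro _ rfl))
      (h3.dvd (Dvd.intro_left _ rfl))⟩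

/-- locally projective up to powers of g -/
def LL (g : A) (M : Type) [AddCommGroup M] [Module A M] : Prop :=
  ∀ s : Set M, s.Finite → ∃ Y : Submodule A M, s ⊆ Y ∧ GP g Y

lemma LL.dvd {g' : A} (hd : g ∣ g') (hX : LL g X) : LL g' X := fun s hs => by
  obtain ⟨Y, h, h'⟩ := hX s hs
  exact ⟨Y, h, h'.dvd hd⟩

lemma LL.of_GP (h : GP g X) : LL g X := fun s _ =>
  ⟨⊤, Set.subset_univ _, h.equiv Submodule.topEquiv.symm⟩

/-- sub version -/
lemma LL.sub {N : Submodule A X} (hN : LL g N) (s : Set X) (hs : s.Finite) (hsN : s ⊆ N) :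
    ∃ Y : Submodule A X, s ⊆ Y ∧ Y ≤ N ∧ GP g Y := by
  obtain ⟨Y, h, h'⟩ := hN (Subtype.val ⁻¹' s) (hs.preimage Subtype.val_injective.injOn)
  refine ⟨Y.map N.subtype, fun x hx => ⟨⟨x, hsN hx⟩, h hx, rfl⟩, Submodule.map_subtype_le _ _,
    h'.equiv (Submodule.equivMapOfInjective _ N.injective_subtype _)⟩

lemma LL.union (N : ℕ → Submodule A X) (hm : Monotone N) (hu : ∀ x, ∃ j, x ∈ N j)
    (h : ∀ j, LL g (N j)) : LL g X := fun s hs => by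
  have : ∃ j, s ⊆ N j := by
    induction s, hs using Set.Finite.induction_on with
    | empty => exact ⟨0, Set.empty_subset _⟩
    | @insert a s _ _ ih =>
      obtain ⟨j, hj⟩ := ih
      obtain ⟨k, hk⟩ := hu a
      exact ⟨j + k, Set.insert_subset (hm (Nat.le_add_left _ _) hk)
        (hj.trans (hm (Nat.le_add_right _ _)))⟩
  obtain ⟨j, hj⟩ := this
  obtain ⟨Y, h1, -, h3⟩ := (h j).sub s hs hj
  exact ⟨Y, h1, h3⟩

lemma LL.equiv (e : X ≃ₗ[A] Y) (h : LL g X) : LL g Y := fun s hs => by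
  obtain ⟨Z, h1, h2⟩ := h (e.symm '' s) (hs.image _)
  refine ⟨Z.map e.toLinearMap, fun x hx => ⟨e.symm x, h1 ⟨x, hx, rfl⟩, by simp⟩,
    h2.equiv (e.submoduleMap Z)⟩

lemma LL.retract [Module.Finite A Y] (i : Y →ₗ[A] X) (p : X →ₗ[A] Y) (hpi : ∀ y, p (i y) = y)
    (h : LL g X) : GP g Y := by
  obtain ⟨s, hs⟩ := Module.Finite.fg_top (R := A) (M := Y)
  obtain ⟨Z, h1, h2⟩ := h (i '' s) (s.finite_toSet.image _)
  have hZ : ∀ y, i y ∈ Z := by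
    intro y
    have : (⊤ : Submodule A Y) ≤ Z.comap i := by
      rw [← hs, Submodule.span_le]
      intro y hy
      exact h1 ⟨y, hy, rfl⟩
    exact this Submodule.mem_top
  exact h2.retract 0 (i.codRestrict Z hZ) (p ∘ₗ Z.subtype) (by simp [hpi])

lemma LL.ext (N : Submodule A X) (q : X →ₗ[A] Y) (hq : Function.Surjective q)
    (hN : LinearMap.ker q = N) (h1 : LL g N) (h2 : LL g Y) : LL g X := fun s hs => by
  obtain ⟨Y₀, hY₀, gY⟩ := h2 (q '' s) (hs.image _)
  obtain ⟨e, σ', hσ'⟩ := gY.lift ((q.restrict (p := Y₀.comap q) (q := Y₀) (fun x hx => hx)))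
    (fun y => by
      obtain ⟨x, hx⟩ := hq y
      exact ⟨⟨x, by rw [Submodule.mem_comap, hx]; exact y.2⟩, Subtype.ext hx⟩)
  let σ : Y₀ →ₗ[A] X := (Submodule.subtype _) ∘ₗ σ'
  have hσ : ∀ y, q (σ y) = g ^ e • (y : Y) := fun y => congrArg Subtype.val (hσ' y)
  have hσ2 : ∀ y (h : q (σ y) ∈ Y₀), σ ⟨q (σ y), h⟩ = g ^ e • σ y := fun y h => by
    rw [← map_smul]; congr 1; exact Subtype.ext (hσ y)
  let t : Set X := {x | ∃ v, ∃ hv : v ∈ s, x = g ^ e • v - σ ⟨q v, hY₀ ⟨v, hv, rfl⟩⟩}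
  have ht : t.Finite := by
    have : t = Set.range (fun v : s => g ^ e • (v : X) - σ ⟨q v, hY₀ ⟨v, v.2, rfl⟩⟩) := by
      ext x
      constructor
      · rintro ⟨v, hv, rfl⟩; exact ⟨⟨v, hv⟩, rfl⟩
      · rintro ⟨⟨v, hv⟩, rfl⟩; exact ⟨v, hv, rfl⟩
    rw [this]
    have := hs.to_subtype
    exact Set.finite_range _
  obtain ⟨X₀, hX₀, hXN, gX⟩ := h1.sub t ht (by
    rintro _ ⟨v, hv, rfl⟩
    rw [SetLike.mem_coe, ← hN, LinearMap.mem_ker, map_sub, hσ, map_smul, sub_self])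
  let V : Submodule A X := X₀ ⊔ LinearMap.range σ ⊔ Submodule.span A s
  have hV : V ≤ Y₀.comap q := by
    refine sup_le (sup_le ?_ ?_) ?_
    · intro x hx
      have : q x = 0 := by
        have := hXN hx
        rwa [← hN] at this
      rw [Submodule.mem_comap, this]
      exact zero_mem _
    · rintro _ ⟨y, rfl⟩
      rw [Submodule.mem_comap, hσ]
      exact Y₀.smul_mem _ y.2
    · rw [Submodule.span_le]
      intro v hv
      exact hY₀ ⟨v, hv, rfl⟩
  let qV : V →ₗ[A] Y₀ := q.restrict hV
  have hd : ∀ v : V, ((g ^ e • V.subtype - σ ∘ₗ qV) v) ∈ X₀ := by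
    suffices ∀ v (hv : v ∈ V), ((g ^ e • V.subtype - σ ∘ₗ qV) ⟨v, hv⟩) ∈ X₀ from fun v => this v v.2
    have : V ≤ (X₀.comap (g ^ e • V.subtype - σ ∘ₗ qV)).map V.subtype := by
      refine sup_le (sup_le ?_ ?_) ?_
      · intro x hx
        refine ⟨⟨x, Submodule.mem_sup_left (Submodule.mem_sup_left hx)⟩, ?_, rfl⟩
        have hx0 : q x = 0 := by
          have := hXN hx
          rwa [← hN] at this
        have : qV ⟨x, Submodule.mem_sup_left (Submodule.mem_sup_left hx)⟩ = 0 := Subtype.ext hx0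
        change g ^ e • x - σ (qV _) ∈ X₀
        rw [this, map_zero, sub_zero]
        exact X₀.smul_mem _ hx
      · rintro _ ⟨y, rfl⟩
        refine ⟨⟨σ y, Submodule.mem_sup_left (Submodule.mem_sup_right (LinearMap.mem_range_self σ y))⟩, ?_, rfl⟩
        change g ^ e • σ y - σ ⟨q (σ y), _⟩ ∈ X₀
        have e2 := hσ2 y (by rw [hσ]; exact Y₀.smul_mem _ y.2)
        rw [sub_eq_zero.2 e2.symm]
        exact zero_mem _
      · rw [Submodule.span_le]
        intro v hv
        exact ⟨⟨v, Submodule.mem_sup_right (Submodule.subset_span hv)⟩, hX₀ ⟨v, hv, rfl⟩, rfl⟩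
    intro v hv
    obtain ⟨w, hw, rfl⟩ := this hv
    exact hw
  refine ⟨V, fun x hx => Submodule.mem_sup_right (Submodule.subset_span hx), ?_⟩
  refine (gX.prod gY).retract e
    (((g ^ e • V.subtype - σ ∘ₗ qV).codRestrict X₀ hd).prod qV)
    ((Submodule.inclusion (le_sup_left.trans le_sup_left)).coprod
      (σ.codRestrict V (fun y => Submodule.mem_sup_left (Submodule.mem_sup_right (LinearMap.mem_range_self σ y))))) ?_
  intro v
  apply Subtype.ext
  change (g ^ e • (v : X) - σ (qV v)) + σ (qV v) = g ^ e • (v : X)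
  rw [sub_add_cancel]

end P4a
end LCB
end PartP4a

section PartP4b
namespace LCB
section P4b
variable {A : Type} [CommRing A] [IsDomain A]

/-- generic local projectivity -/
def GenProp (A : Type) [CommRing A] [IsDomain A] (B : Type) [CommRing B] [Algebra A B] : Prop :=
  ∀ (M : Type) [AddCommGroup M] [Module A M] [Module B M] [IsScalarTower A B M]
    [Module.Finite B M], ∃ g : A, g ≠ 0 ∧ LL g M

lemma genProp_base [IsNoetherianRing A] : GenProp A A := by
  intro M _ i1 i2 i3 _
  have e : i2 = i1 := by
    apply Module.ext'
    intro r m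
    have := i3.smul_assoc r (1 : A) m
    rw [smul_eq_mul, mul_one] at this
    exact this.trans (congrArg (fun z => i1.smul r z) (@one_smul A M _ i2.toMulAction m))
  subst e
  obtain ⟨g, hg, h⟩ := GP.fin (A := A) M
  exact ⟨g, hg, LL.of_GP h⟩

lemma genProp_equiv {B C : Type} [CommRing B] [Algebra A B] [CommRing C] [Algebra A C]
    (e : B ≃ₐ[A] C) (h : GenProp A B) : GenProp A C := by
  intro M _ _ _ _ _
  let _ : Module B M := Module.compHom M e.toRingHom
  have sm : ∀ (b : B) (m : M), b • m = e b • m := fun _ _ => rfl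
  have : IsScalarTower A B M := ⟨fun a b m => by rw [sm, sm, map_smul, smul_assoc]⟩
  have : Module.Finite B M := by
    obtain ⟨s, hs⟩ := Module.Finite.fg_top (R := C) (M := M)
    refine ⟨⟨s, ?_⟩⟩
    rw [eq_top_iff]
    intro m _
    have hm : m ∈ Submodule.span C (s : Set M) := hs ▸ Submodule.mem_top
    induction hm using Submodule.span_induction with
    | mem x h => exact Submodule.subset_span h
    | zero => exact zero_mem _
    | add x y _ _ hx hy => exact add_mem (hx trivial) (hy trivial)
    | smul c x _ hx =>
      have : c • x = e.symm c • x := by rw [sm, e.apply_symm_apply]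
      rw [this]
      exact Submodule.smul_mem _ _ (hx trivial)
  exact h M

section poly
variable {B : Type} [CommRing B] [Algebra A B] {M : Type} [AddCommGroup M] [Module A M] [Module B M]
  [IsScalarTower A B M]

/-- the chain -/
def Nc (x : M →ₗ[B] M) (N : Submodule B M) : ℕ → Submodule B M
  | 0 => N
  | j + 1 => Nc x N j ⊔ N.map (x ^ (j + 1))

lemma Nc_mono (x : M →ₗ[B] M) (N : Submodule B M) : Monotone (Nc x N) :=
  monotone_nat_of_le_succ (fun _ => le_sup_left)

lemma Nc_step (x : M →ₗ[B] M) (N : Submodule B M) (j : ℕ) : (Nc x N j).map x ≤ Nc x N (j+1) := by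
  induction j with
  | zero => exact le_sup_of_le_right (by
      have : x ^ (0 + 1) = x := pow_one x
      rw [this]; exact le_rfl)
  | succ j ih =>
    change Submodule.map x (_ ⊔ _) ≤ _
    rw [Submodule.map_sup]
    refine sup_le (ih.trans le_sup_left) ?_
    rw [← Submodule.map_comp]
    refine le_sup_of_le_right ?_
    rw [pow_succ' x (j+1)]
    exact le_rfl

/-- the kernels -/
def Kc (x : M →ₗ[B] M) (N : Submodule B M) (j : ℕ) : Submodule B N :=
  (Nc x N j).comap ((x ^ (j+1)) ∘ₗ N.subtype)

lemma Kc_mono (x : M →ₗ[B] M) (N : Submodule B M) : Monotone (Kc x N) :=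
  monotone_nat_of_le_succ (fun j n hn => by
    change (x ^ (j + 1 + 1)) n ∈ Nc x N (j+1)
    rw [pow_succ']
    exact Nc_step x N j ⟨_, hn, rfl⟩)

lemma Nc_LL (x : M →ₗ[B] M) (N : Submodule B M) (g : A) (h0 : LL g N)
    (h : ∀ j, LL g (N ⧸ Kc x N j)) (j : ℕ) : LL g (Nc x N j) := by
  induction j with
  | zero => exact h0
  | succ j ih =>
    let P : Submodule B (Nc x N (j+1)) := (Nc x N j).submoduleOf _
    have hx : ∀ n : N, ((x ^ (j+1)) ∘ₗ N.subtype) n ∈ Nc x N (j+1) := fun n =>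
      Submodule.mem_sup_right ⟨n, n.2, rfl⟩
    let f : N →ₗ[B] (Nc x N (j+1) ⧸ P) :=
      P.mkQ ∘ₗ ((x ^ (j+1)) ∘ₗ N.subtype).codRestrict _ hx
    have hf : Function.Surjective f := by
      intro y
      obtain ⟨⟨y, hy⟩, rfl⟩ := P.mkQ_surjective y
      obtain ⟨a, ha, b, ⟨n, hn, rfl⟩, rfl⟩ := Submodule.mem_sup.1 hy
      refine ⟨⟨n, hn⟩, ?_⟩
      refine (Submodule.Quotient.eq P).2 ?_
      have : -a ∈ Nc x N j := neg_mem ha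
      change (x ^ (j+1)) n - (a + (x ^ (j+1)) n) ∈ Nc x N j
      simpa using this
    have hk : LinearMap.ker f = Kc x N j := by
      ext n
      rw [LinearMap.mem_ker]
      change P.mkQ _ = 0 ↔ _
      rw [Submodule.mkQ_apply, Submodule.Quotient.mk_eq_zero]
      rfl
    have e : (N ⧸ Kc x N j) ≃ₗ[B] (Nc x N (j+1) ⧸ P) :=
      (Submodule.quotEquivOfEq _ _ hk.symm).trans (f.quotKerEquivOfSurjective hf)
    have h2 := (h j).equiv (e.restrictScalars A)
    refine LL.ext (P.restrictScalars A) (P.mkQ.restrictScalars A) P.mkQ_surjective ?_ ?_ h2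
    · ext z
      change P.mkQ z = 0 ↔ z ∈ P
      rw [Submodule.mkQ_apply, Submodule.Quotient.mk_eq_zero]
    · exact ih.equiv
        ((Submodule.submoduleOfEquivOfLe (Nc_mono x N (Nat.le_succ j))).symm.restrictScalars A)

lemma exists_common {ι : Type} (s : Finset ι) (P : ι → A → Prop)
    (hP : ∀ i a b, a ∣ b → P i a → P i b) (h : ∀ i ∈ s, ∃ g, g ≠ 0 ∧ P i g) :
    ∃ g : A, g ≠ 0 ∧ ∀ i ∈ s, P i g := by
  classical
  induction s using Finset.induction_on with
  | empty => exact ⟨1, one_ne_zero, by simp⟩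
  | insert a s ha ih =>
    obtain ⟨g, hg, h1⟩ := ih (fun i hi => h i (Finset.mem_insert_of_mem hi))
    obtain ⟨g', hg', h2⟩ := h a (Finset.mem_insert_self _ _)
    refine ⟨g * g', mul_ne_zero hg hg', fun i hi => ?_⟩
    rcases Finset.mem_insert.1 hi with rfl | hi
    · exact hP _ _ _ (Dvd.intro_left _ rfl) h2
    · exact hP _ _ _ (Dvd.intro _ rfl) (h1 i hi)
end poly

open Polynomial in
lemma genProp_poly {B : Type} [CommRing B] [Algebra A B] [IsNoetherianRing B]
    (h : GenProp A B) : GenProp A B[X] := by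
  intro M _ _ _ _ _
  let _ : Module B M := Module.compHom M (C : B →+* B[X])
  have sm : ∀ (b : B) (m : M), b • m = (C b : B[X]) • m := fun _ _ => rfl
  have t1 : IsScalarTower A B M := ⟨fun a b m => by rw [sm, sm, ← smul_C, smul_assoc]⟩
  have t2 : IsScalarTower B B[X] M := ⟨fun a b m => by rw [sm, smul_eq_C_mul, mul_smul]⟩
  let x : M →ₗ[B] M := (Module.toModuleEnd B (S := B[X]) M X)
  have hx : ∀ m, x m = (X : B[X]) • m := fun m => rfl
  obtain ⟨s, hs⟩ := Module.Finite.fg_top (R := B[X]) (M := M)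
  let N : Submodule B M := Submodule.span B (s : Set M)
  have fN : Module.Finite B N := Module.Finite.span_of_finite B s.finite_toSet
  have nN : IsNoetherian B N := inferInstance
  obtain ⟨J, hJ⟩ := monotone_stabilizes_iff_noetherian.2 nN ⟨Kc x N, Kc_mono x N⟩
  obtain ⟨g0, hg0, h0⟩ := h N
  obtain ⟨g1, hg1, h1⟩ := exists_common (Finset.range (J+1)) (fun j (g : A) => LL g (N ⧸ Kc x N j))
    (fun _ _ _ hd h => h.dvd hd) (fun j _ => h (N ⧸ Kc x N j))
  refine ⟨g0 * g1, mul_ne_zero hg0 hg1, ?_⟩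
  have h2 : ∀ j, LL (g0 * g1) (N ⧸ Kc x N j) := by
    intro j
    by_cases hj : j < J + 1
    · exact (h1 j (Finset.mem_range.2 hj)).dvd (Dvd.intro_left _ rfl)
    · have : Kc x N j = Kc x N J := (hJ j (by omega)).symm
      rw [this]
      exact (h1 J (by simp)).dvd (Dvd.intro_left _ rfl)
  refine LL.union (fun j => (Nc x N j).restrictScalars A) (fun i j hij => Nc_mono x N hij) ?_
    (Nc_LL x N _ (h0.dvd (Dvd.intro _ rfl)) h2)
  let U : Submodule B[X] M :=
    { carrier := {m | ∃ j, m ∈ Nc x N j}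
      add_mem' := by
        rintro a b ⟨i, hi⟩ ⟨j, hj⟩
        exact ⟨i + j, add_mem (Nc_mono x N (Nat.le_add_right _ _) hi)
          (Nc_mono x N (Nat.le_add_left _ _) hj)⟩
      zero_mem' := ⟨0, zero_mem _⟩
      smul_mem' := by
        intro p m hm
        induction p using Polynomial.induction_on' with
        | add p q hp hq =>
          obtain ⟨i, hi⟩ := hp
          obtain ⟨j, hj⟩ := hq
          rw [add_smul]
          exact ⟨i + j, add_mem (Nc_mono x N (Nat.le_add_right _ _) hi)
            (Nc_mono x N (Nat.le_add_left _ _) hj)⟩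
        | monomial n b =>
          rw [← C_mul_X_pow_eq_monomial, mul_smul, ← sm]
          have : ∃ j, ((X : B[X]) ^ n • m) ∈ Nc x N j := by
            induction n with
            | zero => simpa using hm
            | succ n ih =>
              obtain ⟨j, hj⟩ := ih
              refine ⟨j + 1, ?_⟩
              rw [pow_succ', mul_smul]
              exact Nc_step x N j ⟨_, hj, rfl⟩
          obtain ⟨j, hj⟩ := this
          exact ⟨j, Submodule.smul_mem _ _ hj⟩ }
  have hU : U = ⊤ := by
    rw [eq_top_iff, ← hs, Submodule.span_le]
    intro m hm
    exact ⟨0, Submodule.subset_span hm⟩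
  intro m
  have : m ∈ U := hU ▸ Submodule.mem_top
  exact this

lemma genProp_mv [IsNoetherianRing A] (n : ℕ) : GenProp A (MvPolynomial (Fin n) A) := by
  induction n with
  | zero => exact genProp_equiv (MvPolynomial.isEmptyAlgEquiv A (Fin 0)).symm genProp_base
  | succ n ih => 
    exact genProp_equiv ((MvPolynomial.finSuccEquiv A n).symm) (genProp_poly ih)

end P4b
end LCB
end PartP4b

section PartP4c
namespace LCB
set_option maxHeartbeats 1000000
section P4c
variable {A : Type} [CommRing A]

/-- descend along surjective map -/
lemma exists_desc {X Y Z : Type} [AddCommGroup X] [Module A X] [AddCommGroup Y] [Module A Y]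
    [AddCommGroup Z] [Module A Z] (q : X →ₗ[A] Y) (hq : Function.Surjective q) (h : X →ₗ[A] Z)
    (hh : ∀ x, q x = 0 → h x = 0) : ∃ k : Y →ₗ[A] Z, ∀ x, k (q x) = h x := by
  have hh' : ∀ x y, q x = q y → h x = h y := fun x y e => by
    rw [← sub_eq_zero, ← map_sub]; exact hh _ (by rw [map_sub, e, sub_self])
  choose k hk using hq
  refine ⟨{ toFun := fun y => h (k y), map_add' := fun a b => ?_, map_smul' := fun r a => ?_ },
    fun x => hh' _ _ (hk _)⟩
  · rw [← map_add]; exact hh' _ _ (by rw [map_add, hk, hk, hk])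
  · rw [RingHom.id_apply, ← map_smul]; exact hh' _ _ (by rw [map_smul, hk, hk])

variable {R : Type} [CommRing R] [Algebra A R] {n : ℕ} (x : Fin n → R)
  (N : Type) [AddCommGroup N] [Module R N] [Module A N] [IsScalarTower A R N]

/-- polynomial module as a module over the multivariate polynomials -/
@[nolint unusedArguments]
def PMod (_ : Fin n → R) (N : Type) [AddCommGroup N] [Module R N] : Type := PolynomialModule R N

noncomputable instance : AddCommGroup (PMod x N) := inferInstanceAs (AddCommGroup (PolynomialModule R N))
noncomputable instance : Module A (PMod x N) := inferInstanceAs (Module A (PolynomialModule R N))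

/-- the structure map -/
noncomputable def thetaM (A : Type) [CommRing A] [Algebra A R] (x : Fin n → R) :
    MvPolynomial (Fin n) A →ₐ[A] Polynomial R :=
  MvPolynomial.aeval (fun i => Polynomial.monomial 1 (x i))

noncomputable instance : Module (MvPolynomial (Fin n) A) (PMod x N) :=
  Module.compHom (PolynomialModule R N) (thetaM A x).toRingHom

/-- coefficients -/
noncomputable def cf (k : ℕ) : PMod x N →ₗ[A] N :=
  Finsupp.lapply k ∘ₗ (PolynomialModule.coeffLinearEquiv R A (M := N)).toLinearMap

/-- single -/
noncomputable def sgl (k : ℕ) : N →ₗ[A] PMod x N :=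
  (PolynomialModule.coeffLinearEquiv R A (M := N)).symm.toLinearMap ∘ₗ Finsupp.lsingle k

lemma cf_sgl (k l : ℕ) (m : N) : cf x N (A := A) l (sgl x N (A := A) k m) = if k = l then m else 0 :=
  Finsupp.single_apply

lemma pmod_ext (f f' : PMod x N) (h : ∀ k, cf x N (A := A) k f = cf x N (A := A) k f') : f = f' :=
  PolynomialModule.ext (Finsupp.ext h)

lemma sm_C (a : A) (f : PMod x N) : (MvPolynomial.C a : MvPolynomial (Fin n) A) • f = a • f := by
  change (thetaM A x (MvPolynomial.C a) • (show PolynomialModule R N from f)) = _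
  have : thetaM A x (MvPolynomial.C a) = algebraMap A _ a := (thetaM A x).commutes a
  rw [this]
  exact algebraMap_smul (M := PolynomialModule R N) (Polynomial R) a f

lemma sm_X (i : Fin n) (f : PMod x N) (k : ℕ) :
    cf x N (A := A) k ((MvPolynomial.X i : MvPolynomial (Fin n) A) • f) =
      if 1 ≤ k then x i • cf x N (A := A) (k - 1) f else 0 := by
  have : thetaM A x (MvPolynomial.X i) = Polynomial.monomial 1 (x i) := by
    rw [thetaM, MvPolynomial.aeval_X]
  change PolynomialModule.coeff (thetaM A x (MvPolynomial.X i) • (show PolynomialModule R N from f)) k = _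
  rw [this]
  exact PolynomialModule.monomial_smul_apply 1 (x i) f k

instance : IsScalarTower A (MvPolynomial (Fin n) A) (PMod x N) :=
  IsScalarTower.of_algebraMap_smul (fun a f => sm_C x N a f)

variable (I : Ideal R) (hI : I = Ideal.span (Set.range x))

/-- Rees pieces -/
noncomputable def GG (A : Type) [CommRing A] [Algebra A R] [Module A N] [IsScalarTower A R N]
    (hI : I = Ideal.span (Set.range x)) (c : ℕ) :
    Submodule (MvPolynomial (Fin n) A) (PMod x N) where
  carrier := {f | ∀ k, cf x N (A := A) k f ∈ I ^ (k + c) • (⊤ : Submodule R N)}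
  add_mem' := fun hf hg k => by rw [map_add]; exact add_mem (hf k) (hg k)
  zero_mem' := fun k => by rw [map_zero]; exact zero_mem _
  smul_mem' := fun p f hf => by
    have hx : ∀ i, x i ∈ I := fun i => by rw [hI]; exact Ideal.subset_span ⟨i, rfl⟩
    induction p using MvPolynomial.induction_on generalizing f with
    | C a =>
      intro k
      rw [sm_C, map_smul, ← algebraMap_smul R a]
      exact Submodule.smul_mem _ _ (hf k)
    | add p q hp hq =>
      intro k
      rw [add_smul, map_add]
      exact add_mem (hp f hf k) (hq f hf k)
    | mul_X p i hp =>
      rw [mul_smul]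
      refine hp _ (fun k => ?_)
      rw [sm_X]
      split_ifs with h
      · have : k + c = (k - 1 + c) + 1 := by omega
        rw [this, pow_succ', mul_smul]
        exact Submodule.smul_mem_smul (hx i) (hf (k-1))
      · exact zero_mem _

lemma mem_GG (c : ℕ) (f : PMod x N) : f ∈ GG x N I A hI c ↔
    ∀ k, cf x N (A := A) k f ∈ I ^ (k + c) • (⊤ : Submodule R N) := Iff.rfl

lemma sgl_mem (c k : ℕ) (m : N) (hm : m ∈ I ^ (k + c) • (⊤ : Submodule R N)) :
    sgl x N (A := A) k m ∈ GG x N I A hI c := by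
  intro l
  rw [cf_sgl]
  split_ifs with h
  · rwa [← h]
  · exact zero_mem _

/-- graded module -/
abbrev GrM (A : Type) [CommRing A] [Algebra A R] [Module A N] [IsScalarTower A R N]
    (hI : I = Ideal.span (Set.range x)) : Type :=
  GG x N I A hI 0 ⧸ (GG x N I A hI 1).submoduleOf (GG x N I A hI 0)

/-- graded pieces -/
abbrev VV (k : ℕ) : Type := (I ^ k • (⊤ : Submodule R N) : Submodule R N) ⧸
  (I ^ (k+1) • (⊤ : Submodule R N)).submoduleOf (I ^ k • (⊤ : Submodule R N))

/-- inclusion of pieces -/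
noncomputable def jj (A : Type) [CommRing A] [Algebra A R] [Module A N] [IsScalarTower A R N]
    (hI : I = Ideal.span (Set.range x)) (k : ℕ) :
    (I ^ k • (⊤ : Submodule R N) : Submodule R N) →ₗ[A] GrM x N I A hI :=
  ((GG x N I A hI 1).submoduleOf (GG x N I A hI 0)).mkQ.restrictScalars A ∘ₗ
    ((sgl x N (A := A) k) ∘ₗ
      (I ^ k • (⊤ : Submodule R N) : Submodule R N).subtype.restrictScalars A).codRestrict
        ((GG x N I A hI 0).restrictScalars A) (fun m => sgl_mem x N I hI 0 k m m.2)

lemma jj_apply (k : ℕ) (m : (I ^ k • (⊤ : Submodule R N) : Submodule R N)) :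
    jj x N I A hI k m = Submodule.Quotient.mk ⟨sgl x N (A := A) k m, sgl_mem x N I hI 0 k m m.2⟩ :=
  rfl

lemma jj_zero (k : ℕ) (m : (I ^ k • (⊤ : Submodule R N) : Submodule R N))
    (hm : (m : N) ∈ I ^ (k + 1) • (⊤ : Submodule R N)) : jj x N I A hI k m = 0 := by
  rw [jj_apply, Submodule.Quotient.mk_eq_zero]
  exact sgl_mem x N I hI 1 k m hm

/-- projection before descending -/
noncomputable def pk (A : Type) [CommRing A] [Algebra A R] [Module A N] [IsScalarTower A R N]
    (hI : I = Ideal.span (Set.range x)) (k : ℕ) : GG x N I A hI 0 →ₗ[A] VV N I k where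
  toFun f := Submodule.Quotient.mk ⟨cf x N (A := A) k f, f.2 k⟩
  map_add' f f' := by
    rw [← Submodule.Quotient.mk_add]
    exact congrArg Submodule.Quotient.mk (Subtype.ext (map_add _ _ _))
  map_smul' a f := by
    rw [RingHom.id_apply, ← Submodule.Quotient.mk_smul]
    exact congrArg Submodule.Quotient.mk (Subtype.ext (map_smul _ _ _))

/-- quotient map over the base -/
noncomputable def qk (A : Type) [CommRing A] [Algebra A R] [Module A N] [IsScalarTower A R N]
    (k : ℕ) : (I ^ k • (⊤ : Submodule R N) : Submodule R N) →ₗ[A] VV N I k where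
  toFun m := Submodule.Quotient.mk m
  map_add' _ _ := rfl
  map_smul' _ _ := rfl

lemma qk_surj (k : ℕ) : Function.Surjective (qk N I A k) := fun y =>
  Submodule.mkQ_surjective ((I ^ (k+1) • (⊤ : Submodule R N)).submoduleOf
    (I ^ k • (⊤ : Submodule R N))) y

lemma qk_zero (k : ℕ) (m : (I ^ k • (⊤ : Submodule R N) : Submodule R N)) :
    qk N I A k m = 0 ↔ (m : N) ∈ I ^ (k+1) • (⊤ : Submodule R N) :=
  Submodule.Quotient.mk_eq_zero ((I ^ (k+1) • (⊤ : Submodule R N)).submoduleOf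
    (I ^ k • (⊤ : Submodule R N)))

/-- quotient map over the base -/
noncomputable def qG (A : Type) [CommRing A] [Algebra A R] [Module A N] [IsScalarTower A R N]
    (hI : I = Ideal.span (Set.range x)) : GG x N I A hI 0 →ₗ[A] GrM x N I A hI where
  toFun m := Submodule.Quotient.mk m
  map_add' _ _ := rfl
  map_smul' _ _ := rfl

lemma qG_surj : Function.Surjective (qG x N I A hI) := fun y =>
  Submodule.mkQ_surjective ((GG x N I A hI 1).submoduleOf (GG x N I A hI 0)) y

lemma qG_zero (f : GG x N I A hI 0) : qG x N I A hI f = 0 ↔ (f : PMod x N) ∈ GG x N I A hI 1 :=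
  Submodule.Quotient.mk_eq_zero ((GG x N I A hI 1).submoduleOf (GG x N I A hI 0))

lemma pk_eq (k : ℕ) (f : GG x N I A hI 0) :
    pk x N I A hI k f = qk N I A k ⟨cf x N (A := A) k f, f.2 k⟩ := rfl

/-- projection -/
lemma exists_pp (k : ℕ) : ∃ p : GrM x N I A hI →ₗ[A] VV N I k,
    ∀ m : (I ^ k • (⊤ : Submodule R N) : Submodule R N),
      p (jj x N I A hI k m) = qk N I A k m := by
  obtain ⟨p, hp⟩ := exists_desc (A := A) (qG x N I A hI) (qG_surj x N I hI) (pk x N I A hI k)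
    (by
      intro f hf
      rw [pk_eq, qk_zero]
      exact (qG_zero x N I hI f).1 hf k)
  refine ⟨p, fun m => (hp ⟨sgl x N (A := A) k m, sgl_mem x N I hI 0 k m m.2⟩).trans ?_⟩
  rw [pk_eq]
  congr 1
  apply Subtype.ext
  change cf x N (A := A) k (sgl x N (A := A) k m) = m
  rw [cf_sgl, if_pos rfl]

include hI in
lemma I_smul_mem (W : Submodule R N) (m : N) (hm : m ∈ I • W) :
    ∃ w : Fin n → N, (∀ i, w i ∈ W) ∧ m = ∑ i, x i • w i := by
  induction hm using Submodule.smul_induction_on' with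
  | smul r hr m hm =>
    rw [hI, Ideal.mem_span_range_iff_exists_fun] at hr
    obtain ⟨c, rfl⟩ := hr
    refine ⟨fun i => c i • m, fun i => W.smul_mem _ hm, ?_⟩
    rw [Finset.sum_smul]
    refine Finset.sum_congr rfl (fun i _ => ?_)
    rw [mul_comm, mul_smul]
  | add a _ b _ ha hb =>
    obtain ⟨w, hw, rfl⟩ := ha
    obtain ⟨w', hw', rfl⟩ := hb
    refine ⟨w + w', fun i => add_mem (hw i) (hw' i), ?_⟩
    simp [Finset.sum_add_distrib]

variable (hRA : ∀ r : R, ∃ a : A, r - algebraMap A R a ∈ I)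

include hRA in
lemma finite_A (W : Type) [AddCommGroup W] [Module R W] [Module A W] [IsScalarTower A R W]
    [Module.Finite R W] (h : ∀ r ∈ I, ∀ w : W, r • w = 0) : Module.Finite A W := by
  obtain ⟨s, hs⟩ := Module.Finite.fg_top (R := R) (M := W)
  refine ⟨⟨s, ?_⟩⟩
  rw [eq_top_iff]
  intro m _
  have hm : m ∈ Submodule.span R (s : Set W) := hs ▸ Submodule.mem_top
  induction hm using Submodule.span_induction with
  | mem x h => exact Submodule.subset_span h
  | zero => exact zero_mem _
  | add x y _ _ hx hy => exact add_mem (hx trivial) (hy trivial)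
  | smul c x _ hx =>
    obtain ⟨a, ha⟩ := hRA c
    have : c • x = a • x := by
      rw [← algebraMap_smul R a x, ← sub_eq_zero, ← sub_smul, h _ ha]
    rw [this]
    exact Submodule.smul_mem _ _ (hx trivial)

include hRA in
lemma grM_finite [Module.Finite R N] : Module.Finite (MvPolynomial (Fin n) A) (GrM x N I A hI) := by
  obtain ⟨s, hs⟩ := Module.Finite.fg_top (R := R) (M := N)
  have h0 : ∀ m : N, m ∈ (I ^ 0 • (⊤ : Submodule R N) : Submodule R N) := fun m => by
    rw [pow_zero, Ideal.one_eq_top, Submodule.top_smul]; exact Submodule.mem_top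
  let t : Set (GrM x N I A hI) := (fun m => jj x N I A hI 0 ⟨m, h0 m⟩) '' s
  have ht : t.Finite := s.finite_toSet.image _
  let H := Submodule.span (MvPolynomial (Fin n) A) t
  have base : ∀ m : N, jj x N I A hI 0 ⟨m, h0 m⟩ ∈ H := by
    intro m
    have hm : m ∈ Submodule.span R (s : Set N) := hs ▸ Submodule.mem_top
    induction hm using Submodule.span_induction with
    | mem x h => exact Submodule.subset_span ⟨x, h, rfl⟩
    | zero =>
      have := map_zero (jj x N I A hI 0)
      exact this ▸ zero_mem H
    | add a b _ _ ha hb =>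
      have := map_add (jj x N I A hI 0) ⟨a, h0 a⟩ ⟨b, h0 b⟩
      have h2 := add_mem ha hb
      rw [← this] at h2
      exact h2
    | smul c m _ hm =>
      obtain ⟨a, ha⟩ := hRA c
      have e : (⟨c • m, h0 (c • m)⟩ : (I ^ 0 • (⊤ : Submodule R N) : Submodule R N)) =
          a • ⟨m, h0 m⟩ + ⟨(c - algebraMap A R a) • m, h0 _⟩ := by
        apply Subtype.ext
        change c • m = a • m + (c - algebraMap A R a) • m
        rw [sub_smul, algebraMap_smul, add_sub_cancel]
      rw [e, map_add, map_smul, jj_zero x N I hI 0 ⟨(c - algebraMap A R a) • m, h0 _⟩, add_zero]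
      · rw [← algebraMap_smul (MvPolynomial (Fin n) A) a]
        exact H.smul_mem _ hm
      · rw [zero_add, pow_one]
        exact Submodule.smul_mem_smul ha Submodule.mem_top
  have all : ∀ k, ∀ m : (I ^ k • (⊤ : Submodule R N) : Submodule R N), jj x N I A hI k m ∈ H := by
    intro k
    induction k with
    | zero => exact fun m => base m
    | succ k ih =>
      rintro ⟨m, hm⟩
      have hm' := hm
      rw [pow_succ', mul_smul] at hm'
      obtain ⟨w, hw, rfl⟩ := I_smul_mem x N I hI _ m hm'
      have hw2 : ∀ i, x i • w i ∈ I ^ (k + 1) • (⊤ : Submodule R N) := fun i => by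
        rw [pow_succ', mul_smul]
        refine Submodule.smul_mem_smul ?_ (hw i)
        rw [hI]; exact Ideal.subset_span ⟨i, rfl⟩
      have e : (⟨∑ i, x i • w i, hm⟩ : (I ^ (k+1) • (⊤ : Submodule R N) : Submodule R N)) =
          ∑ i, ⟨x i • w i, hw2 i⟩ := Subtype.ext (by simp)
      rw [e, map_sum]
      refine sum_mem (fun i _ => ?_)
      have : jj x N I A hI (k+1) ⟨x i • w i, hw2 i⟩ =
          (MvPolynomial.X i : MvPolynomial (Fin n) A) • jj x N I A hI k ⟨w i, hw i⟩ := by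
        rw [jj_apply, jj_apply, ← Submodule.Quotient.mk_smul]
        congr 1
        apply Subtype.ext
        apply pmod_ext (A := A)
        intro l
        refine (cf_sgl _ _ _ _ _).trans ((sm_X _ _ _ _ _).trans ?_).symm
        rw [cf_sgl]
        by_cases h : k + 1 = l
        · subst h; simp
        · rw [if_neg h]
          split_ifs with h1 h2
          · omega
          · exact smul_zero _
          · rfl
      rw [this]
      exact H.smul_mem _ (ih _)
  refine ⟨⟨ht.toFinset, ?_⟩⟩
  rw [Set.Finite.coe_toFinset, eq_top_iff]
  intro f _
  obtain ⟨⟨f, hf⟩, rfl⟩ := Submodule.mkQ_surjective _ f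
  let S : Finset ℕ := (PolynomialModule.coeff (f : PolynomialModule R N)).support
  have e : (⟨f, hf⟩ : GG x N I A hI 0) = ∑ k ∈ S, ⟨sgl x N (A := A) k (cf x N (A := A) k f),
      sgl_mem x N I hI 0 k _ (hf k)⟩ := by
    apply Subtype.ext
    rw [Submodule.coe_sum]
    apply pmod_ext (A := A)
    intro l
    rw [map_sum]
    simp only [cf_sgl]
    rw [Finset.sum_ite_eq']
    split_ifs with h
    · rfl
    · exact Finsupp.notMem_support_iff.1 h
  rw [e, map_sum]
  exact sum_mem (fun k _ => all k ⟨_, hf k⟩)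

variable [IsDomain A] [IsNoetherianRing A]
/-- all truncations are nice -/
def Good (I : Ideal R) (g : A) (N : Type) [AddCommGroup N] [Module R N] [Module A N]
    [IsScalarTower A R N] : Prop := ∀ k, GP g (N ⧸ (I ^ k • (⊤ : Submodule R N)))

lemma Good.dvd {g g' : A} (hd : g ∣ g') (h : Good I g N) : Good I g' N := fun k => (h k).dvd hd

include hRA hI in
lemma good_exists [IsNoetherianRing R] [Module.Finite R N] : ∃ g : A, g ≠ 0 ∧ Good I g N := by
  have := grM_finite x N I hI hRA
  obtain ⟨g, hg, h⟩ := genProp_mv (A := A) n (GrM x N I A hI)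
  refine ⟨g, hg, ?_⟩
  have hV : ∀ k, GP g (VV N I k) := by
    intro k
    have : Module.Finite A (VV N I k) := by
      refine finite_A I hRA _ (fun r hr w => ?_)
      obtain ⟨⟨m, hm⟩, rfl⟩ := Submodule.mkQ_surjective _ w
      refine (Submodule.Quotient.mk_eq_zero _).2 ?_
      change r • m ∈ I ^ (k+1) • (⊤ : Submodule R N)
      rw [pow_succ', mul_smul]
      exact Submodule.smul_mem_smul hr hm
    obtain ⟨p, hp⟩ := exists_pp (A := A) x N I hI k
    obtain ⟨i, hi⟩ := exists_desc (A := A) (qk N I A k) (qk_surj N I k) (jj x N I A hI k)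
      (fun m hm => jj_zero x N I hI k m ((qk_zero N I k m).1 hm))
    refine LL.retract i p (fun y => ?_) h
    obtain ⟨m, rfl⟩ := qk_surj (A := A) N I k y
    rw [hi, hp]
  intro k
  induction k with
  | zero =>
    refine GP.of_zero 0 (fun y => ?_)
    obtain ⟨m, rfl⟩ := Submodule.mkQ_surjective _ y
    have h0 : I ^ 0 • (⊤ : Submodule R N) = ⊤ := by
      rw [pow_zero, Ideal.one_eq_top, Submodule.top_smul]
    have h1 : (I ^ 0 • (⊤ : Submodule R N)).mkQ m = 0 := by
      refine (Submodule.Quotient.mk_eq_zero (I ^ 0 • (⊤ : Submodule R N))).2 ?_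
      rw [h0]
      exact Submodule.mem_top
    rw [h1, smul_zero]
  | succ k ih =>
    have hle : I ^ (k+1) • (⊤ : Submodule R N) ≤ I ^ k • (⊤ : Submodule R N) :=
      Submodule.smul_mono_left (Ideal.pow_le_pow_right (Nat.le_succ k))
    let f : VV N I k →ₗ[R] (N ⧸ I ^ (k+1) • (⊤ : Submodule R N)) :=
      Submodule.mapQ _ _ (Submodule.subtype _) (fun m hm => hm)
    let q : (N ⧸ I ^ (k+1) • (⊤ : Submodule R N)) →ₗ[R] (N ⧸ I ^ k • (⊤ : Submodule R N)) :=
      Submodule.factor hle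
    refine GP.ext (f.restrictScalars A) ?_ (q.restrictScalars A) (Submodule.factor_surjective hle)
      ?_ (hV k) ih
    · refine (injective_iff_map_eq_zero f).2 ?_
      intro y hy
      obtain ⟨m, rfl⟩ := Submodule.mkQ_surjective _ y
      refine (Submodule.Quotient.mk_eq_zero _).2 ?_
      exact (Submodule.Quotient.mk_eq_zero (I ^ (k+1) • (⊤ : Submodule R N))).1 hy
    · intro y
      obtain ⟨m, rfl⟩ := Submodule.mkQ_surjective _ y
      constructor
      · intro h
        exact ⟨Submodule.Quotient.mk ⟨m, (Submodule.Quotient.mk_eq_zero _).1 h⟩, rfl⟩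
      · rintro ⟨z, hz⟩
        obtain ⟨w, rfl⟩ := Submodule.mkQ_surjective _ z
        rw [← hz]
        exact (Submodule.Quotient.mk_eq_zero _).2 w.2

end P4c
end LCB
end PartP4c

section PartP5
open scoped TensorProduct
namespace LCB
set_option maxHeartbeats 1000000

section lev
variable {A : Type} [CommRing A] [IsDomain A]

lemma level_retract {F X Y Z : Type} [AddCommGroup F] [Module A F] [AddCommGroup X] [Module A X]
    [AddCommGroup Y] [Module A Y] [AddCommGroup Z] [Module A Z] {g : A} (hZ : GP g Z)
    (j : X →ₗ[A] F) (q : F →ₗ[A] Z) (hq : Function.Surjective q) (W : Submodule A F)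
    (π : X →ₗ[A] Y) (hker : ∀ f, q f = 0 → ∃ x, f - j x ∈ W)
    (hW : ∀ x, j x ∈ W → π x = 0) (hqW : ∀ w ∈ W, q w = 0) (hqj : ∀ x, q (j x) = 0) :
    ∃ (e : ℕ) (ρ : F →ₗ[A] Y), (∀ x, ρ (j x) = g ^ e • π x) ∧ ∀ w ∈ W, ρ w = 0 := by
  obtain ⟨e, σ, hσ⟩ := hZ.lift q hq
  let p : X × W →ₗ[A] LinearMap.ker q :=
    LinearMap.codRestrict (LinearMap.ker q) (j.coprod W.subtype)
      (fun xw => by simp [hqj, hqW _ xw.2.2])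
  have hp : Function.Surjective p := by
    rintro ⟨f, hf⟩
    obtain ⟨x, hx⟩ := hker f hf
    exact ⟨(x, ⟨_, hx⟩), Subtype.ext (by change j x + (f - j x) = f; abel)⟩
  obtain ⟨κ, hκ⟩ := exists_desc p hp (π ∘ₗ LinearMap.fst A X W) (by
    rintro ⟨x, w⟩ h
    have h' : j x + w = 0 := congrArg Subtype.val h
    refine hW x ?_
    rw [eq_neg_of_add_eq_zero_left h']
    exact W.neg_mem w.2)
  let τ : F →ₗ[A] LinearMap.ker q :=
    LinearMap.codRestrict (LinearMap.ker q) (g ^ e • LinearMap.id - σ ∘ₗ q)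
      (fun f => by simp [hσ])
  refine ⟨e, κ ∘ₗ τ, fun x => ?_, fun w hw => ?_⟩
  · have : τ (j x) = g ^ e • p (x, 0) := Subtype.ext (by
      change g ^ e • j x - σ (q (j x)) = g ^ e • (j x + (0 : F))
      rw [hqj, map_zero, sub_zero, add_zero])
    rw [LinearMap.comp_apply, this, map_smul, hκ]; simp
  · have : τ w = g ^ e • p (0, ⟨w, hw⟩) := Subtype.ext (by
      change g ^ e • w - σ (q w) = g ^ e • (j 0 + w)
      rw [hqW w hw, map_zero, map_zero, sub_zero, zero_add])
    rw [LinearMap.comp_apply, this, map_smul, hκ]; simp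

variable [IsNoetherianRing A] {R : Type} [CommRing R] [Algebra A R] (I : Ideal R)
  {F X Q : Type} [AddCommGroup F] [Module R F] [Module A F] [IsScalarTower A R F]
  [AddCommGroup X] [Module R X] [Module A X] [IsScalarTower A R X]
  [AddCommGroup Q] [Module R Q] [Module A Q] [IsScalarTower A R Q]

/-- A-linear quotient map -/
def qA (A : Type) [CommRing A] [Algebra A R] [Module A Q] [IsScalarTower A R Q] (K : Submodule R Q) :
    Q →ₗ[A] Q ⧸ K := K.mkQ.restrictScalars A

omit [IsDomain A] [IsNoetherianRing A] in
lemma qA_surj (K : Submodule R Q) : Function.Surjective (qA A K) := fun y =>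
  Submodule.mkQ_surjective K y

omit [IsDomain A] [IsNoetherianRing A] in
lemma qA_zero (K : Submodule R Q) (x : Q) : qA A K x = 0 ↔ x ∈ K :=
  Submodule.Quotient.mk_eq_zero K

lemma retr_level {g : A} (φ : X →ₗ[R] F) (q : F →ₗ[R] Q) (hq : Function.Surjective q)
    (hex : Function.Exact φ q) (hQ : Good I g Q) (m : ℕ) (K : Submodule R X)
    (hK : ∀ x, φ x ∈ I ^ m • (⊤ : Submodule R F) → x ∈ K) :
    ∃ (e : ℕ) (ρ : F →ₗ[A] X ⧸ K), (∀ x, ρ (φ x) = g ^ e • qA A K x) ∧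
      ∀ w ∈ I ^ m • (⊤ : Submodule R F), ρ w = 0 := by
  have hmap : (I ^ m • (⊤ : Submodule R Q)) = (I ^ m • (⊤ : Submodule R F)).map q := by
    rw [Submodule.map_smul'', Submodule.map_top, LinearMap.range_eq_top.2 hq]
  let qm : F →ₗ[A] Q ⧸ (I ^ m • (⊤ : Submodule R Q)) :=
    qA A (I ^ m • (⊤ : Submodule R Q)) ∘ₗ q.restrictScalars A
  have hq0 : ∀ f, qm f = 0 ↔ q f ∈ I ^ m • (⊤ : Submodule R Q) := fun f =>
    qA_zero (A := A) (I ^ m • (⊤ : Submodule R Q)) (q f)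
  have hs : Function.Surjective qm := by
    intro y
    obtain ⟨y, rfl⟩ := qA_surj (A := A) (I ^ m • (⊤ : Submodule R Q)) y
    obtain ⟨y, rfl⟩ := hq y
    exact ⟨y, rfl⟩
  have h3 : ∀ f, qm f = 0 → ∃ x, f - (φ.restrictScalars A) x ∈
      (I ^ m • (⊤ : Submodule R F)).restrictScalars A := by
    intro f hf
    rw [hq0, hmap] at hf
    obtain ⟨w, hw, hwf⟩ := hf
    have : q (f - w) = 0 := by rw [map_sub, hwf, sub_self]
    obtain ⟨x, hx⟩ := (hex _).1 this
    refine ⟨x, ?_⟩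
    change f - φ x ∈ I ^ m • (⊤ : Submodule R F)
    rw [hx]; simpa using hw
  have h4 : ∀ x, (φ.restrictScalars A) x ∈
      (I ^ m • (⊤ : Submodule R F)).restrictScalars A → qA A K x = 0 := fun x hx =>
    (qA_zero (A := A) K x).2 (hK x hx)
  have h5 : ∀ w ∈ (I ^ m • (⊤ : Submodule R F)).restrictScalars A, qm w = 0 := fun w hw => by
    rw [hq0, hmap]; exact ⟨w, hw, rfl⟩
  have h6 : ∀ x, qm ((φ.restrictScalars A) x) = 0 := fun x => by
    rw [hq0]
    change q (φ x) ∈ _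
    rw [(hex (φ x)).2 ⟨x, rfl⟩]; exact zero_mem _
  clear_value qm
  exact level_retract (hQ m) (φ.restrictScalars A) qm hs
    ((I ^ m • (⊤ : Submodule R F)).restrictScalars A) (qA A K) h3 h4 h5 h6
end lev

section alg
variable {R : Type} [CommRing R] [IsNoetherianRing R] (I : Ideal R)

lemma artin_rees {X F : Type} [AddCommGroup F] [Module R F] [Module.Finite R F]
    [AddCommGroup X] [Module R X] (φ : X →ₗ[R] F) (hφ : Function.Injective φ) (k : ℕ) :
    ∃ m, ∀ x, φ x ∈ I ^ m • (⊤ : Submodule R F) → x ∈ I ^ k • (⊤ : Submodule R X) := by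
  obtain ⟨c, hc⟩ := Ideal.exists_pow_inf_eq_pow_smul I (LinearMap.range φ)
  refine ⟨k + c, fun x hx => ?_⟩
  have h1 : φ x ∈ I ^ (k + c) • (⊤ : Submodule R F) ⊓ LinearMap.range φ := ⟨hx, x, rfl⟩
  rw [hc _ (by omega), Nat.add_sub_cancel] at h1
  have h2 : φ x ∈ I ^ k • LinearMap.range φ := Submodule.smul_mono le_rfl inf_le_right h1
  rw [LinearMap.range_eq_map, ← Submodule.map_smul''] at h2
  obtain ⟨y, hy, hxy⟩ := h2
  rwa [← hφ hxy]

lemma krull_like {W : Type} [AddCommGroup W] [Module R W] [Module.Finite R W] (γ : R) (z : W)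
    (h : ∀ k, ∃ e, γ ^ e • z ∈ I ^ k • (⊤ : Submodule R W)) :
    ∃ a, ∃ r ∈ I, γ ^ a • z = r • z := by
  let N : Submodule R W :=
    { carrier := {w | ∀ k, ∃ e, γ ^ e • w ∈ I ^ k • (⊤ : Submodule R W)}
      zero_mem' := fun k => ⟨0, by simp⟩
      add_mem' := by
        intro a b ha hb k
        obtain ⟨e, he⟩ := ha k
        obtain ⟨e', he'⟩ := hb k
        refine ⟨e + e', ?_⟩
        rw [smul_add, pow_add, mul_smul, mul_smul, smul_comm]
        exact add_mem (Submodule.smul_mem _ _ he) (Submodule.smul_mem _ _ he')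
      smul_mem' := by
        intro c a ha k
        obtain ⟨e, he⟩ := ha k
        exact ⟨e, by rw [smul_comm]; exact Submodule.smul_mem _ _ he⟩ }
  have hzN : z ∈ N := h
  obtain ⟨m, hm⟩ := artin_rees I N.subtype N.injective_subtype 1
  have key : ∀ y : N, ∃ e, γ ^ e • y ∈ I ^ 1 • (⊤ : Submodule R N) := by
    intro y
    obtain ⟨e, he⟩ := y.2 m
    exact ⟨e, hm _ he⟩
  have key2 : ∃ a, ∀ y : N, γ ^ a • y ∈ I • (⊤ : Submodule R N) := by
    obtain ⟨s, hs⟩ := Module.Finite.fg_top (R := R) (M := N)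
    choose e he using key
    refine ⟨s.sum e, fun y => ?_⟩
    have hy : y ∈ Submodule.span R (s : Set N) := by rw [hs]; exact Submodule.mem_top
    induction hy using Submodule.span_induction with
    | mem y hy =>
      obtain ⟨c, hc⟩ := Nat.exists_eq_add_of_le (Finset.single_le_sum (f := e) (fun _ _ => Nat.zero_le _) hy)
      rw [hc, add_comm, pow_add, mul_smul, ← pow_one I]
      exact Submodule.smul_mem _ _ (he y)
    | zero => simp
    | add a b _ _ ha hb => rw [smul_add]; exact add_mem ha hb
    | smul r a _ ha => rw [smul_comm]; exact Submodule.smul_mem _ _ ha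
  obtain ⟨a, ha⟩ := key2
  obtain ⟨p, hp1, -, hp3, hp4⟩ :=
    LinearMap.exists_monic_and_natDegree_eq_and_coeff_mem_pow_and_aeval_eq_zero R
      (algebraMap R (Module.End R N) (γ ^ a)) I (by
        rintro _ ⟨y, rfl⟩
        exact ha y)
  rw [Polynomial.aeval_algebraMap_apply] at hp4
  have h5 : (p.eval (γ ^ a)) • z = 0 := by
    have := congrArg Subtype.val (LinearMap.congr_fun hp4 ⟨z, hzN⟩)
    simpa [Polynomial.coe_aeval_eq_eval] using this
  rw [Polynomial.eval_eq_sum_range, Finset.sum_range_succ, hp1.coeff_natDegree, one_mul, add_smul] at h5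
  refine ⟨a * p.natDegree, -∑ x ∈ Finset.range p.natDegree, p.coeff x * (γ ^ a) ^ x,
    neg_mem (Ideal.sum_mem _ fun i hi => Ideal.mul_mem_right _ _ ?_), ?_⟩
  · have := hp3 i
    exact Ideal.pow_le_self (by simp at hi; omega) this
  · rw [pow_mul, neg_smul]
    exact eq_neg_of_add_eq_zero_right h5
end alg

section tor
variable {A : Type} [CommRing A] [IsDomain A] [IsNoetherianRing A] {R : Type} [CommRing R]
  [IsNoetherianRing R] [Algebra A R] (I : Ideal R)
  {F X Q : Type} [AddCommGroup F] [Module R F] [Module A F] [IsScalarTower A R F]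
  [AddCommGroup X] [Module R X] [Module A X] [IsScalarTower A R X]
  [AddCommGroup Q] [Module R Q] [Module A Q] [IsScalarTower A R Q] {L : Type} [AddCommGroup L]
  [Module A L]

omit [IsDomain A] [IsNoetherianRing A] in
lemma lT_exists (z : X ⊗[A] L) : ∃ P : Submodule A L, P.FG ∧ ∃ u, P.subtype.lTensor X u = z := by
  classical
  obtain ⟨P, t, ht⟩ := Module.DirectLimit.exists_of ((Submodule.FG.lTensor.directLimit A X L).symm z)
  refine ⟨P.1, P.2, t, ?_⟩
  rw [← Submodule.FG.lTensor.directLimit_apply, ht, LinearEquiv.apply_symm_apply]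

omit [IsDomain A] [IsNoetherianRing A] in
lemma lT_zero (P : Submodule A L) (hP : P.FG) (u : X ⊗[A] P) (h : P.subtype.lTensor X u = 0) :
    ∃ (P' : Submodule A L) (hPP : P ≤ P'), P'.FG ∧ (Submodule.inclusion hPP).lTensor X u = 0 := by
  classical
  rw [← Submodule.FG.lTensor.directLimit_apply' A X L P hP, LinearEquiv.map_eq_zero_iff] at h
  obtain ⟨Q, hPQ, h⟩ := Module.DirectLimit.of.zero_exact h
  exact ⟨Q.1, hPQ, Q.2, h⟩

omit [IsDomain A] [IsNoetherianRing A] [IsNoetherianRing R] in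
lemma fin_tensor [Module.Finite R X] (P : Submodule A L) (hP : P.FG) : Module.Finite R (X ⊗[A] P) := by
  have : Module.Finite A P := Module.Finite.iff_fg.2 hP
  exact Module.Finite.equiv (TensorProduct.AlgebraTensorModule.cancelBaseChange A R R X P)

omit [IsDomain A] [IsNoetherianRing A] [IsNoetherianRing R] in
lemma ker_rT (P : Type) [AddCommGroup P] [Module A P] (k : ℕ) (u : X ⊗[A] P)
    (hu : (qA A (I ^ k • (⊤ : Submodule R X))).rTensor P u = 0) :
    u ∈ I ^ k • (⊤ : Submodule R (X ⊗[A] P)) := by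
  have hex : Function.Exact (((I ^ k • (⊤ : Submodule R X)).restrictScalars A).subtype)
      (qA A (I ^ k • (⊤ : Submodule R X))) := by
    intro x
    rw [qA_zero]
    exact ⟨fun h => ⟨⟨x, h⟩, rfl⟩, fun ⟨y, hy⟩ => hy ▸ y.2⟩
  obtain ⟨v, rfl⟩ := (rTensor_exact P hex (qA_surj _) u).1 hu
  clear hu
  induction v using TensorProduct.induction_on with
  | zero => simp
  | add a b ha hb => rw [map_add]; exact add_mem ha hb
  | tmul x p =>
    obtain ⟨x, hx0⟩ := x
    change x ⊗ₜ p ∈ _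
    have hx : x ∈ I ^ k • (⊤ : Submodule R X) := hx0
    clear hx0
    induction hx using Submodule.smul_induction_on' with
    | smul r hr m hm =>
      rw [← TensorProduct.smul_tmul']
      exact Submodule.smul_mem_smul hr Submodule.mem_top
    | add a ha b hb h1 h2 => rw [TensorProduct.add_tmul]; exact add_mem h1 h2

lemma tor_class [Module.Finite R F] {g : A} (φ : X →ₗ[R] F) (hφ : Function.Injective φ)
    (q : F →ₗ[R] Q) (hq : Function.Surjective q)
    (hex : Function.Exact φ q) (hQ : Good I g Q) (z : X ⊗[A] L)
    (hz : (φ.restrictScalars A).rTensor L z = 0) : ∃ a, ∃ r ∈ I, g ^ a • z = r • z := by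
  have : Module.Finite R X := Module.Finite.of_injective φ hφ
  obtain ⟨P, hP, u, rfl⟩ := lT_exists z
  have h0 : P.subtype.lTensor F ((φ.restrictScalars A).rTensor P u) = 0 := by
    rw [← hz, ← LinearMap.comp_apply, ← LinearMap.comp_apply, LinearMap.lTensor_comp_rTensor,
      LinearMap.rTensor_comp_lTensor]
  obtain ⟨P', hPP, hP', h1⟩ := lT_zero P hP _ h0
  have := fin_tensor (R := R) (X := X) P' hP'
  set w := (Submodule.inclusion hPP).lTensor X u with hw
  have h2 : (φ.restrictScalars A).rTensor P' w = 0 := by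
    rw [← h1, hw, ← LinearMap.comp_apply, ← LinearMap.comp_apply, LinearMap.lTensor_comp_rTensor,
      LinearMap.rTensor_comp_lTensor]
  obtain ⟨a, r, hr, hzr⟩ := krull_like I (algebraMap A R g) w (by
    intro k
    obtain ⟨m, hm⟩ := artin_rees I φ hφ k
    obtain ⟨e, ρ, hρ, -⟩ := retr_level I φ q hq hex hQ m _ hm
    refine ⟨e, ker_rT I P' k _ ?_⟩
    have hc : ρ ∘ₗ φ.restrictScalars A = g ^ e • qA A (I ^ k • (⊤ : Submodule R X)) :=
      LinearMap.ext hρ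
    have h3 := congrArg (ρ.rTensor P') h2
    rw [← LinearMap.comp_apply, ← LinearMap.rTensor_comp, hc, map_zero, LinearMap.rTensor_smul] at h3
    rw [← map_pow, algebraMap_smul, map_smul]
    exact h3)
  refine ⟨a, r, hr, ?_⟩
  have hwz : P.subtype.lTensor X u = TensorProduct.AlgebraTensorModule.lTensor R X P'.subtype w := by
    rw [hw]
    change _ = P'.subtype.lTensor X _
    rw [← LinearMap.comp_apply, ← LinearMap.lTensor_comp]; rfl
  rw [hwz, ← (TensorProduct.AlgebraTensorModule.lTensor R X P'.subtype).map_smul r w, ← hzr,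
    LinearMap.map_smul, ← map_pow, algebraMap_smul]
end tor
end LCB
end PartP5

section PartP6a
open scoped TensorProduct
namespace LCB
set_option maxHeartbeats 1000000

section inj
variable {A : Type} [CommRing A] [IsDomain A]

lemma LL.inj {U V G L : Type} [AddCommGroup U] [Module A U] [AddCommGroup V] [Module A V]
    [AddCommGroup G] [Module A G] [AddCommGroup L] [Module A L] {g : A} (hG : LL g G)
    (f : U →ₗ[A] V) (hf : Function.Injective f) (q : V →ₗ[A] G) (hq : Function.Surjective q)
    (hex : Function.Exact f q) (hg : ∀ (e : ℕ) (z : L ⊗[A] U), g ^ e • z = 0 → z = 0) :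
    Function.Injective (f.lTensor L) := by
  rw [injective_iff_map_eq_zero]
  intro z hz
  obtain ⟨P, hP, u, rfl⟩ := lT_exists z
  let e : P →ₗ[A] P.map f := f.restrict (fun x hx => Submodule.mem_map_of_mem hx)
  have hc : (P.map f).subtype ∘ₗ e = f ∘ₗ P.subtype := rfl
  have h1 : (P.map f).subtype.lTensor L (e.lTensor L u) = 0 := by
    rw [← LinearMap.comp_apply, ← LinearMap.lTensor_comp, hc, LinearMap.lTensor_comp]
    exact hz
  obtain ⟨P', hPP, ⟨s, hs⟩, h2⟩ := lT_zero (P.map f) (hP.map f) _ h1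
  obtain ⟨Y, hY, gY⟩ := hG (q '' s) (s.finite_toSet.image _)
  have hPY : P' ≤ Y.comap q := by
    rw [← hs, Submodule.span_le]
    intro x hx
    exact hY ⟨x, hx, rfl⟩
  let f' : U →ₗ[A] Y.comap q := LinearMap.codRestrict _ f (fun x => by
    rw [Submodule.mem_comap, (hex (f x)).2 ⟨x, rfl⟩]; exact zero_mem _)
  let q' : Y.comap q →ₗ[A] Y := q.restrict (fun x hx => hx)
  have hf' : Function.Injective f' := fun a b h => hf (congrArg Subtype.val h)
  have hq' : Function.Surjective q' := by
    rintro ⟨y, hy⟩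
    obtain ⟨x, rfl⟩ := hq y
    exact ⟨⟨x, hy⟩, rfl⟩
  have hex' : Function.Exact f' q' := by
    rintro ⟨x, hx⟩
    constructor
    · intro h
      obtain ⟨y, hy⟩ := (hex x).1 (congrArg Subtype.val h)
      exact ⟨y, Subtype.ext hy⟩
    · rintro ⟨y, hy⟩
      refine Subtype.ext ((hex x).2 ⟨y, congrArg Subtype.val hy⟩)
  obtain ⟨c, -, ρ, -, -, hρ⟩ := gY.retr f' hf' q' hq' hex'
  have hcomp : ρ ∘ₗ Submodule.inclusion hPY ∘ₗ Submodule.inclusion hPP ∘ₗ e = g ^ c • P.subtype := by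
    ext x
    exact hρ x
  apply hg c
  have h3 := congrArg ((ρ ∘ₗ Submodule.inclusion hPY).lTensor L) h2
  rw [← LinearMap.comp_apply, ← LinearMap.comp_apply, ← LinearMap.lTensor_comp,
    ← LinearMap.lTensor_comp, map_zero] at h3
  rw [← h3]
  change _ = (LinearMap.lTensor L (ρ ∘ₗ Submodule.inclusion hPY ∘ₗ Submodule.inclusion hPP ∘ₗ e)) u
  rw [hcomp, LinearMap.lTensor_smul]; rfl

lemma LL.of_chain {X : Type} [AddCommGroup X] [Module A X] {g : A} (U : Submodule A X)
    (Y : ℕ → Submodule A X) (hm : Monotone Y) (hle : ∀ k, Y k ≤ U) (hu : ∀ x ∈ U, ∃ k, x ∈ Y k)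
    (h : ∀ k, GP g (Y k)) : LL g U :=
  LL.union (fun k => (Y k).comap U.subtype) (fun a b hab => Submodule.comap_mono (hm hab))
    (fun x => hu x x.2)
    (fun k => LL.of_GP ((h k).equiv (Submodule.comapSubtypeEquivOfLe (hle k)).symm))

end inj

section chm
variable (A : Type) [CommRing A] {R : Type} [CommRing R] [Algebra A R] (I : Ideal R)
  (X : Type) [AddCommGroup X] [Module R X] [Module A X] [IsScalarTower A R X]

/-- functionals killing a power of I -/
def CH : Submodule A (X →ₗ[A] A) where
  carrier := {f | ∃ k, ∀ x ∈ I ^ k • (⊤ : Submodule R X), f x = 0}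
  zero_mem' := ⟨0, fun _ _ => rfl⟩
  add_mem' := by
    rintro f f' ⟨k, h⟩ ⟨k', h'⟩
    refine ⟨k + k', fun x hx => ?_⟩
    rw [LinearMap.add_apply, h, h', add_zero]
    · exact Submodule.smul_mono_left (Ideal.pow_le_pow_right (by omega)) hx
    · exact Submodule.smul_mono_left (Ideal.pow_le_pow_right (by omega)) hx
  smul_mem' := by
    rintro a f ⟨k, h⟩
    exact ⟨k, fun x hx => by rw [LinearMap.smul_apply, h x hx, smul_zero]⟩

/-- as a type -/
def CHM : Type := CH A I X

instance : AddCommGroup (CHM A I X) := inferInstanceAs (AddCommGroup (CH A I X))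
instance : Module A (CHM A I X) := inferInstanceAs (Module A (CH A I X))

variable {A I X}
/-- evaluation -/
def CHM.ev : CHM A I X →ₗ[A] (X →ₗ[A] A) := (CH A I X).subtype

lemma CHM.ext {f f' : CHM A I X} (h : ∀ x, f.ev x = f'.ev x) : f = f' :=
  Subtype.ext (LinearMap.ext h)

/-- build -/
def CHM.mk (f : X →ₗ[A] A) (h : ∃ k, ∀ x ∈ I ^ k • (⊤ : Submodule R X), f x = 0) : CHM A I X := ⟨f, h⟩

@[simp] lemma CHM.ev_mk (f : X →ₗ[A] A) (h : ∃ k, ∀ x ∈ I ^ k • (⊤ : Submodule R X), f x = 0) (x : X) :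
    (CHM.mk f h).ev x = f x := rfl

lemma CHM.exists_k (f : CHM A I X) : ∃ k, ∀ x ∈ I ^ k • (⊤ : Submodule R X), f.ev x = 0 := f.2

/-- the R-action -/
def CHM.sm (r : R) (f : CHM A I X) : CHM A I X :=
  CHM.mk (f.ev ∘ₗ (LinearMap.lsmul R X r).restrictScalars A) (by
    obtain ⟨k, hk⟩ := f.exists_k
    exact ⟨k, fun x hx => hk _ (Submodule.smul_mem _ _ hx)⟩)

instance : SMul R (CHM A I X) := ⟨CHM.sm⟩

@[simp] lemma CHM.ev_smul (r : R) (f : CHM A I X) (x : X) : (r • f).ev x = f.ev (r • x) := rfl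

@[simp] lemma CHM.ev_asmul (r : A) (f : CHM A I X) (x : X) : (r • f).ev x = r • (f.ev x) := rfl

@[simp] lemma CHM.ev_add (f f' : CHM A I X) (x : X) : (f + f').ev x = f.ev x + f'.ev x := rfl
@[simp] lemma CHM.ev_zero (x : X) : (0 : CHM A I X).ev x = 0 := rfl

instance : Module R (CHM A I X) where
  one_smul f := CHM.ext fun x => by simp
  mul_smul r r' f := CHM.ext fun x => by simp [smul_smul, mul_comm]
  smul_zero r := CHM.ext fun x => by simp
  smul_add r f f' := CHM.ext fun x => by simp
  add_smul r r' f := CHM.ext fun x => by simp [add_smul]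
  zero_smul f := CHM.ext fun x => by simp

instance : IsScalarTower A R (CHM A I X) where
  smul_assoc a r f := CHM.ext fun x => by simp

variable {Y : Type} [AddCommGroup Y] [Module R Y] [Module A Y] [IsScalarTower A R Y]
/-- precomposition -/
def CHM.pre (ψ : X →ₗ[R] Y) : CHM A I Y →ₗ[A] CHM A I X where
  toFun f := CHM.mk (f.ev ∘ₗ ψ.restrictScalars A) (by
    obtain ⟨k, hk⟩ := f.exists_k
    refine ⟨k, fun x hx => hk _ ?_⟩
    have : ψ x ∈ (I ^ k • (⊤ : Submodule R X)).map ψ := ⟨x, hx, rfl⟩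
    rw [Submodule.map_smul''] at this
    exact Submodule.smul_mono le_rfl le_top this)
  map_add' f f' := rfl
  map_smul' a f := rfl

@[simp] lemma CHM.ev_pre (ψ : X →ₗ[R] Y) (f : CHM A I Y) (x : X) : (CHM.pre ψ f).ev x = f.ev (ψ x) := rfl

variable (A I X)
/-- level k -/
def Vk (k : ℕ) : Submodule A (CHM A I X) where
  carrier := {f | ∀ x ∈ I ^ k • (⊤ : Submodule R X), f.ev x = 0}
  zero_mem' := fun _ _ => rfl
  add_mem' := by
    intro f f' h h' x hx
    rw [CHM.ev_add, h x hx, h' x hx, add_zero]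
  smul_mem' := by
    intro a f h x hx
    rw [CHM.ev_asmul, h x hx, smul_zero]

variable {A I X}
lemma mem_Vk {k : ℕ} {f : CHM A I X} :
    f ∈ Vk A I X k ↔ ∀ x ∈ I ^ k • (⊤ : Submodule R X), f.ev x = 0 := Iff.rfl

lemma Vk_mono : Monotone (Vk A I X) := fun _ _ hab _ hf x hx =>
  hf x (Submodule.smul_mono_left (Ideal.pow_le_pow_right hab) hx)

variable [IsDomain A]
lemma pullK (K : Submodule R X) {Z : Type} [AddCommGroup Z] [Module A Z] (h : Z →ₗ[A] (X →ₗ[A] A))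
    (hk : ∀ z, ∀ x ∈ K, h z x = 0) :
    ∃ k : Z →ₗ[A] ((X ⧸ K) →ₗ[A] A), ∀ z x, k z (qA A K x) = h z x := by
  have hinj : Function.Injective (LinearMap.lcomp A A (qA A K)) := by
    intro a b hab
    ext y
    obtain ⟨x, rfl⟩ := qA_surj (A := A) K y
    exact LinearMap.congr_fun hab x
  obtain ⟨k, hk⟩ := exists_pull (LinearMap.lcomp A A (qA A K)) hinj h (fun z => by
    obtain ⟨k, hk'⟩ := exists_desc (qA A K) (qA_surj K) (h z)
      (fun x hx => hk z x ((qA_zero K x).1 hx))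
    exact ⟨k, LinearMap.ext hk'⟩)
  exact ⟨k, fun z x => LinearMap.congr_fun (hk z) x⟩

variable [IsNoetherianRing A] {g : A}

lemma GP_Vk (hX : Good I g X) (k : ℕ) : GP g (Vk A I X k) := by
  obtain ⟨α, hα⟩ := pullK (I ^ k • (⊤ : Submodule R X)) (CHM.ev ∘ₗ (Vk A I X k).subtype)
    (fun z x hx => z.2 x hx)
  let β : ((X ⧸ (I ^ k • (⊤ : Submodule R X))) →ₗ[A] A) →ₗ[A] Vk A I X k :=
    { toFun := fun f => ⟨CHM.mk (f ∘ₗ qA A _) ⟨k, fun x hx => by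
          rw [LinearMap.comp_apply, (qA_zero _ x).2 hx, map_zero]⟩, fun x hx => by
          rw [CHM.ev_mk, LinearMap.comp_apply, (qA_zero _ x).2 hx, map_zero]⟩
      map_add' := fun f f' => rfl
      map_smul' := fun a f => rfl }
  refine GP.retract 0 α β (fun y => ?_) (hX k).dual
  rw [pow_zero, one_smul]
  exact Subtype.ext (CHM.ext fun x => hα y x)

variable [IsNoetherianRing R] {P Q : Type} [AddCommGroup P] [Module R P] [Module A P] [IsScalarTower A R P]
  [AddCommGroup Q] [Module R Q] [Module A Q] [IsScalarTower A R Q] [Module.Finite R Q]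

/-- pushing functionals along rho -/
lemma push (K : Submodule R P) (ρ : Q →ₗ[A] P ⧸ K) (m : ℕ)
    (hρ : ∀ w ∈ I ^ m • (⊤ : Submodule R Q), ρ w = 0) {Z : Type} [AddCommGroup Z] [Module A Z]
    (h : Z →ₗ[A] (P →ₗ[A] A)) (hk : ∀ z, ∀ x ∈ K, h z x = 0) :
    ∃ α : Z →ₗ[A] Vk A I Q m, ∀ z (y : Q) (x : P) (c : A), ρ y = c • qA A K x →
      (α z : CHM A I Q).ev y = c • h z x := by
  obtain ⟨k, hk⟩ := pullK K h hk
  refine ⟨{ toFun := fun z => ⟨CHM.mk (k z ∘ₗ ρ) ⟨m, fun x hx => by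
              rw [LinearMap.comp_apply, hρ x hx, map_zero]⟩, fun x hx => by
              rw [CHM.ev_mk, LinearMap.comp_apply, hρ x hx, map_zero]⟩
            map_add' := fun f f' => ?_
            map_smul' := fun a f => ?_ }, fun z y x c hy => ?_⟩
  · exact Subtype.ext (CHM.ext fun x => by
      change k (f + f') (ρ x) = k f (ρ x) + k f' (ρ x)
      rw [map_add]; rfl)
  · exact Subtype.ext (CHM.ext fun x => by
      change k (a • f) (ρ x) = a • k f (ρ x)
      rw [map_smul]; rfl)
  · change k z (ρ y) = _
    rw [hy, map_smul, hk]

lemma exact_mkQ_range (ψ : P →ₗ[R] Q) : Function.Exact ψ (LinearMap.range ψ).mkQ := by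
  intro x; simp

lemma LL_U (ψ : P →ₗ[R] Q) (hQ : Good I g Q) (hC : Good I g (Q ⧸ LinearMap.range ψ)) :
    LL g (LinearMap.range (CHM.pre (A := A) (I := I) ψ)) := by
  refine LL.of_chain _ (fun k => (Vk A I Q k).map (CHM.pre ψ))
    (fun a b hab => Submodule.map_mono (Vk_mono hab)) (fun k => LinearMap.map_le_range) ?_ ?_
  · rintro _ ⟨f, rfl⟩
    obtain ⟨k, hk⟩ := f.exists_k
    exact ⟨k, f, hk, rfl⟩
  · intro k
    obtain ⟨e, ρ, h1, h2⟩ := retr_level I ψ (LinearMap.range ψ).mkQ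
      (Submodule.mkQ_surjective (LinearMap.range ψ)) (exact_mkQ_range ψ) hC k
      ((I ^ k • (⊤ : Submodule R Q)).comap ψ) (fun x hx => hx)
    obtain ⟨α, hα⟩ := push ((I ^ k • (⊤ : Submodule R Q)).comap ψ) ρ k h2
      (CHM.ev ∘ₗ ((Vk A I Q k).map (CHM.pre ψ)).subtype) (by
        rintro ⟨_, f, hf, rfl⟩ x hx
        exact hf _ hx)
    refine GP.retract e α ((CHM.pre ψ).restrict (fun f hf => Submodule.mem_map_of_mem hf))
      (fun y => ?_) (GP_Vk hQ k)
    exact Subtype.ext (CHM.ext fun x => hα y (ψ x) x _ (h1 x))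

lemma kill_ker (ψ : P →ₗ[R] Q) (hC : Good I g (Q ⧸ LinearMap.range ψ)) (k : ℕ) :
    ∃ e, ∀ h ∈ Vk A I P k, (∀ x, ψ x = 0 → h.ev x = 0) →
      g ^ e • h ∈ LinearMap.range (CHM.pre (A := A) (I := I) ψ) := by
  obtain ⟨m, hm⟩ := artin_rees I (LinearMap.range ψ).subtype (LinearMap.range ψ).injective_subtype k
  have hm' : ∀ x, ψ x ∈ I ^ m • (⊤ : Submodule R Q) →
      x ∈ LinearMap.ker ψ ⊔ I ^ k • (⊤ : Submodule R P) := by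
    intro x hx
    have h1 := hm ⟨ψ x, x, rfl⟩ hx
    have h2 : ψ.rangeRestrict x ∈ (I ^ k • (⊤ : Submodule R P)).map ψ.rangeRestrict := by
      rw [Submodule.map_smul'', Submodule.map_top, LinearMap.range_rangeRestrict]
      exact h1
    obtain ⟨y, hy, hxy⟩ := h2
    rw [Submodule.mem_sup]
    refine ⟨x - y, ?_, y, hy, by abel⟩
    have := congrArg Subtype.val hxy
    change ψ y = ψ x at this
    simp [this]
  obtain ⟨e, ρ, h1, h2⟩ := retr_level I ψ (LinearMap.range ψ).mkQ
      (Submodule.mkQ_surjective (LinearMap.range ψ)) (exact_mkQ_range ψ) hC m _ hm'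
  refine ⟨e, fun h hh hz => ?_⟩
  obtain ⟨α, hα⟩ := push (LinearMap.ker ψ ⊔ I ^ k • (⊤ : Submodule R P)) ρ m h2
      (LinearMap.toSpanSingleton A _ h.ev) (by
        intro z x hx
        obtain ⟨a, ha, b, hb, rfl⟩ := Submodule.mem_sup.1 hx
        rw [LinearMap.toSpanSingleton_apply, LinearMap.smul_apply, map_add, hz a ha, hh b hb]
        simp)
  refine ⟨α 1, CHM.ext fun x => ?_⟩
  rw [CHM.ev_pre, hα 1 (ψ x) x _ (h1 x)]
  simp

lemma LL_G [Module.Finite R P] (ψ : P →ₗ[R] Q) (hP : Good I g P)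
    (hB : Good I g (LinearMap.range ψ)) (hC : Good I g (Q ⧸ LinearMap.range ψ)) :
    LL g (CHM A I P ⧸ LinearMap.range (CHM.pre (A := A) (I := I) ψ)) := by
  set U := LinearMap.range (CHM.pre (A := A) (I := I) ψ) with hU
  refine (LL.of_chain (⊤ : Submodule A (CHM A I P ⧸ U)) (fun k => (Vk A I P k).map U.mkQ)
    (fun a b hab => Submodule.map_mono (Vk_mono hab)) (fun k => le_top) ?_ ?_).equiv
      Submodule.topEquiv
  · intro x _
    obtain ⟨f, rfl⟩ := U.mkQ_surjective x
    obtain ⟨k, hk⟩ := f.exists_k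
    exact ⟨k, f, hk, rfl⟩
  · intro k
    obtain ⟨e', he'⟩ := kill_ker (I := I) ψ hC k
    obtain ⟨e, ρ, h1, h2⟩ := retr_level I (LinearMap.ker ψ).subtype ψ.rangeRestrict
      ψ.surjective_rangeRestrict (by
        intro x
        simp [Subtype.ext_iff]) hB k
      ((I ^ k • (⊤ : Submodule R P)).comap (LinearMap.ker ψ).subtype) (fun x hx => hx)
    obtain ⟨α, hα⟩ := push ((I ^ k • (⊤ : Submodule R P)).comap (LinearMap.ker ψ).subtype) ρ k h2
      (LinearMap.lcomp A A ((LinearMap.ker ψ).subtype.restrictScalars A) ∘ₗ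
        CHM.ev ∘ₗ (Vk A I P k).subtype) (fun z x hx => z.2 _ hx)
    let qk : Vk A I P k →ₗ[A] (Vk A I P k).map U.mkQ :=
      U.mkQ.restrict (fun f hf => Submodule.mem_map_of_mem hf)
    have hqk : Function.Surjective qk := by
      rintro ⟨_, f, hf, rfl⟩
      exact ⟨⟨f, hf⟩, rfl⟩
    obtain ⟨α', hα'⟩ := exists_desc qk hqk α (by
      rintro ⟨f, hf⟩ h0
      have h0 : f ∈ U := (Submodule.Quotient.mk_eq_zero U).1 (congrArg Subtype.val h0)
      obtain ⟨f', rfl⟩ := h0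
      refine Subtype.ext (CHM.ext fun x => ?_)
      obtain ⟨y, hy⟩ := qA_surj (A := A) ((I ^ k • (⊤ : Submodule R P)).comap
        (LinearMap.ker ψ).subtype) (ρ x)
      rw [hα _ x y 1 (by rw [hy, one_smul]), one_smul]
      change f'.ev (ψ y) = 0
      rw [y.2, map_zero])
    refine GP.retract (e' + e) α' (g ^ e' • qk) (fun y => ?_) (GP_Vk hP k)
    obtain ⟨f, rfl⟩ := hqk y
    rw [hα']
    refine Subtype.ext ?_
    change g ^ e' • U.mkQ (α f) = g ^ (e' + e) • U.mkQ f
    rw [pow_add, mul_smul, ← map_smul, ← map_smul, ← map_smul, ← sub_eq_zero, ← map_sub, ← smul_sub]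
    refine (Submodule.Quotient.mk_eq_zero U).2 (he' _ ?_ ?_)
    · exact sub_mem (α f).2 (Submodule.smul_mem _ _ f.2)
    · intro x hx
      have := hα f x ⟨x, hx⟩ _ (h1 ⟨x, hx⟩)
      rw [map_sub, LinearMap.sub_apply, this, CHM.ev_asmul]
      exact sub_self _
end chm
end LCB
end PartP6a

section PartP6b
open scoped TensorProduct
namespace LCB
set_option maxHeartbeats 1000000

section theta
variable (A : Type) [CommRing A] {R : Type} [CommRing R] [Algebra A R] (I : Ideal R)

/-- pairing -/
noncomputable def dotL (p : ℕ) (v : Fin p → R) : (Fin p → R) →ₗ[R] R where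
  toFun w := dotProduct v w
  map_add' := dotProduct_add v
  map_smul' r w := by simp [dotProduct_smul]

/-- pairing as linear map -/
noncomputable def theta0 (p : ℕ) : (Fin p → R) →ₗ[R] CHM A I R →ₗ[R] CHM A I (Fin p → R) :=
  LinearMap.mk₂ R (fun v d => CHM.pre (dotL p v) d)
    (fun v v' d => CHM.ext fun w => by
      change d.ev (dotProduct (v + v') w) = d.ev (dotProduct v w) + d.ev (dotProduct v' w)
      rw [add_dotProduct, map_add])
    (fun r v d => CHM.ext fun w => by
      change d.ev (dotProduct (r • v) w) = d.ev (dotProduct v (r • w))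
      rw [smul_dotProduct, dotProduct_smul])
    (fun v d d' => rfl)
    (fun r v d => CHM.ext fun w => by
      change d.ev (r • dotProduct v w) = d.ev (dotProduct v (r • w))
      rw [dotProduct_smul])

noncomputable def theta (p : ℕ) : (Fin p → R) ⊗[R] CHM A I R →ₗ[R] CHM A I (Fin p → R) :=
  TensorProduct.lift (theta0 A I p)

lemma theta_tmul (p : ℕ) (v : Fin p → R) (d : CHM A I R) (w : Fin p → R) :
    (theta A I p (v ⊗ₜ d)).ev w = d.ev (dotProduct v w) := rfl

noncomputable def thetaInv (p : ℕ) (f : CHM A I (Fin p → R)) : (Fin p → R) ⊗[R] CHM A I R :=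
  ∑ i, Pi.single i 1 ⊗ₜ CHM.pre (LinearMap.single R (fun _ : Fin p => R) i) f

lemma ev_sum {X : Type} [AddCommGroup X] [Module R X] [Module A X] [IsScalarTower A R X]
    {ι : Type} (s : Finset ι) (f : ι → CHM A I X) (x : X) : (∑ i ∈ s, f i).ev x = ∑ i ∈ s, (f i).ev x := by
  rw [map_sum, LinearMap.sum_apply]

lemma theta_inv (p : ℕ) (f : CHM A I (Fin p → R)) : theta A I p (thetaInv A I p f) = f := by
  refine CHM.ext fun w => ?_
  rw [thetaInv, map_sum, ev_sum]
  simp only [theta_tmul, CHM.ev_pre, single_one_dotProduct, LinearMap.coe_single]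
  rw [← map_sum, Finset.univ_sum_single]

lemma inv_theta (p : ℕ) (z : (Fin p → R) ⊗[R] CHM A I R) : thetaInv A I p (theta A I p z) = z := by
  have hadd : ∀ f f', thetaInv A I p (f + f') = thetaInv A I p f + thetaInv A I p f' := by
    intro f f'
    simp only [thetaInv, map_add, TensorProduct.tmul_add, Finset.sum_add_distrib]
  induction z using TensorProduct.induction_on with
  | zero => simp [thetaInv]
  | add a b ha hb => rw [map_add, hadd, ha, hb]
  | tmul v d =>
    have : ∀ i, CHM.pre (LinearMap.single R (fun _ : Fin p => R) i) (theta A I p (v ⊗ₜ d)) = v i • d := by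
      intro i
      refine CHM.ext fun r => ?_
      rw [CHM.ev_pre, theta_tmul, CHM.ev_smul, LinearMap.coe_single, dotProduct_single]; rfl
    simp only [thetaInv, this]
    conv_rhs => rw [pi_eq_sum_univ' v, TensorProduct.sum_tmul]
    refine Finset.sum_congr rfl fun i _ => ?_
    rw [TensorProduct.tmul_smul, TensorProduct.smul_tmul']

noncomputable def thetaE (p : ℕ) : ((Fin p → R) ⊗[R] CHM A I R) ≃ₗ[A] CHM A I (Fin p → R) :=
  { (theta A I p).restrictScalars A with
    invFun := thetaInv A I p
    left_inv := inv_theta A I p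
    right_inv := theta_inv A I p }

lemma thetaE_apply (p : ℕ) (z : (Fin p → R) ⊗[R] CHM A I R) : thetaE A I p z = theta A I p z := rfl

lemma exists_transpose {p q : ℕ} (φ : (Fin q → R) →ₗ[R] (Fin p → R)) :
    ∃ ψ : (Fin p → R) →ₗ[R] (Fin q → R), ∀ z, theta A I p (φ.rTensor _ z) = CHM.pre ψ (theta A I q z) := by
  refine ⟨(LinearMap.toMatrix' φ).transpose.toLin', fun z => ?_⟩
  induction z using TensorProduct.induction_on with
  | zero => simp
  | add a b ha hb => simp only [map_add, ha, hb]
  | tmul v d =>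
    refine CHM.ext fun w => ?_
    rw [LinearMap.rTensor_tmul, theta_tmul, CHM.ev_pre, theta_tmul, Matrix.toLin'_apply,
      Matrix.dotProduct_mulVec, Matrix.vecMul_transpose, LinearMap.toMatrix'_mulVec]

variable [IsDomain A] [IsNoetherianRing A] [IsNoetherianRing R]
  {X : Type} [AddCommGroup X] [Module R X] [Module A X] [IsScalarTower A R X]

/-- A-linear version -/
noncomputable def muA (A : Type) [CommRing A] [Algebra A R] [Module A X] [IsScalarTower A R X]
    {Y : Type} [AddCommGroup Y] [Module R Y] [Module A Y] [IsScalarTower A R Y]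
    (D : Type) [AddCommGroup D] [Module R D] (j : X →ₗ[R] Y) :
    X ⊗[R] D →ₗ[A] Y ⊗[R] D := (j.rTensor D).restrictScalars A

lemma exists_LL {n : ℕ} (x : Fin n → R) (hI : I = Ideal.span (Set.range x))
    (hRA : ∀ r : R, ∃ a : A, r - algebraMap A R a ∈ I) {p q : ℕ} (s : (Fin q → R) →ₗ[R] X)
    (hs : Function.Surjective s) (j : X →ₗ[R] (Fin p → R)) :
    ∃ g : A, g ≠ 0 ∧ LL g (LinearMap.range (muA A (CHM A I R) j)) ∧
      LL g (((Fin p → R) ⊗[R] CHM A I R) ⧸ LinearMap.range (muA A (CHM A I R) j)) := by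
  obtain ⟨ψ, hψ⟩ := exists_transpose A I (j ∘ₗ s)
  obtain ⟨g1, h1, G1⟩ := good_exists x (Fin p → R) I hI hRA
  obtain ⟨g2, h2, G2⟩ := good_exists x (Fin q → R) I hI hRA
  obtain ⟨g3, h3, G3⟩ := good_exists x (LinearMap.range ψ) I hI hRA
  obtain ⟨g4, h4, G4⟩ := good_exists x ((Fin q → R) ⧸ LinearMap.range ψ) I hI hRA
  have hmap : (LinearMap.range (muA A (CHM A I R) j)).map (thetaE A I p).toLinearMap =
      LinearMap.range (CHM.pre (A := A) (I := I) ψ) := by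
    ext f
    constructor
    · rintro ⟨_, ⟨z, rfl⟩, rfl⟩
      obtain ⟨z, rfl⟩ := LinearMap.rTensor_surjective (CHM A I R) hs z
      refine ⟨theta A I q z, ?_⟩
      rw [← hψ, LinearMap.rTensor_comp]; rfl
    · rintro ⟨f, rfl⟩
      refine ⟨_, ⟨s.rTensor _ (thetaInv A I q f), rfl⟩, ?_⟩
      conv_rhs => rw [← theta_inv A I q f]
      rw [← hψ, LinearMap.rTensor_comp]; rfl
  have d2 : g2 ∣ g1 * g2 * g3 * g4 := ⟨g1 * g3 * g4, by ring⟩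
  have d1 : g1 ∣ g1 * g2 * g3 * g4 := ⟨g2 * g3 * g4, by ring⟩
  have d3 : g3 ∣ g1 * g2 * g3 * g4 := ⟨g1 * g2 * g4, by ring⟩
  have d4 : g4 ∣ g1 * g2 * g3 * g4 := ⟨g1 * g2 * g3, by ring⟩
  refine ⟨g1 * g2 * g3 * g4, by simp [h1, h2, h3, h4], ?_, ?_⟩
  · have := LL_U ψ (G2.dvd _ _ d2) (G4.dvd _ _ d4)
    rw [← hmap] at this
    exact this.equiv ((thetaE A I p).submoduleMap _).symm
  · have := LL_G ψ (G1.dvd _ _ d1) (G3.dvd _ _ d3) (G4.dvd _ _ d4)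
    exact this.equiv (Submodule.Quotient.equiv _ _ (thetaE A I p) hmap).symm
end theta

section ker
variable {A : Type} [CommRing A] [IsDomain A] {X V L : Type} [AddCommGroup X] [Module A X]
  [AddCommGroup V] [Module A V] [AddCommGroup L] [Module A L]

lemma ker_bc {g : A} (μ : X →ₗ[A] V) (h1 : LL g (LinearMap.range μ))
    (h2 : LL g (V ⧸ LinearMap.range μ))
    (hL : ∀ (Y : Type) [AddCommGroup Y] [Module A Y] (e : ℕ) (z : L ⊗[A] Y), g ^ e • z = 0 → z = 0) :
    Function.Injective ((LinearMap.ker μ).subtype.lTensor L) ∧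
      Function.Exact ((LinearMap.ker μ).subtype.lTensor L) (μ.lTensor L) := by
  have ex1 : Function.Exact (LinearMap.ker μ).subtype μ.rangeRestrict := by
    intro x; simp [Subtype.ext_iff]
  refine ⟨h1.inj _ (Submodule.injective_subtype _) μ.rangeRestrict μ.surjective_rangeRestrict ex1
    (hL _), ?_⟩
  have i2 := h2.inj (LinearMap.range μ).subtype (Submodule.injective_subtype _)
    (LinearMap.range μ).mkQ (Submodule.mkQ_surjective _) (by intro x; simp) (hL _)
  have ex2 := lTensor_exact L ex1 μ.surjective_rangeRestrict
  intro z
  rw [← ex2 z]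
  have : μ.lTensor L z = (LinearMap.range μ).subtype.lTensor L (μ.rangeRestrict.lTensor L z) := by
    rw [← LinearMap.comp_apply, ← LinearMap.lTensor_comp]; rfl
  rw [this]
  exact map_eq_zero_iff _ i2
end ker
end LCB
end PartP6b

section PartP7a
open scoped TensorProduct
namespace LCB
set_option maxHeartbeats 1000000

section HRgen
lemma HR_gen {S ι : Type} [CommRing S] (X : ι → S) (τ : ι → ℕ → S →+ S)
    (h1 : ∀ j k s, τ j k (X j ^ k * s) = s)
    (h2 : ∀ i j k s, i ≠ j → τ j k (X i ^ k * s) = X i ^ k * τ j k s) (is : List ι) (hn : is.Nodup) :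
    HR (is.map X) := by
  induction is with
  | nil => trivial
  | cons j is ih =>
    rw [List.nodup_cons] at hn
    refine ⟨ih hn.2, fun k r hr => ?_⟩
    have key : ∀ is : List ι, j ∉ is → ∀ s ∈ aI (is.map X) k, τ j k s ∈ aI (is.map X) k := by
      intro is
      induction is with
      | nil => intro _ s hs; rw [show s = 0 from hs, map_zero]; exact zero_mem _
      | cons i is ih =>
        intro hj s hs
        rw [List.mem_cons, not_or] at hj
        obtain ⟨a, ha, b, hb, rfl⟩ := Submodule.mem_sup.1 hs
        obtain ⟨c, rfl⟩ := Ideal.mem_span_singleton'.1 ha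
        rw [map_add, mul_comm, h2 i j k c (Ne.symm hj.1)]
        exact add_mem (Ideal.mem_sup_left (Ideal.mul_mem_right _ _ (Ideal.mem_span_singleton_self _)))
          (Ideal.mem_sup_right (ih hj.2 b hb))
    have := key is hn.1 _ hr
    rwa [h1] at this
end HRgen

section ps
variable (n : ℕ) (A : Type) [CommRing A]

abbrev PS := MvPowerSeries (Fin n) A

open MvPowerSeries Finsupp

/-- shift -/
noncomputable def shift (j : Fin n) (k : ℕ) : PS n A →ₗ[A] PS n A where
  toFun f := fun m => coeff (m + single j k) f
  map_add' f f' := by ext m; rfl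
  map_smul' a f := by ext m; rfl

lemma coeff_shift (j : Fin n) (k : ℕ) (f : PS n A) (m) : coeff m (shift n A j k f) = coeff (m + single j k) f := rfl

lemma shift1 (j k) (f : PS n A) : shift n A j k ((X j : PS n A) ^ k * f) = f := by
  ext m
  rw [coeff_shift, X_pow_eq, add_comm, coeff_add_monomial_mul, one_mul]

lemma shift2 (i j : Fin n) (k) (f : PS n A) (h : i ≠ j) :
    shift n A j k ((X i : PS n A) ^ k * f) = X i ^ k * shift n A j k f := by
  ext m
  rw [coeff_shift, X_pow_eq, coeff_monomial_mul, coeff_monomial_mul, coeff_shift]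
  have h1 : single i k ≤ m + single j k ↔ single i k ≤ m := by
    rw [single_le_iff, single_le_iff]
    simp [single_apply, Ne.symm h]
  simp only [h1]
  split_ifs with h2
  · rw [tsub_add_eq_add_tsub h2]
  · rfl

/-- the list of variables -/
noncomputable def xl : List (PS n A) := (List.finRange n).map X

lemma HR_R : HR (xsS (PS n A) (xl n A)) := by
  have : xsS (PS n A) (xl n A) = (List.finRange n).map X := by
    rw [xsS, xl, List.map_map]; rfl
  rw [this]
  exact HR_gen X (fun j k => (shift n A j k).toAddMonoidHom) (shift1 n A) (shift2 n A) _
    (List.nodup_finRange n)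

lemma HR_S (L : Type) [CommRing L] [Algebra A L] : HR (xsS (PS n A ⊗[A] L) (xl n A)) := by
  have : xsS (PS n A ⊗[A] L) (xl n A) = (List.finRange n).map
      (fun i => (X i : PS n A) ⊗ₜ[A] (1 : L)) := by
    rw [xsS, xl, List.map_map]; rfl
  rw [this]
  refine HR_gen _ (fun j k => ((shift n A j k).rTensor L).toAddMonoidHom) ?_ ?_ _ (List.nodup_finRange n)
  · intro j k s
    change (shift n A j k).rTensor L _ = s
    induction s using TensorProduct.induction_on with
    | zero => simp
    | add a b ha hb => rw [mul_add, map_add, ha, hb]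
    | tmul r l =>
      rw [Algebra.TensorProduct.tmul_pow, Algebra.TensorProduct.tmul_mul_tmul, LinearMap.rTensor_tmul,
        shift1, one_pow, one_mul]
  · intro i j k s hij
    change (shift n A j k).rTensor L _ = _ * (shift n A j k).rTensor L _
    induction s using TensorProduct.induction_on with
    | zero => simp
    | add a b ha hb => rw [mul_add, map_add, ha, hb, map_add, mul_add]
    | tmul r l =>
      rw [Algebra.TensorProduct.tmul_pow, Algebra.TensorProduct.tmul_mul_tmul, LinearMap.rTensor_tmul,
        shift2 _ _ _ _ _ _ hij, LinearMap.rTensor_tmul, Algebra.TensorProduct.tmul_mul_tmul]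

variable {n A}
lemma mem_aI_iff' (is : List (Fin n)) (k : ℕ) (r : PS n A) :
    r ∈ aI (is.map X) k ↔ ∀ m : Fin n →₀ ℕ, (∀ i ∈ is, m i < k) → coeff m r = 0 := by
  classical
  induction is generalizing r with
  | nil =>
    change r = 0 ↔ _
    rw [MvPowerSeries.ext_iff]
    simp
  | cons j is ih =>
    constructor
    · intro h m hm
      obtain ⟨a, ha, b, hb, rfl⟩ := Submodule.mem_sup.1 h
      obtain ⟨c, rfl⟩ := Ideal.mem_span_singleton'.1 ha
      rw [map_add, (ih b).1 hb m (fun i hi => hm i (List.mem_cons_of_mem _ hi)), add_zero, X_pow_eq,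
        coeff_mul_monomial, if_neg]
      rw [single_le_iff]
      have := hm j List.mem_cons_self
      omega
    · intro h
      let b : PS n A := fun m => if m j < k then coeff m r else 0
      have hb : ∀ m, coeff m b = if m j < k then coeff m r else 0 := fun m => rfl
      have hr : r = X j ^ k * shift n A j k r + b := by
        ext m
        rw [map_add, hb, X_pow_eq, coeff_monomial_mul, coeff_shift]
        by_cases hm : m j < k
        · rw [if_pos hm, if_neg, zero_add]
          rw [single_le_iff]; omega
        · have : single j k ≤ m := by rw [single_le_iff]; omega
          rw [if_neg hm, if_pos this, one_mul, add_zero, tsub_add_cancel_of_le this]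
      rw [hr]
      refine add_mem (Ideal.mem_sup_left (Ideal.mul_mem_right _ _ (Ideal.mem_span_singleton_self _)))
          (Ideal.mem_sup_right ((ih b).2 fun m hm => ?_))
      rw [hb]
      split_ifs with hj
      · exact h m (by
          intro i hi
          rcases List.mem_cons.1 hi with rfl | hi
          · exact hj
          · exact hm i hi)
      · rfl

lemma mem_aI_iff (k : ℕ) (r : PS n A) :
    r ∈ aI (xl n A) k ↔ ∀ m : Fin n →₀ ℕ, (∀ i, m i < k) → coeff m r = 0 := by
  rw [xl, mem_aI_iff']
  simp

variable (n A) in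
/-- the ideal of variables -/
noncomputable def IX : Ideal (PS n A) := Ideal.span (Set.range (X : Fin n → PS n A))

lemma IX_eq : Ideal.span {x | x ∈ xl n A} = IX n A := by
  rw [IX]
  congr 1
  ext x
  simp [xl]

variable (n) in
/-- constant exponent -/
noncomputable def cst (k : ℕ) : Fin n →₀ ℕ := Finsupp.equivFunOnFinite.symm (fun _ => k)

@[simp] lemma cst_apply (k : ℕ) (i : Fin n) : cst n k i = k := rfl

variable (n A) in
/-- the generating functionals -/
noncomputable def u0 (k : ℕ) : PS n A →ₗ[A] A :=
  open Classical in if ∀ _ : Fin n, 0 < k then coeff (cst n (k - 1)) else 0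

lemma u0_kill (k : ℕ) (r : PS n A) (hr : r ∈ aI (xl n A) k) : u0 n A k r = 0 := by
  rw [u0]
  split_ifs with h
  · refine (mem_aI_iff k r).1 hr _ (fun i => ?_)
    have := h i
    simp; omega
  · rfl

variable (n A) in
noncomputable def uu (k : ℕ) : CHM A (IX n A) (PS n A) := CHM.mk (u0 n A k) (by
  obtain ⟨l, hl⟩ := le_aI (xl n A) k
  refine ⟨l, fun x hx => u0_kill k x (hl ?_)⟩
  rw [IX_eq]
  simpa using hx)

lemma prod_xl : (xl n A).prod = monomial (cst n 1) 1 := by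
  classical
  rw [xl, ← Fin.prod_univ_def]
  have : ∀ s : Finset (Fin n), ∏ i ∈ s, (X i : PS n A) = monomial (∑ i ∈ s, single i 1) 1 := by
    intro s
    induction s using Finset.induction_on with
    | empty => simp
    | insert a s ha ih =>
      rw [Finset.prod_insert ha, Finset.sum_insert ha, ih, X_def, monomial_mul_monomial, one_mul]
  rw [this]
  congr 2
  ext i
  simp [Finsupp.finset_sum_apply, single_apply]

lemma uu_ann (k : ℕ) (r : PS n A) (h : r • uu n A k = 0) : r ∈ aI (xl n A) k := by
  rw [mem_aI_iff]
  intro m hm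
  have h1 : ∀ s, u0 n A k (r * s) = 0 := fun s => by
    have : (r • uu n A k).ev s = 0 := by rw [h]; rfl
    exact this
  have hk : ∀ _ : Fin n, 0 < k := fun i => by have := hm i; omega
  have h2 := h1 (monomial (cst n (k-1) - m) 1)
  have hle : m ≤ cst n (k - 1) := fun i => by have := hm i; simp; omega
  rw [u0, if_pos hk, coeff_mul_monomial, if_pos tsub_le_self, mul_one, tsub_tsub_cancel_of_le hle] at h2
  exact h2

lemma uu_gen (d : CHM A (IX n A) (PS n A)) : ∃ (k : ℕ) (r : PS n A), d = r • uu n A k := by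
  classical
  obtain ⟨k, hk⟩ := d.exists_k
  let c := cst n k
  have hu : u0 n A (k+1) = coeff c := by
    rw [u0, if_pos (fun _ => Nat.succ_pos _)]; rfl
  have hd : ∀ s ∈ aI (xl n A) (k+1), d.ev s = 0 := by
    intro s hs
    apply hk
    have := aI_le (xl n A) (k+1) hs
    rw [IX_eq] at this
    simpa using Ideal.pow_le_pow_right (Nat.le_succ k) this
  let r : PS n A := fun m => if m ≤ c then d.ev (monomial (c - m) 1) else 0
  have hr : ∀ m, coeff m r = if m ≤ c then d.ev (monomial (c - m) 1) else 0 := fun m => rfl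
  refine ⟨k + 1, r, CHM.ext fun s => ?_⟩
  let t : PS n A := ∑ m ∈ Finset.Iic c, monomial m (coeff m s)
  have ht : s - t ∈ aI (xl n A) (k+1) := by
    rw [mem_aI_iff]
    intro m hm
    have hmc : m ∈ Finset.Iic c := Finset.mem_Iic.2 fun i => by have := hm i; simp [c]; omega
    rw [map_sub, map_sum]
    simp only [coeff_monomial]
    rw [Finset.sum_ite_eq, if_pos hmc, sub_self]
  have h1 : d.ev s = d.ev t := by
    rw [← sub_eq_zero, ← map_sub]; exact hd _ ht
  have h2 : (r • uu n A (k+1)).ev s = (r • uu n A (k+1)).ev t := by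
    rw [← sub_eq_zero, ← map_sub]
    exact u0_kill (k+1) _ (Ideal.mul_mem_left _ r ht)
  rw [h1, h2, map_sum, map_sum]
  refine Finset.sum_congr rfl fun m hm => ?_
  have hm : m ≤ c := Finset.mem_Iic.1 hm
  change _ = u0 n A (k+1) (r * monomial m (coeff m s))
  rw [hu, coeff_mul_monomial, if_pos hm, hr, if_pos tsub_le_self, tsub_tsub_cancel_of_le hm, mul_comm,
    ← smul_eq_mul, ← map_smul]
  congr 1
  ext m'
  simp [coeff_monomial]

variable (n A) in
lemma dsys : DSys (xl n A) (CHM A (IX n A) (PS n A)) (uu n A) where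
  step k := by
    refine CHM.ext fun s => ?_
    change u0 n A (k+1) ((xl n A).prod * s) = u0 n A k s
    rw [prod_xl, u0, if_pos (fun _ => Nat.succ_pos _), coeff_monomial_mul, u0]
    have : (cst n 1 ≤ cst n (k + 1 - 1)) ↔ ∀ _ : Fin n, 0 < k :=
      ⟨fun h i => h i, fun h i => h i⟩
    simp only [this]
    split_ifs with h
    · rw [one_mul]
      congr 2
      ext i
      simp
    · rfl
  kill k r hr := CHM.ext fun s => u0_kill k _ (Ideal.mul_mem_right s _ hr)
  ann := uu_ann
  gen := uu_gen

lemma IX_res (r : PS n A) : ∃ a : A, r - algebraMap A (PS n A) a ∈ IX n A := by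
  refine ⟨coeff 0 r, ?_⟩
  have h1 : r - algebraMap A (PS n A) (coeff 0 r) ∈ aI (xl n A) 1 := by
    rw [mem_aI_iff]
    intro m hm
    have : m = 0 := by ext i; have := hm i; simp; omega
    subst this
    rw [map_sub]
    simp [MvPowerSeries.algebraMap_apply]
  have := aI_le (xl n A) 1 h1
  rwa [IX_eq, pow_one] at this
end ps
end LCB
end PartP7a

section PartP7b
open scoped TensorProduct
namespace LCB
set_option maxHeartbeats 1000000

section hseq
open CategoryTheory
variable {S : Type} [CommRing S]

/-- short complex of linear maps -/
noncomputable abbrev scx {X Y Z : Type} [AddCommGroup X] [Module S X] [AddCommGroup Y] [Module S Y]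
    [AddCommGroup Z] [Module S Z] (f : X →ₗ[S] Y) (g : Y →ₗ[S] Z) (h : Function.Exact f g) :
    ShortComplex (ModuleCat.{0} S) :=
  ShortComplex.mk (X₁ := ModuleCat.of S X) (X₂ := ModuleCat.of S Y) (X₃ := ModuleCat.of S Z)
    (ModuleCat.ofHom f) (ModuleCat.ofHom g) (by ext x; exact h.apply_apply_eq_zero x)

lemma scx_se {X Y Z : Type} [AddCommGroup X] [Module S X] [AddCommGroup Y] [Module S Y]
    [AddCommGroup Z] [Module S Z] (f : X →ₗ[S] Y) (g : Y →ₗ[S] Z) (h : Function.Exact f g)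
    (hf : Function.Injective f) (hg : Function.Surjective g) : (scx f g h).ShortExact :=
  { exact := (ShortComplex.ShortExact.moduleCat_exact_iff_function_exact _).2 h
    mono_f := (ModuleCat.mono_iff_injective _).2 hf
    epi_g := (ModuleCat.epi_iff_surjective _).2 hg }

variable (a : Fil S)

lemma hmap_bij (i : ℕ) {T : ShortComplex (ModuleCat.{0} S)} (hT : T.ShortExact)
    (h1 : ∀ i, Subsingleton (hh a i T.X₁)) : Function.Bijective (hmap a i T.g) := by
  constructor
  · rw [injective_iff_map_eq_zero]
    intro x hx
    obtain ⟨y, rfl⟩ := (h_exact₂ a i hT x).1 hx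
    rw [@Subsingleton.elim _ (h1 i) y 0, map_zero]
  · intro x
    exact (h_exact₃ a i hT x).1 (@Subsingleton.elim _ (h1 (i+1)) _ _)

lemma hmap_bij' (i : ℕ) {X Y Z : Type} [AddCommGroup X] [Module S X] [AddCommGroup Y] [Module S Y]
    [AddCommGroup Z] [Module S Z] (f : X →ₗ[S] Y) (g : Y →ₗ[S] Z) (h : Function.Exact f g)
    (hf : Function.Injective f) (hg : Function.Surjective g)
    (h1 : ∀ i, Subsingleton (hh a i (ModuleCat.of S X))) :
    Function.Bijective (hmap a i (ModuleCat.ofHom g)) := by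
  have hT := scx_se f g h hf hg
  have := hmap_bij a i hT h1
  dsimp only [scx] at this
  exact this

lemma hdel_inj (i : ℕ) {T : ShortComplex (ModuleCat.{0} S)} (hT : T.ShortExact)
    (h1 : Subsingleton (hh a i T.X₂)) : Function.Injective (hdel a i hT) := by
  rw [injective_iff_map_eq_zero]
  intro x hx
  obtain ⟨y, rfl⟩ := (h_exact₃ a i hT x).1 hx
  rw [Subsingleton.elim y 0, map_zero]

/-- dimension shift -/
lemma hdel_bij (i : ℕ) {T : ShortComplex (ModuleCat.{0} S)} (hT : T.ShortExact)
    (h1 : Subsingleton (hh a i T.X₂)) (h2 : Subsingleton (hh a (i+1) T.X₂)) :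
    Function.Bijective (hdel a i hT) :=
  ⟨hdel_inj a i hT h1, fun x => (h_exact₁ a i hT x).1 (@Subsingleton.elim _ h2 _ _)⟩
end hseq

section ab
open CategoryTheory
variable {S : Type} [CommRing S] {ys : List S} (hS : HR ys)
variable {X F N : Type} [AddCommGroup X] [Module S X] [AddCommGroup F] [Module S F]
  [AddCommGroup N] [Module S N] (α : X →ₗ[S] F) (β : F →ₗ[S] N) (hex : Function.Exact α β)
  (hβ : Function.Surjective β)
  (ht : ∀ t, α t = 0 → ∃ s ∈ Ideal.span {x | x ∈ ys}, t = s • t)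
  (hF : ∀ i < ys.length, Subsingleton (hh (aF ys) i (ModuleCat.of S F)))

include hS in
lemma free_hF (p : ℕ) (e : F ≃ₗ[S] (Fin p → S)) :
    ∀ i < ys.length, Subsingleton (hh (aF ys) i (ModuleCat.of S F)) := by
  intro i hi
  have hex : Function.Exact (0 : PUnit.{1} →ₗ[S] F) e.toLinearMap := by
    intro x
    change e x = 0 ↔ x ∈ Set.range (fun _ : PUnit.{1} => (0 : F))
    rw [LinearEquiv.map_eq_zero_iff, Set.range_const, Set.mem_singleton_iff]
  have := (hmap_bij (aF ys) i (scx_se (0 : PUnit.{1} →ₗ[S] F) e.toLinearMap hex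
    (fun _ _ _ => rfl) e.surjective) (fun i => h_tor hS _ (fun m => ⟨0, zero_mem _, rfl⟩) i)).1
  have h0 := h_free hS p i hi
  exact @Function.Injective.subsingleton _ _ _ this h0

include hS ht in
lemma pi_bij (i : ℕ) : Function.Bijective (hmap (aF ys) i (ModuleCat.ofHom α.rangeRestrict)) := by
  have hex : Function.Exact (LinearMap.ker α).subtype α.rangeRestrict := by
    intro x; simp [Subtype.ext_iff]
  have hz : ∀ i, Subsingleton (hh (aF ys) i (ModuleCat.of S (LinearMap.ker α))) := by
    refine h_tor hS (ModuleCat.of S (LinearMap.ker α)) ?_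
    intro m
    obtain ⟨s, hs, h⟩ := ht m.1 m.2
    exact ⟨s, hs, Subtype.ext h⟩
  exact hmap_bij' (aF ys) i _ _ hex (Submodule.injective_subtype _) α.surjective_rangeRestrict hz

include hex in
lemma ex_range : Function.Exact (LinearMap.range α).subtype β := by
  intro x
  rw [hex x]
  simp

include hS ht hF hex hβ in
lemma shiftA (i : ℕ) (hi : i + 1 < ys.length) :
    Nonempty (hh (aF ys) i (ModuleCat.of S N) ≃ₗ[S] hh (aF ys) (i+1) (ModuleCat.of S X)) := by
  have h1 := hdel_bij (aF ys) i (scx_se _ β (ex_range α β hex) (Submodule.injective_subtype _) hβ)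
    (hF i (by omega)) (hF (i+1) hi)
  have h2 := pi_bij hS α ht (i+1)
  exact ⟨(LinearEquiv.ofBijective _ h1).trans (LinearEquiv.ofBijective _ h2).symm⟩

lemma hmap_comp (i : ℕ) {X Y Z : ModuleCat.{0} S} (a : Fil S) (f : X ⟶ Y) (g : Y ⟶ Z) (x) :
    hmap a i (f ≫ g) x = hmap a i g (hmap a i f x) := by
  induction x using Module.DirectLimit.induction_on with
  | _ k x =>
    simp only [hmap, Module.DirectLimit.map_apply_of]
    congr 1
    refine Eq.trans ?_ (CategoryTheory.Abelian.Ext.comp_assoc_of_third_deg_zero x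
      (CategoryTheory.Abelian.Ext.mk₀ f) (CategoryTheory.Abelian.Ext.mk₀ g) (add_zero i)).symm
    rw [CategoryTheory.Abelian.Ext.mk₀_comp_mk₀]
    rfl

include hS ht hF hex hβ in
lemma shiftB (i : ℕ) (hi : i + 1 = ys.length) :
    Nonempty (hh (aF ys) i (ModuleCat.of S N) ≃ₗ[S]
      LinearMap.ker (hmap (aF ys) (i+1) (ModuleCat.ofHom α))) := by
  have hT := (scx_se _ β (ex_range α β hex) (Submodule.injective_subtype _) hβ)
  have h1 := hdel_inj (aF ys) i hT (hF i (by omega))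
  have h2 := h_exact₁ (aF ys) i hT
  have h3 := pi_bij hS α ht (i+1)
  let E := LinearEquiv.ofBijective _ h3
  have hc : ∀ x, hmap (aF ys) (i+1) (ModuleCat.ofHom α) x =
      hmap (aF ys) (i+1) (scx _ β (ex_range α β hex)).f (E x) := fun x =>
    hmap_comp _ _ (ModuleCat.ofHom α.rangeRestrict) (ModuleCat.ofHom (LinearMap.range α).subtype) x
  let δ := hdel (aF ys) i hT
  let f : hh (aF ys) i (ModuleCat.of S N) →ₗ[S]
      LinearMap.ker (hmap (aF ys) (i+1) (ModuleCat.ofHom α)) :=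
    (E.symm.toLinearMap.comp δ).codRestrict _ (fun x => by
      rw [LinearMap.mem_ker, hc]
      change hmap (aF ys) (i+1) _ (E (E.symm (δ x))) = 0
      rw [LinearEquiv.apply_symm_apply]
      exact h2.apply_apply_eq_zero x)
  refine ⟨LinearEquiv.ofBijective f ⟨fun x y h => ?_, fun y => ?_⟩⟩
  · exact h1 (E.symm.injective (congrArg Subtype.val h))
  · have hy := y.2
    rw [LinearMap.mem_ker, hc] at hy
    obtain ⟨x, hx⟩ := (h2 _).1 hy
    refine ⟨x, Subtype.ext ?_⟩
    change E.symm (δ x) = y.1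
    rw [LinearEquiv.symm_apply_eq]
    exact hx
end ab
end LCB
end PartP7b

section PartP7c
open scoped TensorProduct
namespace LCB
set_option maxHeartbeats 1000000

section gen
variable {S : Type} [CommRing S]

lemma ker_congr {V W V' W' : Type} [AddCommGroup V] [Module S V] [AddCommGroup W] [Module S W]
    [AddCommGroup V'] [Module S V'] [AddCommGroup W'] [Module S W'] (f : V →ₗ[S] W) (f' : V' →ₗ[S] W')
    (e : V ≃ₗ[S] V') (e' : W ≃ₗ[S] W') (h : ∀ v, f' (e v) = e' (f v)) :
    Nonempty (LinearMap.ker f ≃ₗ[S] LinearMap.ker f') := by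
  refine ⟨e.ofSubmodules _ _ ?_⟩
  ext y
  simp only [Submodule.mem_map, LinearMap.mem_ker]
  constructor
  · rintro ⟨x, hx, rfl⟩
    have := h x
    rw [hx, map_zero] at this
    exact this
  · intro hy
    refine ⟨e.symm y, ?_, e.apply_symm_apply y⟩
    apply e'.injective
    rw [← h, e.apply_symm_apply, hy, map_zero]

lemma ker_of_exact {P V W : Type} [AddCommGroup V] [Module S V] [AddCommGroup W] [Module S W]
    [AddCommGroup P] [Module S P] (f : P →ₗ[S] V) (g : V →ₗ[S] W) (hf : Function.Injective f)
    (h : Function.Exact f g) : Nonempty (P ≃ₗ[S] LinearMap.ker g) := by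
  refine ⟨(LinearEquiv.ofInjective f hf).trans (LinearEquiv.ofEq _ _ ?_)⟩
  rw [LinearMap.exact_iff.1 h]
end gen

section kerB
open CategoryTheory
variable {R S : Type} [CommRing R] [CommRing S] [Algebra R S]
variable {xs : List R} {D : Type} [AddCommGroup D] [Module R D] {u : ℕ → D} (hD : DSys xs D u)
  (hS : HR (xsS S xs))
  {X F : Type} [AddCommGroup X] [Module S X] [AddCommGroup F] [Module S F]
  [Module R X] [IsScalarTower R S X] [Module R F] [IsScalarTower R S F] (α : X →ₗ[S] F)

include hD hS in
lemma kerB : Nonempty (LinearMap.ker (hmap (aF (xsS S xs)) (xsS S xs).length (ModuleCat.ofHom α)) ≃ₗ[S]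
    LinearMap.ker (TensorProduct.AlgebraTensorModule.rTensor R D α)) := by
  obtain ⟨Ψ, hΨ⟩ := exists_hb hD hS (ModuleCat.of S X)
  obtain ⟨Φ, hΦ⟩ := exists_hb hD hS (ModuleCat.of S F)
  obtain ⟨e⟩ := ker_congr (TensorProduct.AlgebraTensorModule.rTensor R D α)
    (hmap (aF (xsS S xs)) (xsS S xs).length (ModuleCat.ofHom α)) Ψ Φ (fun v => by
      obtain ⟨k, m, rfl⟩ := tmul_rep (N := X) hD v
      rw [hΨ]
      refine (cc_nat hS (ModuleCat.ofHom α) k m).trans ?_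
      exact (hΦ k (α m)).symm)
  exact ⟨e.symm⟩
end kerB

section BC
open CategoryTheory
variable {R : Type} (S : Type) [CommRing R] [CommRing S] [Algebra R S] (xs : List R)

/-- base change statement -/
def BC (M : Type) [AddCommGroup M] [Module R M] (i : ℕ) : Prop :=
  Nonempty (S ⊗[R] hh (aF (xsS R xs)) i (ModuleCat.of R M) ≃ₗ[S]
    hh (aF (xsS S xs)) i (ModuleCat.of S (S ⊗[R] M)))

variable {S xs} (hR : HR (xsS R xs)) (hS : HR (xsS S xs))
  {D : Type} [AddCommGroup D] [Module R D] {u : ℕ → D} (hD : DSys xs D u)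
  (M : Type) [AddCommGroup M] [Module R M]

include hR hS in
lemma BC_gt (i : ℕ) (hi : xs.length < i) : BC S xs M i := by
  have h1 : Subsingleton (hh (aF (xsS R xs)) i (ModuleCat.of R M)) := h_top hR _ i (by simpa [xsS] using hi)
  have h2 : Subsingleton (hh (aF (xsS S xs)) i (ModuleCat.of S (S ⊗[R] M))) :=
    h_top hS _ i (by simpa [xsS] using hi)
  have h3 : Subsingleton (S ⊗[R] hh (aF (xsS R xs)) i (ModuleCat.of R M)) :=
    ⟨fun x y => by
      have hz : ∀ z : S ⊗[R] hh (aF (xsS R xs)) i (ModuleCat.of R M), z = 0 := fun z => by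
        induction z using TensorProduct.induction_on with
        | zero => rfl
        | add a b ha hb => rw [ha, hb, add_zero]
        | tmul s m => rw [Subsingleton.elim m 0, TensorProduct.tmul_zero]
      rw [hz x, hz y]⟩
  exact ⟨0⟩

include hR hS hD in
lemma BC_top : BC S xs M xs.length := by
  obtain ⟨Ψ, -⟩ := exists_hb hD hR (ModuleCat.of R M)
  obtain ⟨Φ, -⟩ := exists_hb hD hS (ModuleCat.of S (S ⊗[R] M))
  have l1 : (xsS R xs).length = xs.length := List.length_map _
  have l2 : (xsS S xs).length = xs.length := List.length_map _
  rw [l1] at Ψ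
  rw [l2] at Φ
  let E : (S ⊗[R] M) ⊗[R] D ≃ₗ[S] S ⊗[R] (M ⊗[R] D) := TensorProduct.AlgebraTensorModule.assoc R R S S M D
  exact ⟨(Ψ.symm.baseChange R S _ _).trans (E.symm.trans Φ)⟩

variable {M} {X F : Type} [AddCommGroup X] [Module R X] [AddCommGroup F] [Module R F]
  {p : ℕ} (e : F ≃ₗ[R] (Fin p → R)) (j : X →ₗ[R] F) (q : F →ₗ[R] M) (hj : Function.Injective j)
  (hq : Function.Surjective q) (hex : Function.Exact j q)
  (ht : ∀ t : S ⊗[R] X, j.baseChange S t = 0 → ∃ s ∈ Ideal.span {x | x ∈ xsS S xs}, t = s • t)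

include hS e in
lemma hF_S : ∀ i < (xsS S xs).length,
    Subsingleton (hh (aF (xsS S xs)) i (ModuleCat.of S (S ⊗[R] F))) :=
  free_hF hS p ((e.baseChange R S _ _).trans (TensorProduct.piScalarRight R S S (Fin p)))

include hex hq in
lemma bc_exact : Function.Exact (j.baseChange S) (q.baseChange S) := lTensor_exact S hex hq

include hq in
lemma bc_surj : Function.Surjective (q.baseChange S) := LinearMap.lTensor_surjective S hq

include hj in
lemma ht_R : ∀ t, j t = 0 → ∃ s ∈ Ideal.span {x | x ∈ xsS R xs}, t = s • t := fun t h =>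
  ⟨0, zero_mem _, by rw [hj (h.trans (map_zero j).symm), smul_zero]⟩

include hR hS e hj hq hex ht in
lemma BC_shift (i : ℕ) (hi : i + 1 < xs.length) (h : BC S xs X (i+1)) : BC S xs M i := by
  have l1 : (xsS R xs).length = xs.length := List.length_map _
  have l2 : (xsS S xs).length = xs.length := List.length_map _
  obtain ⟨E1⟩ := shiftA hR j q hex hq (ht_R j hj) (free_hF hR p e) i (by omega)
  obtain ⟨E2⟩ := shiftA hS (j.baseChange S) (q.baseChange S) (bc_exact j q hq hex) (bc_surj q hq) ht
    (hF_S hS e) i (by omega)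
  obtain ⟨E3⟩ := h
  exact ⟨(E1.baseChange R S _ _).trans (E3.trans E2.symm)⟩

variable (S D) in
/-- associativity -/
noncomputable def asc (X : Type) [AddCommGroup X] [Module R X] :
    (S ⊗[R] X) ⊗[R] D ≃ₗ[S] S ⊗[R] (X ⊗[R] D) :=
  TensorProduct.AlgebraTensorModule.assoc R R S S X D

lemma asc_nat (v : (S ⊗[R] X) ⊗[R] D) : (j.rTensor D).baseChange S (asc S D X v) =
    asc S D F (TensorProduct.AlgebraTensorModule.rTensor R D (j.baseChange S) v) := by
  induction v using TensorProduct.induction_on with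
  | zero => rw [map_zero, map_zero, map_zero, map_zero]
  | add a b ha hb => rw [map_add, map_add, map_add, map_add, ha, hb]
  | tmul z d =>
    induction z using TensorProduct.induction_on with
    | zero => rw [TensorProduct.zero_tmul, map_zero, map_zero, map_zero, map_zero]
    | add a b ha hb => rw [TensorProduct.add_tmul, map_add, map_add, map_add, map_add, ha, hb]
    | tmul s x => rfl

lemma ker_assoc : Nonempty (LinearMap.ker (TensorProduct.AlgebraTensorModule.rTensor R D (j.baseChange S))
    ≃ₗ[S] LinearMap.ker ((j.rTensor D).baseChange S)) :=
  ker_congr (S := S) (V := (S ⊗[R] X) ⊗[R] D) (W := (S ⊗[R] F) ⊗[R] D) (V' := S ⊗[R] (X ⊗[R] D))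
    (W' := S ⊗[R] (F ⊗[R] D)) _ _ (asc S D X) (asc S D F) (asc_nat j)

include hR hS hD e hj hq hex ht in
lemma BC_pen (i : ℕ) (hi : i + 1 = xs.length)
    (h : Nonempty (S ⊗[R] LinearMap.ker (j.rTensor D) ≃ₗ[S] LinearMap.ker ((j.rTensor D).baseChange S))) :
    BC S xs M i := by
  have l1 : i + 1 = (xsS R xs).length := hi.trans (List.length_map _).symm
  have l2 : i + 1 = (xsS S xs).length := hi.trans (List.length_map _).symm
  obtain ⟨E1⟩ := shiftB hR j q hex hq (ht_R j hj) (free_hF hR p e) i l1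
  obtain ⟨E2⟩ := shiftB hS (j.baseChange S) (q.baseChange S) (bc_exact j q hq hex) (bc_surj q hq) ht
    (hF_S hS e) i l2
  obtain ⟨E3⟩ := kerB hD hR j
  obtain ⟨E4⟩ := kerB hD hS (j.baseChange S)
  rw [← l1] at E3
  rw [← l2] at E4
  obtain ⟨E5⟩ := h
  obtain ⟨E6⟩ := ker_congr (TensorProduct.AlgebraTensorModule.rTensor R D j) (j.rTensor D)
    (LinearEquiv.refl R _) (LinearEquiv.refl R _) (fun v => rfl)
  obtain ⟨E7⟩ := ker_assoc (S := S) (D := D) j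
  exact ⟨(((E1.trans E3).trans E6).baseChange R S _ _).trans (E5.trans (E7.symm.trans (E4.symm.trans E2.symm)))⟩
end BC
end LCB
end PartP7c

section PartP7d
open scoped TensorProduct
namespace LCB
set_option maxHeartbeats 1000000

section tr
variable (A : Type) [CommRing A] (R : Type) [CommRing R] [Algebra A R] (L : Type) [CommRing L] [Algebra A L]
  (X : Type) [AddCommGroup X] [Module R X] [Module A X] [IsScalarTower A R X]

/-- transfer -/
noncomputable def trE : (R ⊗[A] L) ⊗[R] X ≃ₗ[R] X ⊗[A] L :=
  (TensorProduct.comm R (R ⊗[A] L) X).trans (TensorProduct.AlgebraTensorModule.cancelBaseChange A R R X L)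

lemma trE_tmul (r : R) (l : L) (x : X) : trE A R L X ((r ⊗ₜ l) ⊗ₜ x) = (r • x) ⊗ₜ l := rfl

variable {A R L X} {Y : Type} [AddCommGroup Y] [Module R Y] [Module A Y] [IsScalarTower A R Y]
  (f : X →ₗ[R] Y)

lemma trE_nat (z : (R ⊗[A] L) ⊗[R] X) : trE A R L Y (f.baseChange (R ⊗[A] L) z) =
    (f.restrictScalars A).rTensor L (trE A R L X z) := by
  induction z using TensorProduct.induction_on with
  | zero => rw [map_zero, map_zero, map_zero, map_zero]
  | add a b ha hb => rw [map_add, map_add, map_add, map_add, ha, hb]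
  | tmul s x =>
    induction s using TensorProduct.induction_on with
    | zero => rw [TensorProduct.zero_tmul, map_zero, map_zero, map_zero, map_zero]
    | add a b ha hb => rw [TensorProduct.add_tmul, map_add, map_add, map_add, map_add, ha, hb]
    | tmul r l =>
      rw [LinearMap.baseChange_tmul, trE_tmul, trE_tmul, LinearMap.rTensor_tmul, ← LinearMap.map_smul]
      rfl

variable [IsDomain A] {g : A}

lemma kerS (hL : IsUnit (algebraMap A L g)) (h1 : LL g (LinearMap.range (f.restrictScalars A)))
    (h2 : LL g (Y ⧸ LinearMap.range (f.restrictScalars A))) :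
    Nonempty ((R ⊗[A] L) ⊗[R] LinearMap.ker f ≃ₗ[R ⊗[A] L] LinearMap.ker (f.baseChange (R ⊗[A] L))) := by
  obtain ⟨i1, e1⟩ := ker_bc (L := L) (f.restrictScalars A) h1 h2 (fun Z _ _ e z hz => by
    have hu : IsUnit (algebraMap A L (g ^ e)) := by rw [map_pow]; exact hL.pow e
    obtain ⟨v, hv⟩ := hu
    have : v • z = 0 := by
      rw [Units.smul_def, hv, algebraMap_smul]; exact hz
    exact (smul_eq_zero_iff_eq v).1 this)
  let ι : LinearMap.ker f →ₗ[A] X := (LinearMap.ker f).subtype.restrictScalars A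
  have i2 : Function.Injective (ι.lTensor L) := i1
  have e2 : Function.Exact (ι.lTensor L) ((f.restrictScalars A).lTensor L) := e1
  have i3 : Function.Injective (ι.rTensor L) := (LinearMap.lTensor_inj_iff_rTensor_inj L ι).1 i2
  have c : ∀ {U V : Type} [AddCommGroup U] [Module A U] [AddCommGroup V] [Module A V] (k : U →ₗ[A] V)
      (z : U ⊗[A] L), k.rTensor L z = TensorProduct.comm A L V (k.lTensor L (TensorProduct.comm A U L z)) := by
    intro U V _ _ _ _ k z
    induction z using TensorProduct.induction_on with
    | zero => rw [map_zero, map_zero, map_zero, map_zero]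
    | add a b ha hb => rw [map_add, map_add, map_add, map_add, ha, hb]
    | tmul x l => rfl
  refine ker_of_exact (S := R ⊗[A] L) ((LinearMap.ker f).subtype.baseChange (R ⊗[A] L)) (f.baseChange (R ⊗[A] L)) ?_ ?_
  · intro z w h
    apply (trE A R L _).injective
    apply i3
    have := congrArg (trE A R L X) h
    rwa [trE_nat, trE_nat] at this
  · intro z
    constructor
    · intro h
      have h' := congrArg (trE A R L Y) h
      rw [trE_nat, map_zero, c, LinearEquiv.map_eq_zero_iff] at h'
      obtain ⟨w, hw⟩ := (e2 _).1 h'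
      refine ⟨(trE A R L _).symm (TensorProduct.comm A L _ w), ?_⟩
      apply (trE A R L X).injective
      rw [trE_nat, LinearEquiv.apply_symm_apply]
      change ι.rTensor L _ = _
      rw [c]
      have : TensorProduct.comm A _ L (TensorProduct.comm A L (LinearMap.ker f) w) = w :=
        (TensorProduct.comm A L (LinearMap.ker f)).symm_apply_apply w
      rw [this, hw]
      exact (TensorProduct.comm A X L).symm_apply_apply _
    · rintro ⟨w, rfl⟩
      induction w using TensorProduct.induction_on with
      | zero => rw [map_zero, map_zero]
      | add a b ha hb => rw [map_add, map_add, ha, hb, add_zero]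
      | tmul s x =>
        rw [LinearMap.baseChange_tmul, LinearMap.baseChange_tmul]
        have : f ((LinearMap.ker f).subtype x) = 0 := x.2
        rw [this, TensorProduct.tmul_zero]

lemma kerS_mu (D : Type) [AddCommGroup D] [Module R D] (hL : IsUnit (algebraMap A L g))
    (h1 : LL g (LinearMap.range (muA A D f))) (h2 : LL g ((Y ⊗[R] D) ⧸ LinearMap.range (muA A D f))) :
    Nonempty ((R ⊗[A] L) ⊗[R] LinearMap.ker (f.rTensor D) ≃ₗ[R ⊗[A] L]
      LinearMap.ker ((f.rTensor D).baseChange (R ⊗[A] L))) :=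
  kerS (f.rTensor D) hL h1 h2

variable [IsNoetherianRing A] [IsNoetherianRing R] (I : Ideal R) {Q : Type} [AddCommGroup Q] [Module R Q]
  [Module A Q] [IsScalarTower A R Q]

lemma torS (hL : IsUnit (algebraMap A L g)) [Module.Finite R Y] (hf : Function.Injective f)
    (q : Y →ₗ[R] Q) (hq : Function.Surjective q) (hex : Function.Exact f q) (hQ : Good I g Q)
    (t : (R ⊗[A] L) ⊗[R] X) (h : f.baseChange (R ⊗[A] L) t = 0) :
    ∃ s ∈ Ideal.map (algebraMap R (R ⊗[A] L)) I, t = s • t := by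
  obtain ⟨a, r, hr, har⟩ := tor_class I f hf q hq hex hQ (trE A R L X t) (by
    rw [← trE_nat, h, map_zero])
  have h1 : algebraMap A R (g ^ a) • t = r • t := by
    apply (trE A R L X).injective
    rw [LinearEquiv.map_smul, LinearEquiv.map_smul, algebraMap_smul]
    exact har
  have hu : IsUnit (algebraMap R (R ⊗[A] L) (algebraMap A R (g ^ a))) := by
    rw [← IsScalarTower.algebraMap_apply, map_pow]
    have := (hL.map (Algebra.TensorProduct.includeRight : L →ₐ[A] R ⊗[A] L)).pow a
    rwa [AlgHom.commutes] at this
  obtain ⟨v, hv⟩ := hu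
  rw [← algebraMap_smul (R ⊗[A] L) (algebraMap A R (g ^ a)), ← hv, ← algebraMap_smul (R ⊗[A] L) r] at h1
  refine ⟨(v⁻¹ : (R ⊗[A] L)ˣ) * algebraMap R (R ⊗[A] L) r, Ideal.mul_mem_left _ _ (Ideal.mem_map_of_mem _ hr), ?_⟩
  rw [mul_smul, ← h1, ← mul_smul, Units.inv_mul, one_smul]
end tr

section main
variable (n : ℕ) (A : Type) [CommRing A] [IsDomain A] [IsNoetherianRing A]

lemma span_xsS (R S : Type) [CommRing R] [CommRing S] [Algebra R S] (xs : List R) :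
    Ideal.span {x | x ∈ xsS S xs} = Ideal.map (algebraMap R S) (Ideal.span {x | x ∈ xs}) := by
  rw [Ideal.map_span]
  congr 1
  ext y
  simp [xsS]

lemma len_xl : (xl n A).length = n := by simp [xl]

theorem main_ind (d : ℕ) : ∀ (M : Type) [AddCommGroup M] [Module (PS n A) M] [Module A M]
    [IsScalarTower A (PS n A) M] [Module.Finite (PS n A) M],
    ∃ g : A, g ≠ 0 ∧ ∀ (L : Type) [CommRing L] [Algebra A L], IsUnit (algebraMap A L g) →
      ∀ i, n ≤ i + d → BC (PS n A ⊗[A] L) (xl n A) M i := by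
  have htop : ∀ (M : Type) [AddCommGroup M] [Module (PS n A) M] (L : Type) [CommRing L] [Algebra A L]
      (i : ℕ), n ≤ i → BC (PS n A ⊗[A] L) (xl n A) M i := by
    intro M _ _ L _ _ i hi
    rcases hi.eq_or_lt with rfl | h
    · have := BC_top (HR_R n A) (HR_S n A L) (dsys n A) M
      rwa [len_xl] at this
    · exact BC_gt (HR_R n A) (HR_S n A L) M i (by rwa [len_xl])
  induction d with
  | zero => intro M _ _ _ _ _; exact ⟨1, one_ne_zero, fun L _ _ _ i hi => htop M L i hi⟩
  | succ d ih =>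
    intro M _ _ _ _ _
    obtain ⟨p, q, hq⟩ := Module.Finite.exists_fin' (PS n A) M
    obtain ⟨g1, hg1, H1⟩ := ih (LinearMap.ker q)
    obtain ⟨m, s, hs⟩ := Module.Finite.exists_fin' (PS n A) (LinearMap.ker q)
    obtain ⟨g2, hg2, H2⟩ := good_exists (A := A) (MvPowerSeries.X : Fin n → PS n A) M (IX n A) rfl IX_res
    obtain ⟨g3, hg3, H3, H4⟩ := exists_LL A (IX n A) (MvPowerSeries.X : Fin n → PS n A) rfl IX_res s hs
      (LinearMap.ker q).subtype
    refine ⟨g1 * g2 * g3, mul_ne_zero (mul_ne_zero hg1 hg2) hg3, ?_⟩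
    intro L _ _ hL i hi
    rw [map_mul, map_mul, IsUnit.mul_iff, IsUnit.mul_iff] at hL
    have hj := Submodule.injective_subtype (LinearMap.ker q)
    have hex : Function.Exact (LinearMap.ker q).subtype q := by intro x; simp
    have ht : ∀ t : (PS n A ⊗[A] L) ⊗[PS n A] (LinearMap.ker q),
        (LinearMap.ker q).subtype.baseChange (PS n A ⊗[A] L) t = 0 →
        ∃ s ∈ Ideal.span {x | x ∈ xsS (PS n A ⊗[A] L) (xl n A)}, t = s • t := by
      intro t h
      rw [span_xsS, IX_eq]
      exact torS _ (IX n A) hL.1.2 hj q hq hex H2 t h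
    by_cases h1 : n ≤ i
    · exact htop M L i h1
    by_cases h2 : i + 1 = n
    · have hk : Nonempty ((PS n A ⊗[A] L) ⊗[PS n A] LinearMap.ker
          ((LinearMap.ker q).subtype.rTensor (CHM A (IX n A) (PS n A))) ≃ₗ[PS n A ⊗[A] L]
          LinearMap.ker (((LinearMap.ker q).subtype.rTensor (CHM A (IX n A) (PS n A))).baseChange (PS n A ⊗[A] L))) :=
        kerS_mu (LinearMap.ker q).subtype (CHM A (IX n A) (PS n A)) hL.2 H3 H4
      have hl : i + 1 = (xl n A).length := by rw [len_xl]; exact h2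
      exact BC_pen (F := Fin p → PS n A) (X := LinearMap.ker q) (D := CHM A (IX n A) (PS n A))
        (HR_R n A) (HR_S n A L) (dsys n A) (LinearEquiv.refl _ (Fin p → PS n A))
        (LinearMap.ker q).subtype q hj hq hex ht i hl hk
    · exact BC_shift (HR_R n A) (HR_S n A L) (LinearEquiv.refl _ _) (LinearMap.ker q).subtype q hj hq hex ht i
        (by rw [len_xl]; omega) (H1 L hL.1.1 (i+1) (by omega))
end main
end LCB
end PartP7d

namespace LCB
section fin
variable (A : Type) [CommRing A] (R : Type) [CommRing R] [Algebra A R] (L : Type) [CommRing L] [Algebra A L]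

lemma trE_l (X : Type) [AddCommGroup X] [Module R X] [Module A X] [IsScalarTower A R X]
    (l : L) (w : (R ⊗[A] L) ⊗[R] X) :
    TensorProduct.comm A X L (trE A R L X (((1 : R) ⊗ₜ[A] l) • w)) =
      l • TensorProduct.comm A X L (trE A R L X w) := by
  induction w using TensorProduct.induction_on with
  | zero => rw [smul_zero, map_zero, map_zero, smul_zero]
  | add a b ha hb => rw [smul_add, map_add, map_add, map_add, map_add, ha, hb, smul_add]
  | tmul s x =>
    induction s using TensorProduct.induction_on with
    | zero => rw [TensorProduct.zero_tmul, smul_zero, map_zero, map_zero, smul_zero]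
    | add a b ha hb =>
      rw [TensorProduct.add_tmul, smul_add, map_add, map_add, map_add, map_add, ha, hb, smul_add]
    | tmul r l' =>
      rw [TensorProduct.smul_tmul', smul_eq_mul, Algebra.TensorProduct.tmul_mul_tmul, one_mul, trE_tmul,
        trE_tmul, TensorProduct.comm_tmul, TensorProduct.comm_tmul, TensorProduct.smul_tmul', smul_eq_mul]

lemma fin_conv0 (X : Type) [AddCommGroup X] [Module R X] [Module A X] [IsScalarTower A R X]
    (H' : Type) [AddCommGroup H']
    [Module (R ⊗[A] L) H'] (e' : (R ⊗[A] L) ⊗[R] X ≃ₗ[R ⊗[A] L] H') :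
    Nonempty ((L ⊗[A] X) ≃ₗ[L] RestrictScalars L (R ⊗[A] L) H') := by
  let E : (R ⊗[A] L) ⊗[R] X ≃+ L ⊗[A] X :=
    (trE A R L X).toAddEquiv.trans (TensorProduct.comm A X L).toAddEquiv
  have hE : ∀ (l : L) w, E (((1 : R) ⊗ₜ[A] l) • w) = l • E w := trE_l A R L X
  let f : L ⊗[A] X ≃+ RestrictScalars L (R ⊗[A] L) H' :=
    (E.symm.trans e'.toAddEquiv).trans (RestrictScalars.addEquiv L (R ⊗[A] L) H').symm
  have hf : ∀ (l : L) z, f (l • z) = l • f z := by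
    intro l z
    obtain ⟨w, rfl⟩ := E.surjective z
    rw [← hE]
    change (RestrictScalars.addEquiv L (R ⊗[A] L) H').symm (e' (E.symm (E _))) =
      l • (RestrictScalars.addEquiv L (R ⊗[A] L) H').symm (e' (E.symm (E w)))
    rw [AddEquiv.symm_apply_apply, AddEquiv.symm_apply_apply, e'.map_smul]
    rfl
  exact ⟨f.toLinearEquiv hf⟩

lemma fin_conv (H : Type) [AddCommGroup H] [Module R H] (H' : Type) [AddCommGroup H']
    [Module (R ⊗[A] L) H'] (e : (R ⊗[A] L) ⊗[R] H ≃ₗ[R ⊗[A] L] H') :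
    Nonempty ((L ⊗[A] RestrictScalars A R H) ≃ₗ[L] RestrictScalars L (R ⊗[A] L) H') := by
  exact @fin_conv0 A _ R _ _ L _ _ (RestrictScalars A R H) _ (RestrictScalars.moduleOrig A R H)
    (RestrictScalars.module A R H) (RestrictScalars.isScalarTower A R H) H' _ _ e

lemma H_conv (R S : Type) [CommRing R] [CommRing S] [Algebra R S] (xs : List R) (I : Ideal R)
    (hI : I = Ideal.span {x | x ∈ xs}) (i : ℕ) (N : ModuleCat.{0} S) :
    Nonempty ((localCohomology (Ideal.map (algebraMap R S) I) i).obj N ≃ₗ[S] hh (aF (xsS S xs)) i N) := by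
  apply H_iso_h
  · intro k
    obtain ⟨l, hl⟩ := le_aI (xsS S xs) k
    refine ⟨l, ?_⟩
    rw [hI, ← span_xsS]
    exact hl
  · intro k
    refine ⟨k, ?_⟩
    rw [hI, ← span_xsS]
    exact aI_le _ k
end fin
end LCB

/-- **Base change of local cohomology over a power series ring.**  Let `A` be a Noetherian
domain, `R = A[[x₁,…,xₙ]]`, `I = (x₁,…,xₙ)` and `M` a finitely generated `R`-module.  There is a
nonzero `g ∈ A` such that for every commutative `A`-algebra `L` whose structure map factors
through `A_g` (equivalently, in which `g` becomes a unit) and every `i ≥ 0`, the base-change map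
is an isomorphism `Hⁱ_I(M) ⊗[A] L ≅ Hⁱ_{I·(R ⊗[A] L)}(M ⊗[A] L)` of `L`-modules. -/
theorem stmt1 (A : Type) [CommRing A] [IsDomain A] [IsNoetherianRing A] (n : ℕ)
    (M : Type) [AddCommGroup M] [Module (MvPowerSeries (Fin n) A) M]
    [Module.Finite (MvPowerSeries (Fin n) A) M]
    (I : Ideal (MvPowerSeries (Fin n) A))
    (hI : I = Ideal.span (Set.range (MvPowerSeries.X : Fin n → MvPowerSeries (Fin n) A))) :
    ∃ g : A, g ≠ 0 ∧
      ∀ (L : Type) [CommRing L] [Algebra A L], IsUnit (algebraMap A L g) →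
        ∀ i : ℕ,
          Nonempty
            ((TensorProduct A L
                (RestrictScalars A (MvPowerSeries (Fin n) A)
                  ((localCohomology I i).obj (ModuleCat.of (MvPowerSeries (Fin n) A) M)))) ≃ₗ[L]
              RestrictScalars L (MvPowerSeries (Fin n) A ⊗[A] L)
                ((localCohomology
                    (Ideal.map
                      (algebraMap (MvPowerSeries (Fin n) A) (MvPowerSeries (Fin n) A ⊗[A] L)) I)
                    i).obj
                  (ModuleCat.of (MvPowerSeries (Fin n) A ⊗[A] L)
                    ((MvPowerSeries (Fin n) A ⊗[A] L) ⊗[MvPowerSeries (Fin n) A] M)))) := by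
  let _ : Module A M := Module.compHom M (algebraMap A (MvPowerSeries (Fin n) A))
  have _ : IsScalarTower A (MvPowerSeries (Fin n) A) M := IsScalarTower.of_algebraMap_smul (fun _ _ => rfl)
  obtain ⟨g, hg, H⟩ := LCB.main_ind n A n M
  refine ⟨g, hg, fun L _ _ hL i => ?_⟩
  obtain ⟨E⟩ := H L hL i (by omega)
  have hI' : I = Ideal.span {x | x ∈ LCB.xl n A} := by rw [LCB.IX_eq]; exact hI
  obtain ⟨E1⟩ := LCB.H_conv (MvPowerSeries (Fin n) A) (MvPowerSeries (Fin n) A) (LCB.xl n A) I hI' i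
    (ModuleCat.of (MvPowerSeries (Fin n) A) M)
  obtain ⟨E2⟩ := LCB.H_conv (MvPowerSeries (Fin n) A) (MvPowerSeries (Fin n) A ⊗[A] L) (LCB.xl n A) I hI' i
    (ModuleCat.of (MvPowerSeries (Fin n) A ⊗[A] L)
                    ((MvPowerSeries (Fin n) A ⊗[A] L) ⊗[MvPowerSeries (Fin n) A] M))
  have hid : Ideal.map (algebraMap (MvPowerSeries (Fin n) A) (MvPowerSeries (Fin n) A)) I = I := Ideal.map_id I
  rw [hid] at E1
  exact LCB.fin_conv A (MvPowerSeries (Fin n) A) L _ _ ((E1.baseChange _ _ _ _).trans (E.trans E2.symm))
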